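/- arXiv:2211.09341 — 2 statements merged into one kernel-verified Lean document; each statement's English description precedes it below -/
import Mathlib

section
/- If (x, σ) is an excellent pair, then there exists an n-variate polynomial g over F_q of total degree at most d such that T(C) = g|_C for at least a (1 − 2√γ) fraction of the cubes C ∈ 𝒞_{x,σ}. -/
/-!
Write `S = 𝒞_{x,σ}`, and let `N = q ^ n` be the number of points.

*A single function.* By condition (ii) one can choose on each line through `x` the restriction of
one of the `T C` in such a way that the resulting function `f` satisfies `T C (x + u) = f (x + u)`
for all but a `γ` fraction of the pairs of `C ∈ S` and `u ≠ 0` in the direction of `C`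
(`exists_plurality`).

*From cubes to the whole space.* A cube through `x` is replaced by the triples `(u, v, w)` of
vectors that span its direction, each cube being counted the same number of times. The indicator
of the triples spanning a member of `S` is invariant under column operations. A second-moment
argument, which uses this invariance only, shows that the number of ways to extend a pair `(u, v)`
to such a triple has small variance (`SpanInvariant.sum_plane_sq_le`). As `S` is not too sparse, by
condition (i) and the lower bound on `ε`, a rare event for random pairs `(u, v)` is a rare event for
random pairs inside a random cube of `S`, and conversely (`mixing`).

*Low-degree testing.* Within a cube `C ∈ S`, `T C` has degree at most `d` on every line, so `f` is
rarely different from the value interpolated from `d + 1` other points of a random line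
(`sum_fail_le`); by mixing this holds for random lines of the whole space. Self-correction
(`exists_selfCorrection`) yields a function `G` near `f` that is interpolated exactly along every
line. It is therefore of degree at most `d` on every line, and hence a polynomial `g` of total
degree at most `d` (`exists_mvPoly_of_lines`, which needs `2 * d < q`).

*Conclusion.* By mixing once more, `g` agrees with `T C` at most points of most cubes of `S`. If
`T C ≠ g` on a cube, then the two differ at more than half of its points (`cnt_zero_le`), so that
the fraction of such cubes is `O(1 / d ^ 2)` with a small constant, which is below
`2 * √γ` because `γ = 1 / (1000 * d ^ 3)` (`exists_global`).
-/

open MvPolynomial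

/-- A cube: a 3-dimensional affine subspace of `F^n`. -/
def IsCube (F : Type) [Field F] [Fintype F] (n : ℕ) (C : AffineSubspace F (Fin n → F)) : Prop :=
  (C : Set (Fin n → F)).Nonempty ∧ Module.finrank F C.direction = 3

/-- A line: a 1-dimensional affine subspace of `F^n`. -/
def IsLine (F : Type) [Field F] [Fintype F] (n : ℕ) (ℓ : AffineSubspace F (Fin n → F)) : Prop :=
  (ℓ : Set (Fin n → F)).Nonempty ∧ Module.finrank F ℓ.direction = 1

/-- `𝒞_x`: cubes containing the point `x`. -/
def cubesOn (F : Type) [Field F] [Fintype F] (n : ℕ) (x : Fin n → F) :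
    Set (AffineSubspace F (Fin n → F)) :=
  {C | IsCube F n C ∧ x ∈ C}

/-- `𝒞_{x,y}`: cubes containing the points `x` and `y`. -/
def cubesOn2 (F : Type) [Field F] [Fintype F] (n : ℕ) (x y : Fin n → F) :
    Set (AffineSubspace F (Fin n → F)) :=
  {C | IsCube F n C ∧ x ∈ C ∧ y ∈ C}

/-- `𝒞_{x,σ}`: cubes containing `x` on which the table `T` gives `x` the value `σ`. -/
def cubesVal (F : Type) [Field F] [Fintype F] (n : ℕ)
    (T : AffineSubspace F (Fin n → F) → (Fin n → F) → F) (x : Fin n → F) (σ : F) :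
    Set (AffineSubspace F (Fin n → F)) :=
  {C | IsCube F n C ∧ x ∈ C ∧ T C x = σ}

/-- `μ_x(A)`: measure of `A` relative to all cubes containing `x`. -/
noncomputable def muX (F : Type) [Field F] [Fintype F] (n : ℕ) (x : Fin n → F)
    (A : Set (AffineSubspace F (Fin n → F))) : ℝ :=
  (A.ncard : ℝ) / ((cubesOn F n x).ncard : ℝ)

/-- `μ_{x,y}(A)`: measure of `A` relative to all cubes containing `x` and `y`. -/
noncomputable def muXY (F : Type) [Field F] [Fintype F] (n : ℕ) (x y : Fin n → F)
    (A : Set (AffineSubspace F (Fin n → F))) : ℝ :=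
  (A.ncard : ℝ) / ((cubesOn2 F n x y).ncard : ℝ)

/-- Two cubes intersecting in a plane (a 2-dimensional affine subspace). -/
def PlanePair (F : Type) [Field F] [Fintype F] (n : ℕ)
    (C₁ C₂ : AffineSubspace F (Fin n → F)) : Prop :=
  IsCube F n C₁ ∧ IsCube F n C₂ ∧
    ((C₁ ⊓ C₂ : AffineSubspace F (Fin n → F)) : Set (Fin n → F)).Nonempty ∧
    Module.finrank F (C₁ ⊓ C₂ : AffineSubspace F (Fin n → F)).direction = 2

/-- `T(C₁)` and `T(C₂)` agree on `C₁ ∩ C₂`. -/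
def Agrees (F : Type) [Field F] [Fintype F] (n : ℕ)
    (T : AffineSubspace F (Fin n → F) → (Fin n → F) → F)
    (C₁ C₂ : AffineSubspace F (Fin n → F)) : Prop :=
  ∀ z : Fin n → F, z ∈ C₁ → z ∈ C₂ → T C₁ z = T C₂ z

/-- `ε(T)`: the acceptance probability of the cube versus cube test. -/
noncomputable def epsT (F : Type) [Field F] [Fintype F] (n : ℕ)
    (T : AffineSubspace F (Fin n → F) → (Fin n → F) → F) : ℝ :=
  (({p : AffineSubspace F (Fin n → F) × AffineSubspace F (Fin n → F) |
      PlanePair F n p.1 p.2 ∧ Agrees F n T p.1 p.2}).ncard : ℝ) /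
  (({p : AffineSubspace F (Fin n → F) × AffineSubspace F (Fin n → F) |
      PlanePair F n p.1 p.2}).ncard : ℝ)

/-- A degree-`d` cubes table: each entry is the restriction to `C` of a polynomial of total
degree at most `d`. -/
def DegTable (F : Type) [Field F] [Fintype F] (n d : ℕ)
    (T : AffineSubspace F (Fin n → F) → (Fin n → F) → F) : Prop :=
  ∀ C : AffineSubspace F (Fin n → F), IsCube F n C →
    ∃ p : MvPolynomial (Fin n) F, p.totalDegree ≤ d ∧ ∀ z ∈ C, T C z = eval z p

/-- `γ = 1/(1000 d³)`. -/
noncomputable def gam (d : ℕ) : ℝ := 1 / (1000 * (d : ℝ) ^ 3)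

/-- `T(C₁)` and `T(C₂)` agree on the line `ℓ`. -/
def LineAgree (F : Type) [Field F] [Fintype F] (n : ℕ)
    (T : AffineSubspace F (Fin n → F) → (Fin n → F) → F)
    (C₁ C₂ ℓ : AffineSubspace F (Fin n → F)) : Prop :=
  ∀ z : Fin n → F, z ∈ ℓ → T C₁ z = T C₂ z

/-- An excellent pair `(x, σ)`: (i) `μ_x(𝒞_{x,σ}) ≥ ε/5`, and (ii) picking `C₁` uniform in
`𝒞_{x,σ}`, a uniform line `ℓ` with `x ∈ ℓ ⊆ C₁`, and `C₂` uniform in `{C ∈ 𝒞_{x,σ} : ℓ ⊆ C}`,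
the probability that `T(C₁)|_ℓ ≠ T(C₂)|_ℓ` is at most `γ`.  (The probability is written as the
sum over the uniformly weighted pairs `(C₁, ℓ)` of the conditional probability over `C₂`,
compared against `γ` times the number of pairs `(C₁, ℓ)`.) -/
def Excellent (F : Type) [Field F] [Fintype F] (n : ℕ)
    (T : AffineSubspace F (Fin n → F) → (Fin n → F) → F)
    (d : ℕ) (ε : ℝ) (x : Fin n → F) (σ : F) : Prop :=
  ε / 5 ≤ muX F n x (cubesVal F n T x σ) ∧
  (∑ᶠ C₁ ∈ cubesVal F n T x σ,
      ∑ᶠ ℓ ∈ {ℓ : AffineSubspace F (Fin n → F) | IsLine F n ℓ ∧ x ∈ ℓ ∧ ℓ ≤ C₁},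
        (({C₂ ∈ cubesVal F n T x σ | ℓ ≤ C₂ ∧ ¬ LineAgree F n T C₁ C₂ ℓ}.ncard : ℝ) /
          ({C₂ ∈ cubesVal F n T x σ | ℓ ≤ C₂}.ncard : ℝ)))
    ≤ gam d * (({p : AffineSubspace F (Fin n → F) × AffineSubspace F (Fin n → F) |
        p.1 ∈ cubesVal F n T x σ ∧ IsLine F n p.2 ∧ x ∈ p.2 ∧ p.2 ≤ p.1}).ncard : ℝ)

namespace CubeTest

noncomputable section

open scoped Classical

/-! ### Univariate interpolation and restriction to lines -/

/-- The Lagrange weight at `t` of the functional giving the value at `0` from the values on `s`. -/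
def lagWeight {F : Type} [Field F] (s : Finset F) (t : F) : F :=
  (Lagrange.basis s id t).eval 0

lemma eval_zero_eq_sum_lagWeight {F : Type} [Field F] (s : Finset F) (p : Polynomial F)
    (hp : p.natDegree < s.card) :
    p.eval 0 = ∑ t ∈ s, lagWeight s t * p.eval t := by
  have h := Lagrange.eq_interpolate (s := s) (v := id) (f := p) (Set.injOn_id _)
    (lt_of_le_of_lt Polynomial.degree_le_natDegree (by exact_mod_cast hp))
  conv_lhs => rw [h]
  simp [Lagrange.interpolate_apply, Polynomial.eval_finsetSum, lagWeight, mul_comm]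

/-- If every value of `φ` is the one interpolated from any `d + 1` other values, then `φ` is a
polynomial function of degree at most `d`. -/
lemma exists_poly_of_lagWeight {F : Type} [Field F] [Fintype F] {d : ℕ}
    (hd : d + 1 ≤ Fintype.card F) (φ : F → F)
    (h : ∀ τ : F, ∀ s : Finset F, s.card = d + 1 → 0 ∉ s →
      φ τ = ∑ t ∈ s, lagWeight s t * φ (τ + t)) :
    ∃ p : Polynomial F, p.natDegree ≤ d ∧ ∀ t, p.eval t = φ t := by
  obtain ⟨s, -, hs⟩ := Finset.exists_subset_card_eq (s := (Finset.univ : Finset F)) (n := d + 1)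
    (by simpa using hd)
  obtain ⟨P, hP⟩ : ∃ P, P = Lagrange.interpolate s id φ := ⟨_, rfl⟩
  have hdeg : P.natDegree ≤ d := by
    have := Lagrange.degree_interpolate_lt (s := s) (v := id) φ (Set.injOn_id _)
    rw [hs, ← hP] at this
    exact Polynomial.natDegree_le_iff_coeff_eq_zero.mpr fun m hm =>
      Polynomial.degree_lt_iff_coeff_zero _ _ |>.mp this m hm
  have hnode : ∀ t ∈ s, P.eval t = φ t := fun t ht => by
    simpa [hP] using Lagrange.eval_interpolate_at_node (s := s) (v := id) φ (Set.injOn_id _) ht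
  refine ⟨_, hdeg, fun τ => ?_⟩
  by_cases hτ : τ ∈ s
  · exact hnode τ hτ
  set s' := s.image (fun t => t - τ) with hs'
  have hc : s'.card = d + 1 := by
    rw [hs', Finset.card_image_of_injective _ (sub_left_injective), hs]
  have h0 : (0 : F) ∉ s' := by
    simp only [hs', Finset.mem_image, not_exists, not_and]
    intro t ht h
    exact hτ (by rwa [sub_eq_zero.mp h] at ht)
  rw [h τ s' hc h0]
  have := eval_zero_eq_sum_lagWeight s'
    (P.comp (Polynomial.X + Polynomial.C τ)) (by
      rw [Polynomial.natDegree_comp]; simp; omega)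
  simp only [Polynomial.eval_comp, Polynomial.eval_add, Polynomial.eval_X, Polynomial.eval_C,
    zero_add] at this
  rw [this]
  refine Finset.sum_congr rfl fun t ht => ?_
  obtain ⟨t', ht', rfl⟩ := Finset.mem_image.mp ht
  simp [hnode t' ht']

/-- The restriction of a polynomial to the parametrized line `t ↦ y + t • h`. -/
def lineRestr {F : Type} [Field F] {n : ℕ} (p : MvPolynomial (Fin n) F) (y h : Fin n → F) :
    Polynomial F :=
  aeval (fun i => Polynomial.C (y i) + Polynomial.C (h i) * Polynomial.X) p

lemma natDegree_lineRestr {F : Type} [Field F] {n : ℕ} (p : MvPolynomial (Fin n) F)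
    (y h : Fin n → F) : (lineRestr p y h).natDegree ≤ p.totalDegree := by
  have := aeval_natDegree_le p le_rfl
    (fun i => Polynomial.C (y i) + Polynomial.C (h i) * Polynomial.X) (n := 1) (fun i => by
      compute_degree)
  simpa [lineRestr] using this

lemma eval_lineRestr {F : Type} [Field F] {n : ℕ} (p : MvPolynomial (Fin n) F)
    (y h : Fin n → F) (t : F) : (lineRestr p y h).eval t = eval (y + t • h) p := by
  rw [lineRestr, ← Polynomial.coe_aeval_eq_eval, comp_aeval_apply, ← coe_aeval_eq_eval]
  rw [RingHom.coe_coe]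
  congr 2
  funext i
  simp only [map_add, map_mul, Polynomial.aeval_C, Polynomial.aeval_X, Pi.add_apply,
    Pi.smul_apply, smul_eq_mul, Algebra.algebraMap_self_apply]
  ring

/-! ### Functions of low degree on every line -/

/-- A function on `F ^ n` whose restriction to every line has degree at most `d` is a polynomial
of total degree at most `d`, provided `2 * d < q`. Interpolating in one variable gives, by
induction, a polynomial of degree at most `2 * d`; its homogeneous components of degree above `d`
vanish as functions, because the restrictions to lines through the origin have degree at
most `d`. -/
lemma exists_mvPoly_of_lines {F : Type} [Field F] [Fintype F] {d : ℕ}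
    (hd : 2 * d < Fintype.card F) : ∀ (n : ℕ) (G : (Fin n → F) → F)
    (_ : ∀ y h : Fin n → F, ∃ p : Polynomial F, p.natDegree ≤ d ∧ ∀ t, p.eval t = G (y + t • h)),
    ∃ g : MvPolynomial (Fin n) F, g.totalDegree ≤ d ∧ ∀ z, eval z g = G z := by
  intro n
  induction n with
  | zero =>
    intro G _
    exact ⟨C (G 0), by simp, fun z => by rw [eval_C, Subsingleton.elim z 0]⟩
  | succ n ih =>
    intro G hG
    have hsl : ∀ c : F, ∃ g : MvPolynomial (Fin n) F, g.totalDegree ≤ d ∧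
        ∀ z, eval z g = G (Fin.cons c z) := by
      intro c
      refine ih (fun z => G (Fin.cons c z)) fun y h => ?_
      obtain ⟨p, hp, hpe⟩ := hG (Fin.cons c y) (Fin.cons 0 h)
      refine ⟨p, hp, fun t => ?_⟩
      rw [hpe t]
      congr 1
      funext i
      refine Fin.cases ?_ (fun j => ?_) i <;> simp
    choose g hgd hge using hsl
    obtain ⟨s, -, hs⟩ := Finset.exists_subset_card_eq (s := (Finset.univ : Finset F))
      (n := d + 1) (by simp; omega)
    set Q : MvPolynomial (Fin (n + 1)) F :=
      ∑ c ∈ s, Polynomial.aeval (X 0) (Lagrange.basis s id c) * rename Fin.succ (g c) with hQ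
    have hQe : ∀ z, eval z Q = G z := by
      intro z
      obtain ⟨p, hp, hpe⟩ := hG (Fin.cons 0 (Fin.tail z)) (Fin.cons 1 0)
      have hpe' : ∀ t, p.eval t = G (Fin.cons t (Fin.tail z)) := by
        intro t
        rw [hpe t]
        congr 1
        funext i
        refine Fin.cases ?_ (fun j => ?_) i <;> simp
      have h := Lagrange.eq_interpolate (s := s) (v := id) (f := p) (Set.injOn_id _)
        (lt_of_le_of_lt Polynomial.degree_le_natDegree (by rw [hs]; exact_mod_cast (by omega)))
      have h2 := congrArg (Polynomial.eval (z 0)) h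
      rw [hpe', Fin.cons_self_tail] at h2
      rw [h2, Lagrange.interpolate_apply, Polynomial.eval_finsetSum, hQ, map_sum]
      refine Finset.sum_congr rfl fun c _ => ?_
      rw [map_mul, eval_rename]
      have e1 : eval z (Polynomial.aeval (X 0 : MvPolynomial (Fin (n+1)) F)
          (Lagrange.basis s id c)) = (Lagrange.basis s id c).eval (z 0) := by
        rw [Polynomial.aeval_eq_sum_range, Polynomial.eval_eq_sum_range]
        simp [smul_eval]
      rw [e1, Polynomial.eval_mul, Polynomial.eval_C, id, hpe', ← hge, mul_comm]
      rfl
    have hQd : Q.totalDegree ≤ 2 * d := by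
      refine totalDegree_finsetSum_le fun c hc => ?_
      refine (totalDegree_mul _ _).trans ?_
      have h1 : (Polynomial.aeval (X 0 : MvPolynomial (Fin (n+1)) F)
          (Lagrange.basis s id c)).totalDegree ≤ d := by
        rw [Polynomial.aeval_eq_sum_range]
        refine totalDegree_finsetSum_le fun k hk => ?_
        refine (totalDegree_smul_le _ _).trans ?_
        refine (totalDegree_pow _ _).trans ?_
        have : (Lagrange.basis s id c).natDegree ≤ d := by
          rw [Polynomial.natDegree_le_iff_degree_le, Lagrange.degree_basis (Set.injOn_id _) hc, hs]
          simp
        simp only [Finset.mem_range] at hk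
        simp; omega
      have h2 := (totalDegree_rename_le Fin.succ (g c)).trans (hgd c)
      omega
    refine ⟨∑ k ∈ Finset.range (d + 1), homogeneousComponent k Q, ?_, fun z => ?_⟩
    · refine totalDegree_finsetSum_le fun k hk => ?_
      refine (homogeneousComponent_isHomogeneous k Q).totalDegree_le.trans ?_
      simp only [Finset.mem_range] at hk; omega
    · obtain ⟨p, hp, hpe⟩ := hG 0 z
      set r : Polynomial F := ∑ k ∈ Finset.range (2 * d + 1),
        Polynomial.C (eval z (homogeneousComponent k Q)) * Polynomial.X ^ k with hr
      have hhom : ∀ k (t : F), eval (t • z) (homogeneousComponent k Q)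
          = t ^ k * eval z (homogeneousComponent k Q) := by
        intro k t
        rw [eval_eq, eval_eq, Finset.mul_sum]
        refine Finset.sum_congr rfl fun m hm => ?_
        have hdeg := homogeneousComponent_isHomogeneous k Q (mem_support_iff.mp hm)
        simp only [Pi.smul_apply, smul_eq_mul, mul_pow, Finset.prod_mul_distrib]
        rw [Finset.prod_pow_eq_pow_sum]
        have : ∑ i ∈ m.support, m i = k := by
          rw [← hdeg]; simp [Finsupp.weight_apply, Finsupp.sum]
        rw [this]; ring
      have hQs : ∑ k ∈ Finset.range (2 * d + 1), homogeneousComponent k Q = Q := by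
        conv_rhs => rw [← sum_homogeneousComponent Q]
        symm
        refine Finset.sum_subset (Finset.range_mono (by omega)) fun k _ hk => ?_
        exact homogeneousComponent_eq_zero _ _ (by simp at hk; omega)
      have hre : ∀ t, r.eval t = p.eval t := by
        intro t
        rw [hpe, zero_add, ← hQe, ← hQs, map_sum, hr, Polynomial.eval_finsetSum]
        refine Finset.sum_congr rfl fun k _ => ?_
        rw [hhom, Polynomial.eval_mul, Polynomial.eval_C, Polynomial.eval_pow,
          Polynomial.eval_X, mul_comm]
      have hrd : r.natDegree ≤ 2 * d := by
        refine Polynomial.natDegree_sum_le_of_forall_le _ _ fun k hk => ?_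
        refine (Polynomial.natDegree_C_mul_X_pow_le _ _).trans ?_
        simp only [Finset.mem_range] at hk; omega
      have hrp : r = p := by
        refine Polynomial.eq_of_degree_sub_lt_of_eval_finset_eq Finset.univ ?_ (fun t _ => hre t)
        refine lt_of_le_of_lt Polynomial.degree_le_natDegree ?_
        have := Polynomial.natDegree_sub_le r p
        rw [Finset.card_univ]
        exact_mod_cast (by omega)
      have hc : ∀ k ∈ Finset.range (2 * d + 1), k ∉ Finset.range (d + 1) →
          eval z (homogeneousComponent k Q) = 0 := by
        intro k hk hk'
        have h0 : p.coeff k = 0 := Polynomial.coeff_eq_zero_of_natDegree_lt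
          (by simp at hk'; omega)
        rw [← hrp, hr, Polynomial.finsetSum_coeff] at h0
        rw [← h0]
        simp only [Polynomial.coeff_C_mul, Polynomial.coeff_X_pow, mul_ite, mul_one, mul_zero,
          Finset.sum_ite_eq, if_pos hk]
      rw [map_sum, Finset.sum_subset (Finset.range_mono (by omega)) hc, ← map_sum, hQs, hQe]

/-! ### Counting -/

/-- The number of elements of a finite type satisfying a predicate, as a real number. -/
def cnt {α : Type*} [Fintype α] (P : α → Prop) : ℝ := ((Finset.univ.filter P).card : ℝ)

section cnt

variable {α β ι : Type*} [Fintype α] [Fintype β]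

lemma cnt_mono {P Q : α → Prop} (h : ∀ a, P a → Q a) : cnt P ≤ cnt Q := by
  unfold cnt
  exact_mod_cast Finset.card_le_card (Finset.monotone_filter_right _ fun a _ => h a)

lemma cnt_or_le (P Q : α → Prop) : cnt (fun a => P a ∨ Q a) ≤ cnt P + cnt Q := by
  unfold cnt
  refine le_trans (Nat.cast_le.mpr ((Finset.card_le_card ?_).trans
    (Finset.card_union_le (Finset.univ.filter P) (Finset.univ.filter Q)))) (by push_cast; rfl)
  intro a
  simp

lemma cnt_exists_le (s : Finset ι) (P : ι → α → Prop) {c : ℝ} (h : ∀ i ∈ s, cnt (P i) ≤ c) :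
    cnt (fun a => ∃ i ∈ s, P i a) ≤ s.card * c := by
  have h1 : cnt (fun a => ∃ i ∈ s, P i a) ≤ ∑ i ∈ s, cnt (P i) := by
    unfold cnt
    have h : Finset.univ.filter (fun a => ∃ i ∈ s, P i a)
        ⊆ s.biUnion fun i => Finset.univ.filter (P i) := fun a => by simp
    refine le_trans (Nat.cast_le.mpr ((Finset.card_le_card ?_).trans Finset.card_biUnion_le))
      (by push_cast; rfl)
    convert h
  refine h1.trans ((Finset.sum_le_sum h).trans ?_)
  simp

lemma cnt_comp_le (P : β → Prop) {φ : α → β} (hφ : Function.Injective φ) :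
    cnt (fun a => P (φ a)) ≤ cnt P := by
  unfold cnt
  exact_mod_cast Finset.card_le_card_of_injOn φ (by intro a; simp) hφ.injOn

lemma exists_not_of_cnt_lt (P : α → Prop) (h : cnt P < Fintype.card α) : ∃ a, ¬ P a := by
  by_contra! hc
  simp [cnt, hc] at h

lemma cnt_eq_sum (P : α → Prop) : cnt P = ∑ a, if P a then (1 : ℝ) else 0 := by
  simp [cnt]

lemma cnt_eq_sum' (P : α → Prop) [DecidablePred P] :
    cnt P = ∑ a, if P a then (1 : ℝ) else 0 := by
  rw [cnt_eq_sum]; congr!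

lemma cnt_prod (P : α × β → Prop) : cnt P = ∑ b, cnt fun a => P (a, b) := by
  simp only [cnt_eq_sum]
  rw [Fintype.sum_prod_type_right]

lemma cnt_prod_le (P : α × β → Prop) {c : ℝ} (h : ∀ b, cnt (fun a => P (a, b)) ≤ c) :
    cnt P ≤ Fintype.card β * c := by
  rw [cnt_prod]
  refine (Finset.sum_le_sum fun b _ => h b).trans ?_
  simp

lemma cnt_swap (P : α × β → Prop) : cnt (fun p : β × α => P (p.2, p.1)) = cnt P :=
  le_antisymm (cnt_comp_le P (Prod.swap_injective))
    (cnt_comp_le (fun p : β × α => P (p.2, p.1)) (Prod.swap_injective))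

lemma cnt_fst (P : α → Prop) : cnt (fun p : α × β => P p.1) = Fintype.card β * cnt P := by
  rw [cnt_prod]; simp

lemma exists_cnt_le [Nonempty β] (P : α × β → Prop) {c : ℝ} (h : cnt P ≤ Fintype.card β * c) :
    ∃ b, cnt (fun a => P (a, b)) ≤ c := by
  by_contra! hc
  rw [cnt_prod] at h
  have := Finset.sum_lt_sum_of_nonempty (s := (Finset.univ : Finset β))
    Finset.univ_nonempty fun b _ => hc b
  simp at this
  linarith

end cnt

/-! ### Self-correction -/

section selfCorrect

variable {F : Type} [Field F] {V : Type} [AddCommGroup V] [Module F V]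

/-- The value at `y` predicted by the values of `f` at the points `y + t • h` with `t ∈ s`. -/
def interp (s : Finset F) (f : V → F) (y h : V) : F := ∑ t ∈ s, lagWeight s t * f (y + t • h)

lemma injective_shear_fst (y : V) {t : F} (ht : t ≠ 0) :
    Function.Injective fun p : V × V => (y + t • p.1, p.2) := by
  rintro ⟨a, b⟩ ⟨a', b'⟩ h
  simp only [Prod.mk.injEq, add_right_inj] at h
  rw [smul_right_injective V ht h.1, h.2]

variable [Fintype V]

/-- Two independent predictions of the value at `y`, even with different node sets, rarely
differ: both are expanded over the grid `y + t • h₁ + t' • h₂`. -/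
lemma cnt_interp_ne_le {d : ℕ} {δ : ℝ} (f : V → F)
    (hf : ∀ s : Finset F, s.card = d + 1 → 0 ∉ s →
      cnt (fun p : V × V => f p.1 ≠ interp s f p.1 p.2) ≤ δ * (Fintype.card V : ℝ) ^ 2)
    (s s' : Finset F) (hs : s.card = d + 1) (hs0 : 0 ∉ s) (hs' : s'.card = d + 1) (hs0' : 0 ∉ s')
    (y : V) :
    cnt (fun p : V × V => interp s f y p.1 ≠ interp s' f y p.2)
      ≤ 2 * (d + 1) * δ * (Fintype.card V : ℝ) ^ 2 := by
  have h1 : cnt (fun p : V × V => ∃ t ∈ s, f (y + t • p.1) ≠ interp s' f (y + t • p.1) p.2)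
      ≤ s.card * (δ * (Fintype.card V : ℝ) ^ 2) := by
    refine cnt_exists_le s _ fun t ht => ?_
    exact (cnt_comp_le (fun p : V × V => f p.1 ≠ interp s' f p.1 p.2)
      (injective_shear_fst y (ne_of_mem_of_not_mem ht hs0))).trans (hf s' hs' hs0')
  have h2 : cnt (fun p : V × V => ∃ t ∈ s', f (y + t • p.2) ≠ interp s f (y + t • p.2) p.1)
      ≤ s'.card * (δ * (Fintype.card V : ℝ) ^ 2) := by
    refine cnt_exists_le s' _ fun t ht => ?_
    exact (cnt_comp_le (fun p : V × V => f p.1 ≠ interp s f p.1 p.2)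
      ((injective_shear_fst y (ne_of_mem_of_not_mem ht hs0')).comp Prod.swap_injective)).trans
      (hf s hs hs0)
  have h3 : cnt (fun p : V × V => interp s f y p.1 ≠ interp s' f y p.2)
      ≤ cnt (fun p : V × V => (∃ t ∈ s, f (y + t • p.1) ≠ interp s' f (y + t • p.1) p.2) ∨
          (∃ t ∈ s', f (y + t • p.2) ≠ interp s f (y + t • p.2) p.1)) := by
    refine cnt_mono fun p hp => ?_
    by_contra hc
    push Not at hc
    apply hp
    unfold interp
    rw [Finset.sum_congr rfl fun t ht => by rw [hc.1 t ht],
      Finset.sum_congr (s₁ := s') rfl fun t ht => by rw [hc.2 t ht]]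
    unfold interp
    simp only [Finset.mul_sum]
    rw [Finset.sum_comm]
    refine Finset.sum_congr rfl fun t _ => Finset.sum_congr rfl fun t' _ => ?_
    rw [add_right_comm]
    ring
  have h4 := cnt_or_le
    (fun p : V × V => (∃ t ∈ s, f (y + t • p.1) ≠ interp s' f (y + t • p.1) p.2))
    (fun p : V × V => (∃ t ∈ s', f (y + t • p.2) ≠ interp s f (y + t • p.2) p.1))
  rw [hs] at h1
  rw [hs'] at h2
  push_cast at h1 h2
  linarith

/-- Self-correction: a function whose values are mostly the ones predicted along random lines
is close to a function whose values are always the predicted ones. -/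
lemma exists_selfCorrection [Fintype F] {d : ℕ} {δ : ℝ} (hd : d + 1 < Fintype.card F)
    (hδ0 : 0 ≤ δ) (hδ : (d + 1) * (4 * d + 9) * δ < 1) (f : V → F)
    (hf : ∀ s : Finset F, s.card = d + 1 → 0 ∉ s →
      cnt (fun p : V × V => f p.1 ≠ interp s f p.1 p.2) ≤ δ * (Fintype.card V : ℝ) ^ 2) :
    ∃ G : V → F,
      (∀ s : Finset F, s.card = d + 1 → 0 ∉ s → ∀ y h, G y = interp s G y h) ∧
      cnt (fun y => f y ≠ G y) ≤ 2 * δ * Fintype.card V := by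
  set N : ℝ := (Fintype.card V : ℝ) with hN
  have hNpos : 0 < N := by rw [hN]; exact_mod_cast Fintype.card_pos
  have hpair := cnt_interp_ne_le f hf
  obtain ⟨s₀, hs₀sub, hs₀⟩ := Finset.exists_subset_card_eq
    (s := (Finset.univ : Finset F).erase 0) (n := d + 1) (by
      rw [Finset.card_erase_of_mem (Finset.mem_univ _), Finset.card_univ]; omega)
  have hs₀0 : (0 : F) ∉ s₀ := fun h => by simpa using hs₀sub h
  have hex : ∀ y, ∃ h', cnt (fun h => interp s₀ f y h ≠ interp s₀ f y h')
      ≤ 2 * (d + 1) * δ * N := by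
    intro y
    refine exists_cnt_le (fun p : V × V => interp s₀ f y p.1 ≠ interp s₀ f y p.2) ?_
    refine (hpair s₀ s₀ hs₀ hs₀0 hs₀ hs₀0 y).trans (le_of_eq ?_)
    rw [← hN]; ring
  -- `G y` is the prediction in a direction agreeing with the predictions in most others
  choose hh hhh using hex
  set G : V → F := fun y => interp s₀ f y (hh y) with hG
  have hmaj : ∀ s : Finset F, s.card = d + 1 → 0 ∉ s → ∀ y,
      cnt (fun h => interp s f y h ≠ G y) ≤ 4 * (d + 1) * δ * N := by
    intro s hs hs0 y
    have h1 := hpair s s₀ hs hs0 hs₀ hs₀0 y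
    have h2 : cnt (fun p : V × V => interp s₀ f y p.2 ≠ G y) = N * cnt (fun h =>
        interp s₀ f y h ≠ G y) := by
      rw [cnt_swap (fun p : V × V => interp s₀ f y p.1 ≠ G y)]
      exact cnt_fst (β := V) (fun h => interp s₀ f y h ≠ G y)
    have h3 : cnt (fun p : V × V => interp s f y p.1 ≠ G y) = N * cnt (fun h =>
        interp s f y h ≠ G y) := cnt_fst (β := V) (fun h => interp s f y h ≠ G y)
    have h4 : cnt (fun p : V × V => interp s f y p.1 ≠ G y)
        ≤ cnt (fun p : V × V => interp s f y p.1 ≠ interp s₀ f y p.2)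
          + cnt (fun p : V × V => interp s₀ f y p.2 ≠ G y) := by
      refine le_trans (cnt_mono fun p hp => ?_) (cnt_or_le _ _)
      by_contra hc
      push Not at hc
      exact hp (hc.1.trans hc.2)
    rw [h2, h3] at h4
    have h5 := mul_le_mul_of_nonneg_left (hhh y) hNpos.le
    have h6 : N * cnt (fun h => interp s f y h ≠ G y) ≤ N * (4 * (d + 1) * δ * N) := by
      have : N * cnt (fun h => interp s₀ f y h ≠ G y) ≤ N * (2 * (d + 1) * δ * N) := h5
      nlinarith
    exact le_of_mul_le_mul_left h6 hNpos
  refine ⟨G, ?_, ?_⟩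
  · intro s hs hs0 y h
    have e1 : cnt (fun p : V × V => interp s f y p.1 ≠ G y) ≤ N * (4 * (d + 1) * δ * N) :=
      cnt_prod_le _ fun _ => hmaj s hs hs0 y
    have e2 : cnt (fun p : V × V => ∃ t ∈ s,
        interp s f (y + t • h) (p.1 + t • p.2) ≠ G (y + t • h))
        ≤ s.card * (N * (4 * (d + 1) * δ * N)) := by
      refine cnt_exists_le s _ fun t _ => cnt_prod_le _ fun b => ?_
      exact (cnt_comp_le (fun k => interp s f (y + t • h) k ≠ G (y + t • h))
        (add_left_injective (t • b))).trans (hmaj s hs hs0 _)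
    have e3 : cnt (fun p : V × V => ∃ t ∈ s,
        f (y + t • p.1) ≠ interp s f (y + t • p.1) (h + t • p.2))
        ≤ s.card * (δ * N ^ 2) := by
      refine cnt_exists_le s _ fun t ht => ?_
      have ht0 : t ≠ 0 := ne_of_mem_of_not_mem ht hs0
      refine (cnt_comp_le (fun p : V × V => f p.1 ≠ interp s f p.1 p.2)
        (φ := fun p : V × V => (y + t • p.1, h + t • p.2)) ?_).trans (hf s hs hs0)
      rintro ⟨a, b⟩ ⟨a', b'⟩ hab
      simp only [Prod.mk.injEq, add_right_inj] at hab
      rw [smul_right_injective V ht0 hab.1, smul_right_injective V ht0 hab.2]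
    rw [hs] at e2 e3
    push_cast at e2 e3
    -- The union bound costs `(d + 1)(4 + 4(d + 1) + 1) δ < 1`; outside the exceptional pairs the
    -- values at the grid points `y + t • h + t' • (h₁ + t • h₂)` determine both sides.
    obtain ⟨p, hp⟩ := exists_not_of_cnt_lt (fun p : V × V =>
      (interp s f y p.1 ≠ G y ∨ ∃ t ∈ s,
        interp s f (y + t • h) (p.1 + t • p.2) ≠ G (y + t • h)) ∨
      ∃ t ∈ s, f (y + t • p.1) ≠ interp s f (y + t • p.1) (h + t • p.2)) (by
        refine lt_of_le_of_lt (cnt_or_le _ _) ?_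
        refine lt_of_le_of_lt (add_le_add_left (cnt_or_le _ _) _) ?_
        rw [Fintype.card_prod]
        push_cast
        rw [← hN]
        have : ((d + 1) * (4 * d + 9) * δ) * N ^ 2 < 1 * N ^ 2 :=
          mul_lt_mul_of_pos_right hδ (by positivity)
        nlinarith)
    push Not at hp
    obtain ⟨⟨p1, p2⟩, p3⟩ := hp
    rw [← p1]
    unfold interp
    rw [Finset.sum_congr rfl fun t ht => by rw [p3 t ht],
      Finset.sum_congr (f := fun t => lagWeight s t * G (y + t • h)) rfl
        fun t ht => by rw [← p2 t ht]]
    unfold interp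
    simp only [Finset.mul_sum]
    rw [Finset.sum_comm]
    refine Finset.sum_congr rfl fun t _ => Finset.sum_congr rfl fun t' _ => ?_
    have : y + t' • p.1 + t • (h + t' • p.2) = y + t • h + t' • (p.1 + t • p.2) := by
      simp only [smul_add, smul_smul, mul_comm t t']
      abel
    rw [this]
    ring
  · have h1 : cnt (fun p : V × V => f p.1 ≠ G p.1) ≤
        cnt (fun p : V × V => f p.1 ≠ interp s₀ f p.1 p.2) +
        cnt (fun p : V × V => f p.1 ≠ G p.1 ∧ interp s₀ f p.1 p.2 ≠ G p.1) := by
      refine le_trans (cnt_mono fun p hp => ?_) (cnt_or_le _ _)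
      by_cases hc : f p.1 = interp s₀ f p.1 p.2
      · exact Or.inr ⟨hp, fun h => hp (hc.trans h)⟩
      · exact Or.inl hc
    have h2 : cnt (fun p : V × V => f p.1 ≠ G p.1 ∧ interp s₀ f p.1 p.2 ≠ G p.1)
        ≤ cnt (fun y => f y ≠ G y) * (N / 2) := by
      rw [← cnt_swap, cnt_prod]
      have : ∀ y, cnt (fun h : V => f y ≠ G y ∧ interp s₀ f y h ≠ G y)
          ≤ (if f y ≠ G y then (1 : ℝ) else 0) * (N / 2) := by
        intro y
        by_cases hy : f y = G y
        · simp [hy, cnt]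
        · rw [if_pos hy, one_mul]
          refine (cnt_mono fun h hh => hh.2).trans ((hmaj s₀ hs₀ hs₀0 y).trans ?_)
          have hd0 : (0 : ℝ) ≤ d := by positivity
          have : 8 * (d + 1) * δ ≤ 1 := by
            nlinarith [mul_nonneg (mul_nonneg hd0 hd0) hδ0, mul_nonneg hd0 hδ0]
          nlinarith
      refine (Finset.sum_le_sum fun y _ => this y).trans (le_of_eq ?_)
      rw [← Finset.sum_mul, cnt_eq_sum]
      congr!
    have h3 : cnt (fun p : V × V => f p.1 ≠ G p.1) = N * cnt (fun y => f y ≠ G y) :=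
      cnt_fst (β := V) (fun y => f y ≠ G y)
    have h4 := hf s₀ hs₀ hs₀0
    rw [h3] at h1
    have h5 : N * cnt (fun y => f y ≠ G y) ≤ N * (2 * δ * N) := by nlinarith
    exact le_of_mul_le_mul_left h5 hNpos

end selfCorrect

/-! ### Mixing for planes and lines in a family of spans -/

section mixing

/-- The second-moment step of the mixing bounds: if each `ψ p` has correlation `E` with the
indicator `X`, and distinct `ψ p` are nearly orthogonal, then `E` is small, by Cauchy–Schwarz
applied to `X` and `∑ p, ψ p`. -/
lemma sq_card_mul_le {Ω P : Type*} [Fintype Ω] [Fintype P] (X : Ω → ℝ)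
    (hX : ∀ ω, X ω * X ω = X ω) (ψ : P → Ω → ℝ) {E D O : ℝ}
    (hE : ∀ p, ∑ ω, ψ p ω * X ω = E)
    (hJ : ∀ p p', ∑ ω, ψ p ω * ψ p' ω ≤ (if p = p' then D else 0) + O) :
    (Fintype.card P * E) ^ 2
      ≤ (∑ ω, X ω) * (Fintype.card P * D + (Fintype.card P : ℝ) ^ 2 * O) := by
  have h1 : Fintype.card P * E = ∑ ω, X ω * ∑ p, ψ p ω := by
    simp only [Finset.mul_sum]
    rw [Finset.sum_comm]
    simp only [mul_comm (X _), hE]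
    simp
  have h2 : ∑ ω, (∑ p, ψ p ω) ^ 2 ≤ Fintype.card P * D + (Fintype.card P : ℝ) ^ 2 * O := by
    have : ∑ ω, (∑ p, ψ p ω) ^ 2 = ∑ p, ∑ p', ∑ ω, ψ p ω * ψ p' ω := by
      simp only [sq, Finset.sum_mul_sum]
      rw [Finset.sum_comm]
      exact Finset.sum_congr rfl fun p _ => Finset.sum_comm
    rw [this]
    refine (Finset.sum_le_sum fun p _ => Finset.sum_le_sum fun p' _ => hJ p p').trans ?_
    simp [Finset.sum_add_distrib]
    apply le_of_eq; ring
  have h0 : 0 ≤ ∑ ω, X ω := Finset.sum_nonneg fun ω _ => by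
    rw [← hX]; exact mul_self_nonneg _
  rw [h1]
  refine (Finset.sum_mul_sq_le_sq_mul_sq _ _ _).trans ?_
  simp only [sq (X _), hX]
  exact mul_le_mul_of_nonneg_left h2 h0

variable {F : Type} [Field F] [Fintype F] {V : Type} [AddCommGroup V] [Module F V] [Fintype V]

omit [Fintype F] in
lemma sum_affine (g : V → ℝ) (c : V) {s : F} (hs : s ≠ 0) : ∑ u, g (c + s • u) = ∑ u, g u := by
  have hb : Function.Bijective (fun u => c + s • u) :=
    Finite.injective_iff_bijective.mp fun a b h => smul_right_injective V hs (add_left_cancel h)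
  exact hb.sum_comp g

lemma sum_translate (g : V → V → V → ℝ) (c : V → V → V) :
    ∑ ω : V × V × V, g (ω.1 + c ω.2.1 ω.2.2) ω.2.1 ω.2.2 = ∑ ω : V × V × V, g ω.1 ω.2.1 ω.2.2 := by
  rw [Fintype.sum_prod_type, Fintype.sum_prod_type, Finset.sum_comm,
    Finset.sum_comm (f := fun (v : V) (r : V × V) => g v r.1 r.2)]
  refine Finset.sum_congr rfl fun r _ => ?_
  exact Equiv.sum_comp (Equiv.addRight (c r.1 r.2)) fun v => g v r.1 r.2

lemma sum_translate_snd (g : V → V → V → ℝ) (c : V → V → V) :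
    ∑ ω : V × V × V, g ω.1 (ω.2.1 + c ω.1 ω.2.2) ω.2.2 = ∑ ω : V × V × V, g ω.1 ω.2.1 ω.2.2 := by
  simp only [Fintype.sum_prod_type]
  refine Finset.sum_congr rfl fun u _ => ?_
  rw [Finset.sum_comm, Finset.sum_comm (f := fun v w => g u v w)]
  refine Finset.sum_congr rfl fun w _ => ?_
  exact Equiv.sum_comp (Equiv.addRight (c u w)) fun v => g u v w

/-- A `{0, 1}`-valued function of triples of vectors, invariant under the column operations that
preserve the span. -/
structure SpanInvariant (F : Type) [Field F] {V : Type} [AddCommGroup V] [Module F V]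
    (X : V → V → V → ℝ) : Prop where
  idem : ∀ u v w, X u v w * X u v w = X u v w
  swap₁₂ : ∀ u v w, X v u w = X u v w
  swap₂₃ : ∀ u v w, X u w v = X u v w
  shear : ∀ (s : F) u v w, X (u + s • w) v w = X u v w

namespace SpanInvariant

variable {X : V → V → V → ℝ}

omit [Fintype F] [Fintype V] in
lemma shear₂₃ (hX : SpanInvariant F X) (s : F) (u v w : V) : X u (v + s • w) w = X u v w := by
  rw [hX.swap₁₂, hX.shear, hX.swap₁₂]

omit [Fintype F] [Fintype V] in
lemma shear₁₂ (hX : SpanInvariant F X) (s : F) (u v w : V) : X (u + s • v) v w = X u v w := by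
  rw [hX.swap₂₃, hX.shear, hX.swap₂₃]

omit [Fintype F] [Fintype V] in
lemma shear₂₁ (hX : SpanInvariant F X) (s : F) (u v w : V) : X u (v + s • u) w = X u v w := by
  rw [hX.swap₁₂, hX.shear₁₂, hX.swap₁₂]

/-- The squared deviation of the number of spans through a vector, summed over all vectors. -/
lemma sum_line_sq_le (hX : SpanInvariant F X) (β : V → ℝ)
    (hβ : ∀ v, β v = ∑ u, ∑ w, X v u w
      - (∑ ω : V × V × V, X ω.1 ω.2.1 ω.2.2) / Fintype.card V) :
    (Fintype.card F : ℝ) ^ 2 * ∑ v, β v ^ 2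
      ≤ (Fintype.card V : ℝ) ^ 2 * ∑ ω : V × V × V, X ω.1 ω.2.1 ω.2.2 := by
  set N : ℝ := (Fintype.card V : ℝ) with hN
  set q : ℝ := (Fintype.card F : ℝ) with hq
  set M : ℝ := ∑ ω : V × V × V, X ω.1 ω.2.1 ω.2.2 with hM
  have hNpos : 0 < N := by rw [hN]; exact_mod_cast Fintype.card_pos
  have hqpos : 0 < q := by rw [hq]; exact_mod_cast Fintype.card_pos
  have hM0 : 0 ≤ M := Finset.sum_nonneg fun ω _ => by
    rw [← hX.idem]; exact mul_self_nonneg _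
  have hβ0 : ∑ v, β v = 0 := by
    simp only [hβ, Finset.sum_sub_distrib, Finset.sum_const, Finset.card_univ, nsmul_eq_mul]
    rw [hM]
    simp only [Fintype.sum_prod_type]
    rw [← hN]; field_simp; ring
  set B := ∑ v, β v ^ 2 with hB
  have key := sq_card_mul_le (Ω := V × V × V) (P := F × F) (fun ω => X ω.1 ω.2.1 ω.2.2)
    (fun ω => hX.idem _ _ _) (fun p ω => β (ω.1 + (p.1 • ω.2.1 + p.2 • ω.2.2)))
    (E := B) (D := N ^ 2 * B) (O := 0) ?_ ?_
  · rw [← hM] at key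
    simp only [Fintype.card_prod, Nat.cast_mul, mul_zero, add_zero, ← hq] at key
    have hB0 : 0 ≤ B := Finset.sum_nonneg fun v _ => sq_nonneg _
    rcases hB0.eq_or_lt with h | h
    · rw [← h, mul_zero]; positivity
    · have h1 : (q ^ 2 * B) * (q ^ 2 * B) ≤ (N ^ 2 * M) * (q ^ 2 * B) := by nlinarith
      exact le_of_mul_le_mul_right h1 (by positivity)
  · rintro ⟨s, t⟩
    have h1 : ∀ ω : V × V × V, X ω.1 ω.2.1 ω.2.2
        = X (ω.1 + (s • ω.2.1 + t • ω.2.2)) ω.2.1 ω.2.2 := fun ω => by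
      rw [← add_assoc, hX.shear, hX.shear₁₂]
    rw [Finset.sum_congr rfl fun ω _ => by rw [h1 ω]]
    rw [sum_translate (fun v u w => β v * X v u w) (fun u w => s • u + t • w)]
    simp only [Fintype.sum_prod_type, ← Finset.mul_sum]
    have h2 : ∀ v, ∑ u, ∑ w, X v u w = β v + M / N := fun v => by rw [hβ]; ring
    simp only [h2, mul_add, Finset.sum_add_distrib, ← Finset.sum_mul, hβ0, zero_mul, add_zero]
    simp only [hB, sq]
  · rintro ⟨s, t⟩ ⟨s', t'⟩
    rw [add_zero]
    apply le_of_eq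
    have h1 := sum_translate (fun v u w => β v * β (v + ((s' - s) • u + (t' - t) • w)))
      (fun u w => s • u + t • w)
    have h2 : ∀ v u w : V, v + (s • u + t • w) + ((s' - s) • u + (t' - t) • w)
        = v + (s' • u + t' • w) := fun v u w => by
      simp only [sub_smul]; abel
    simp only [h2] at h1
    rw [h1]
    simp only [Fintype.sum_prod_type, ← Finset.mul_sum]
    split_ifs with h
    · simp only [Prod.mk.injEq] at h
      simp only [h.1, h.2, sub_self, zero_smul, add_zero, Finset.sum_const, Finset.card_univ,
        nsmul_eq_mul, ← hN]
      rw [hB, Finset.mul_sum]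
      exact Finset.sum_congr rfl fun v _ => by ring
    · refine Finset.sum_eq_zero fun v _ => ?_
      rw [mul_eq_zero]; right
      by_cases hs : s' - s = 0
      · have ht : t' - t ≠ 0 := by
          intro ht
          exact h (by rw [sub_eq_zero.mp hs, sub_eq_zero.mp ht])
        refine Finset.sum_eq_zero fun u _ => ?_
        simp only [← add_assoc]
        rw [sum_affine β _ ht, hβ0]
      · rw [Finset.sum_comm]
        refine Finset.sum_eq_zero fun w _ => ?_
        simp only [add_comm _ ((t' - t) • w), ← add_assoc]
        rw [sum_affine β _ hs, hβ0]

/-- The squared deviation of the number of spans through a pair of vectors, summed over all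
pairs. It is at most a `2 / q` fraction of the total number of triples times the number of
vectors: distinct planes inside a span share a line, so that the correlations between the
deviations at distinct planes are controlled by the deviations at lines. -/
lemma sum_plane_sq_le (hX : SpanInvariant F X) (b : V → V → ℝ)
    (hb : ∀ u v, b u v = ∑ w, X u v w
      - (∑ ω : V × V × V, X ω.1 ω.2.1 ω.2.2) / (Fintype.card V : ℝ) ^ 2) :
    Fintype.card F * ∑ u, ∑ v, b u v ^ 2
      ≤ 2 * Fintype.card V * ∑ ω : V × V × V, X ω.1 ω.2.1 ω.2.2 := by
  set N : ℝ := (Fintype.card V : ℝ) with hN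
  set q : ℝ := (Fintype.card F : ℝ) with hq
  set M : ℝ := ∑ ω : V × V × V, X ω.1 ω.2.1 ω.2.2 with hM
  have hNpos : 0 < N := by rw [hN]; exact_mod_cast Fintype.card_pos
  have hqpos : 0 < q := by rw [hq]; exact_mod_cast Fintype.card_pos
  have hXnn : ∀ u v w, 0 ≤ X u v w := fun u v w => by
    rw [← hX.idem]; exact mul_self_nonneg _
  have hXle : ∀ u v w, X u v w ≤ 1 := fun u v w => by
    nlinarith [hX.idem u v w, sq_nonneg (X u v w - 1)]
  have hM0 : 0 ≤ M := Finset.sum_nonneg fun ω _ => hXnn _ _ _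
  have hMs : M = ∑ u, ∑ v, ∑ w, X u v w := by rw [hM]; simp only [Fintype.sum_prod_type]
  have hb0 : ∑ u, ∑ v, b u v = 0 := by
    simp only [hb, Finset.sum_sub_distrib, Finset.sum_const, Finset.card_univ, nsmul_eq_mul]
    rw [← hMs, ← hN]; field_simp; ring
  have hbsymm : ∀ u v, b v u = b u v := fun u v => by
    rw [hb, hb]; simp only [hX.swap₁₂ u v]
  have hbshear : ∀ (r : F) u v, b u (v + r • u) = b u v := fun r u v => by
    rw [hb, hb]; simp only [hX.shear₂₁]
  set β : V → ℝ := fun v => ∑ u, b v u with hβ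
  have hline := hX.sum_line_sq_le β (fun v => by
    simp only [hβ, hb, Finset.sum_sub_distrib, Finset.sum_const, Finset.card_univ, nsmul_eq_mul]
    rw [← hN, ← hM]; field_simp)
  rw [← hN, ← hq, ← hM] at hline
  set O := ∑ v, β v ^ 2 with hO
  set B := ∑ u, ∑ v, b u v ^ 2 with hB
  have hb0' : ∑ u, ∑ v, b u v = 0 := hb0
  have hB0 : 0 ≤ B := Finset.sum_nonneg fun v _ => Finset.sum_nonneg fun u _ => sq_nonneg _
  have hO0 : 0 ≤ O := Finset.sum_nonneg fun v _ => sq_nonneg _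
  have hba : ∑ u, ∑ v, b u v * ∑ w, X u v w = B := by
    have h2 : ∀ u v, ∑ w, X u v w = b u v + M / N ^ 2 := fun u v => by rw [hb]; ring
    simp only [h2, mul_add, Finset.sum_add_distrib, ← Finset.sum_mul, hb0', zero_mul, add_zero]
    simp only [hB, sq]
  -- the trivial bound on the variance by the second moment
  have hBM : B ≤ N * M := by
    have h3 : ∀ u v, b u v * ∑ w, X u v w ≤ N * ∑ w, X u v w := fun u v => by
      refine mul_le_mul_of_nonneg_right ?_ (Finset.sum_nonneg fun w _ => hXnn _ _ _)
      rw [hb]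
      have : ∑ w, X u v w ≤ N := by
        refine (Finset.sum_le_sum fun w _ => hXle u v w).trans ?_
        simp [hN]
      have : 0 ≤ M / N ^ 2 := by positivity
      linarith
    rw [← hba, hMs]
    simp only [Finset.mul_sum (a := N)]
    refine Finset.sum_le_sum fun u _ => Finset.sum_le_sum fun v _ => ?_
    simpa only [Finset.mul_sum (a := N)] using h3 u v
  have key := sq_card_mul_le (Ω := V × V × V) (P := F × F) (fun ω => X ω.1 ω.2.1 ω.2.2)
    (fun ω => hX.idem _ _ _) (fun p ω => b (ω.1 + p.1 • ω.2.2) (ω.2.1 + p.2 • ω.2.2))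
    (E := B) (D := N * B) (O := O) ?_ ?_
  · rw [← hM] at key
    simp only [Fintype.card_prod, Nat.cast_mul, ← hq] at key
    have h1 : (q * q) * (N * B) + (q * q) ^ 2 * O ≤ 2 * q ^ 2 * N ^ 2 * M := by
      have := mul_le_mul_of_nonneg_left hBM (by positivity : 0 ≤ q ^ 2 * N)
      have := mul_le_mul_of_nonneg_left hline (by positivity : 0 ≤ q ^ 2)
      nlinarith
    have h2 : q ^ 2 * (q * B) ^ 2 ≤ q ^ 2 * (2 * N ^ 2 * M ^ 2) := by
      have := mul_le_mul_of_nonneg_left h1 hM0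
      nlinarith
    have h3 := le_of_mul_le_mul_left h2 (by positivity)
    have h4 : (q * B) ^ 2 ≤ (2 * N * M) ^ 2 := by nlinarith [sq_nonneg (N * M)]
    exact (abs_le_of_sq_le_sq' h4 (by positivity)).2
  · rintro ⟨s, t⟩
    have h1 : ∀ ω : V × V × V, X ω.1 ω.2.1 ω.2.2
        = X (ω.1 + s • ω.2.2) (ω.2.1 + t • ω.2.2) ω.2.2 := fun ω => by
      rw [hX.shear, hX.shear₂₃]
    rw [Finset.sum_congr rfl fun ω _ => by rw [h1 ω]]
    rw [sum_translate (fun u v w => b u (v + t • w) * X u (v + t • w) w) (fun v w => s • w),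
      sum_translate_snd (fun u v w => b u v * X u v w) (fun v w => t • w)]
    simp only [Fintype.sum_prod_type, ← Finset.mul_sum]
    exact hba
  · rintro ⟨s, t⟩ ⟨s', t'⟩
    have h1 := sum_translate (fun u v w => b u (v + t • w) * b (u + (s' - s) • w) (v + t' • w))
      (fun v w => s • w)
    have h1' := sum_translate_snd
      (fun u v w => b u v * b (u + (s' - s) • w) (v + (t' - t) • w)) (fun u w => t • w)
    have h2 : ∀ (r r' : F) (v w : V), v + r • w + (r' - r) • w = v + r' • w := fun r r' v w => by
      simp only [sub_smul]; abel
    simp only [h2] at h1 h1'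
    rw [h1, h1']
    split_ifs with h
    · simp only [Prod.mk.injEq] at h
      refine le_trans (le_of_eq ?_) (le_add_of_nonneg_right hO0)
      simp only [h.1, h.2, sub_self, zero_smul, add_zero, Fintype.sum_prod_type,
        Finset.sum_const, Finset.card_univ, nsmul_eq_mul, ← hN, ← sq, ← Finset.mul_sum, hB]
    · rw [zero_add]
      apply le_of_eq
      by_cases hs : s' - s = 0
      · have ht : t' - t ≠ 0 := by
          intro ht
          exact h (by rw [sub_eq_zero.mp hs, sub_eq_zero.mp ht])
        simp only [hs, zero_smul, add_zero, Fintype.sum_prod_type, ← Finset.mul_sum]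
        rw [hO]
        refine Finset.sum_congr rfl fun u _ => ?_
        have : ∀ v, ∑ w, b u (v + (t' - t) • w) = β u := fun v => sum_affine (b u) v ht
        simp only [this, ← Finset.sum_mul, sq]
        rfl
      · -- both planes are sheared so that they share the vector `v - r • u`
        set δ := s' - s with hδ
        set r := (t' - t) / δ with hr
        have h3 : ∀ u v w : V, b u v * b (u + δ • w) (v + (t' - t) • w)
            = b u (v + (-r) • u) * b (u + δ • w) (v + (-r) • u) := fun u v w => by
          rw [hbshear, ← hbshear r (u + δ • w) (v + (-r) • u)]
          congr 2
          have : r * δ = t' - t := by rw [hr]; field_simp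
          rw [smul_add, smul_smul, this, neg_smul]; abel
        simp only [h3]
        rw [sum_translate_snd (fun u v w => b u v * b (u + δ • w) v) (fun u w => (-r) • u)]
        simp only [Fintype.sum_prod_type, ← Finset.mul_sum]
        have h4 : ∀ u v, ∑ w, b (u + δ • w) v = β v := fun u v => by
          rw [sum_affine (fun u => b u v) u hs]
          exact Finset.sum_congr rfl fun w _ => hbsymm _ _
        simp only [h4]
        rw [Finset.sum_comm, hO]
        refine Finset.sum_congr rfl fun v _ => ?_
        rw [← Finset.sum_mul, sq]
        congr 1
        exact Finset.sum_congr rfl fun u _ => hbsymm _ _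

end SpanInvariant

end mixing

/-! ### Counting spanning triples of cubes through a point -/

section incidence

variable {F : Type} [Field F] {V : Type} [AddCommGroup V] [Module F V]

/-- The linear span of three vectors. -/
def spn (F : Type) [Field F] {V : Type} [AddCommGroup V] [Module F V] (u v w : V) :
    Submodule F V :=
  Submodule.span F {u} ⊔ Submodule.span F {v} ⊔ Submodule.span F {w}

/-- The affine span of `x`, `x + u`, `x + v`, `x + w`. -/
def flat (F : Type) [Field F] {V : Type} [AddCommGroup V] [Module F V] (x u v w : V) :
    AffineSubspace F V :=
  AffineSubspace.mk' x (spn F u v w)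

lemma mem_spn_left (u v w : V) : u ∈ spn F u v w :=
  Submodule.mem_sup_left (Submodule.mem_sup_left (Submodule.mem_span_singleton_self u))

lemma mem_spn_mid (u v w : V) : v ∈ spn F u v w :=
  Submodule.mem_sup_left (Submodule.mem_sup_right (Submodule.mem_span_singleton_self v))

lemma mem_spn_right (u v w : V) : w ∈ spn F u v w :=
  Submodule.mem_sup_right (Submodule.mem_span_singleton_self w)

lemma spn_le {u v w : V} {W : Submodule F V} (hu : u ∈ W) (hv : v ∈ W) (hw : w ∈ W) :
    spn F u v w ≤ W := by
  simp only [spn, sup_le_iff, Submodule.span_singleton_le_iff_mem]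
  exact ⟨⟨hu, hv⟩, hw⟩

lemma spn_shear (s : F) (u v w : V) : spn F (u + s • w) v w = spn F u v w := by
  apply le_antisymm
  · exact spn_le (add_mem (mem_spn_left _ _ _) (Submodule.smul_mem _ _ (mem_spn_right _ _ _)))
      (mem_spn_mid _ _ _) (mem_spn_right _ _ _)
  · refine spn_le ?_ (mem_spn_mid _ _ _) (mem_spn_right _ _ _)
    have := sub_mem (mem_spn_left (F := F) (u + s • w) v w)
      (Submodule.smul_mem _ s (mem_spn_right (F := F) (u + s • w) v w))
    simpa using this

/-- The indicator function of the triples that span a member of `S`. -/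
def ind (S : Finset (AffineSubspace F V)) (x u v w : V) : ℝ := if flat F x u v w ∈ S then 1 else 0

lemma ind_spanInvariant (S : Finset (AffineSubspace F V)) (x : V) :
    SpanInvariant F (ind S x) where
  idem u v w := by unfold ind; split_ifs <;> simp
  swap₁₂ u v w := by
    have : flat F x v u w = flat F x u v w := by
      rw [flat, flat, spn, spn, sup_comm (Submodule.span F {v})]
    simp only [ind, this]
  swap₂₃ u v w := by
    have : flat F x u w v = flat F x u v w := by rw [flat, flat, spn, spn, sup_right_comm]
    simp only [ind, this]
  shear s u v w := by
    have : flat F x (u + s • w) v w = flat F x u v w := by rw [flat, flat, spn_shear]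
    simp only [ind, this]

lemma ind_nonneg (S : Finset (AffineSubspace F V)) (x u v w : V) : 0 ≤ ind S x u v w := by
  unfold ind; split_ifs <;> simp

variable [Module.Finite F V]

lemma finrank_sup_singleton (p : Submodule F V) (v : V) :
    Module.finrank F (p ⊔ Submodule.span F {v} : Submodule F V)
      = Module.finrank F p + if v ∈ p then 0 else 1 := by
  split_ifs with h
  · rw [sup_eq_left.mpr (by simpa using h), add_zero]
  · exact Submodule.finrank_sup_span_singleton h

lemma finrank_span_one (u : V) :
    Module.finrank F (Submodule.span F {u}) = if u = 0 then 0 else 1 := by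
  have := finrank_sup_singleton (F := F) ⊥ u
  rw [bot_sup_eq, finrank_bot, zero_add] at this
  simpa only [Submodule.mem_bot] using this

lemma finrank_spn_eq (u v w : V) : Module.finrank F (spn F u v w) =
    (if u = 0 then 0 else 1) + (if v ∈ Submodule.span F {u} then 0 else 1)
      + (if w ∈ Submodule.span F {u} ⊔ Submodule.span F {v} then 0 else 1) := by
  rw [spn, finrank_sup_singleton, finrank_sup_singleton, finrank_span_one]

lemma finrank_spn_eq_three_iff (u v w : V) : Module.finrank F (spn F u v w) = 3 ↔
    u ≠ 0 ∧ v ∉ Submodule.span F {u} ∧ w ∉ Submodule.span F {u} ⊔ Submodule.span F {v} := by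
  rw [finrank_spn_eq]
  split_ifs <;> simp_all

variable [Fintype F] [Fintype V]

omit [Module.Finite F V] in
lemma cnt_mem (A : Submodule F V) :
    cnt (fun v => v ∈ A) = (Fintype.card F : ℝ) ^ Module.finrank F A := by
  have h1 : Fintype.card A = Fintype.card F ^ Module.finrank F A := Module.card_eq_pow_finrank
  rw [cnt, ← Fintype.card_subtype]
  exact_mod_cast h1

omit [Module.Finite F V] in
lemma cnt_diff {A B : Submodule F V} (h : A ≤ B) : cnt (fun v => v ∈ B ∧ v ∉ A)
    = (Fintype.card F : ℝ) ^ Module.finrank F B - (Fintype.card F : ℝ) ^ Module.finrank F A := by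
  rw [← cnt_mem, ← cnt_mem, eq_sub_iff_add_eq]
  simp only [cnt_eq_sum, ← Finset.sum_add_distrib]
  refine Finset.sum_congr rfl fun v _ => ?_
  by_cases h1 : v ∈ A
  · simp [h1, h h1]
  · by_cases h2 : v ∈ B <;> simp [h1, h2]

/-- The number of ways to complete a nonzero vector to a basis of a three-dimensional space. -/
def kap (F : Type) [Fintype F] : ℝ :=
  ((Fintype.card F : ℝ) ^ 3 - Fintype.card F) * ((Fintype.card F : ℝ) ^ 3 - Fintype.card F ^ 2)

lemma sum_spn_eq {W : Submodule F V} (hW : Module.finrank F W = 3) (u : V) :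
    ∑ v, ∑ w, (if spn F u v w = W then (1 : ℝ) else 0)
      = if u ∈ W ∧ u ≠ 0 then kap F else 0 := by
  split_ifs with hu
  · have h1 : ∀ v, ∑ w, (if spn F u v w = W then (1 : ℝ) else 0)
        = (if v ∈ W ∧ v ∉ Submodule.span F {u} then (1 : ℝ) else 0)
          * ((Fintype.card F : ℝ) ^ 3 - Fintype.card F ^ 2) := by
      intro v
      split_ifs with hv
      · have hle : Submodule.span F {u} ⊔ Submodule.span F {v} ≤ W := by
          simp only [sup_le_iff, Submodule.span_singleton_le_iff_mem]; exact ⟨hu.1, hv.1⟩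
        have h2 := cnt_diff hle
        rw [hW, finrank_sup_singleton, finrank_span_one, if_neg hu.2, if_neg hv.2,
          cnt_eq_sum'] at h2
        rw [one_mul, ← h2]
        refine Finset.sum_congr rfl fun w _ => ?_
        congr 1
        rw [eq_iff_iff]
        constructor
        · intro h
          refine ⟨h ▸ mem_spn_right u v w, ?_⟩
          rw [← h] at hW
          exact ((finrank_spn_eq_three_iff u v w).mp hW).2.2
        · rintro ⟨h3, h4⟩
          refine Submodule.eq_of_le_of_finrank_eq (spn_le hu.1 hv.1 h3) ?_
          rw [hW, finrank_spn_eq_three_iff]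
          exact ⟨hu.2, hv.2, h4⟩
      · rw [zero_mul]
        refine Finset.sum_eq_zero fun w _ => if_neg fun h => hv ⟨?_, ?_⟩
        · rw [← h]; exact mem_spn_mid u v w
        rw [← h] at hW
        exact ((finrank_spn_eq_three_iff u v w).mp hW).2.1
    simp only [h1, ← Finset.sum_mul]
    rw [← cnt_eq_sum', cnt_diff (by simpa using hu.1), hW, finrank_span_one, if_neg hu.2, kap,
      pow_one]
  · refine Finset.sum_eq_zero fun v _ => Finset.sum_eq_zero fun w _ =>
      if_neg fun h => hu ⟨?_, ?_⟩
    · rw [← h]; exact mem_spn_left u v w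
    rw [← h] at hW
    exact ((finrank_spn_eq_three_iff u v w).mp hW).1

omit [Module.Finite F V] [Fintype F] [Fintype V] in
lemma flat_eq_iff {x : V} {C : AffineSubspace F V} (hx : x ∈ C) (u v w : V) :
    flat F x u v w = C ↔ spn F u v w = C.direction := by
  constructor
  · rintro rfl; simp [flat]
  · intro h; rw [flat, h, AffineSubspace.mk'_eq hx]

/-- The sum of `ψ` over the nonzero vectors of `W`. -/
def sumDir (W : Submodule F V) (ψ : V → ℝ) : ℝ := ∑ u, if u ∈ W ∧ u ≠ 0 then ψ u else 0

/-- Double counting: each pair of a three-dimensional flat and a nonzero vector of its direction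
comes from exactly `kap F` spanning triples. -/
lemma sum_flat {S : Finset (AffineSubspace F V)} {x : V}
    (hS : ∀ C ∈ S, x ∈ C ∧ Module.finrank F C.direction = 3) (φ : AffineSubspace F V → V → ℝ) :
    ∑ u, ∑ v, ∑ w, ind S x u v w * φ (flat F x u v w) u
      = kap F * ∑ C ∈ S, sumDir C.direction (φ C) := by
  simp only [sumDir]
  have h1 : ∀ u v w, ind S x u v w * φ (flat F x u v w) u
      = ∑ C ∈ S, φ C u * if spn F u v w = C.direction then (1 : ℝ) else 0 := by
    intro u v w
    have : ∀ C ∈ S, (φ C u * if spn F u v w = C.direction then (1 : ℝ) else 0)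
        = if flat F x u v w = C then φ (flat F x u v w) u else 0 := by
      intro C hC
      by_cases h : flat F x u v w = C
      · rw [if_pos h, if_pos ((flat_eq_iff (hS C hC).1 _ _ _).mp h), h, mul_one]
      · rw [if_neg h, if_neg fun h1 => h ((flat_eq_iff (hS C hC).1 _ _ _).mpr h1), mul_zero]
    rw [Finset.sum_congr rfl this, Finset.sum_ite_eq, ind]
    split_ifs <;> simp
  simp only [h1]
  have h2 : ∀ u, ∑ v, ∑ w, ∑ C ∈ S, φ C u * (if spn F u v w = C.direction then (1 : ℝ) else 0)
      = ∑ C ∈ S, kap F * if u ∈ C.direction ∧ u ≠ 0 then φ C u else 0 := by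
    intro u
    have : ∀ v, ∑ w, ∑ C ∈ S, φ C u * (if spn F u v w = C.direction then (1 : ℝ) else 0)
      = ∑ C ∈ S, ∑ w, φ C u * (if spn F u v w = C.direction then (1 : ℝ) else 0) :=
      fun v => Finset.sum_comm
    simp only [this]
    rw [Finset.sum_comm]
    refine Finset.sum_congr rfl fun C hC => ?_
    simp only [← Finset.mul_sum]
    rw [sum_spn_eq (hS C hC).2]
    split_ifs <;> ring
  simp only [h2]
  rw [Finset.sum_comm, Finset.mul_sum]
  simp only [Finset.mul_sum]

omit [Module.Finite F V] in
lemma sum_nonzero_direction {W : Submodule F V} (hW : Module.finrank F W = 3) :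
    sumDir W (fun _ => 1) = (Fintype.card F : ℝ) ^ 3 - 1 := by
  rw [sumDir]
  have := cnt_diff (bot_le : ⊥ ≤ W)
  rw [hW, finrank_bot, pow_zero, cnt_eq_sum'] at this
  simpa using this

/-- The total number of triples spanning a member of `S`. -/
lemma sum_ind {S : Finset (AffineSubspace F V)} {x : V}
    (hS : ∀ C ∈ S, x ∈ C ∧ Module.finrank F C.direction = 3) :
    ∑ u, ∑ v, ∑ w, ind S x u v w = kap F * (S.card * ((Fintype.card F : ℝ) ^ 3 - 1)) := by
  have h := sum_flat hS (fun _ _ => 1)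
  simp only [mul_one] at h
  rw [h, Finset.sum_congr rfl fun C hC => sum_nonzero_direction (hS C hC).2,
    Finset.sum_const, nsmul_eq_mul]

/-- At least an eighth of all triples of vectors span a three-dimensional space. -/
lemma le_sum_ind_all {S : Finset (AffineSubspace F V)} {x : V} (hn : 4 ≤ Module.finrank F V)
    (hS : ∀ C : AffineSubspace F V, x ∈ C → Module.finrank F C.direction = 3 → C ∈ S) :
    (Fintype.card V : ℝ) ^ 3 / 8 ≤ ∑ u, ∑ v, ∑ w, ind S x u v w := by
  set q : ℝ := (Fintype.card F : ℝ) with hq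
  set N : ℝ := (Fintype.card V : ℝ) with hN
  have hq2 : 2 ≤ q := by rw [hq]; exact_mod_cast Fintype.one_lt_card
  have hNq : q ^ 4 ≤ N := by
    have h : Fintype.card V = Fintype.card F ^ Module.finrank F V := Module.card_eq_pow_finrank
    have : N = q ^ Module.finrank F V := by rw [hN, h]; push_cast; rfl
    rw [this]; exact pow_le_pow_right₀ (by linarith) hn
  have hNtop : q ^ Module.finrank F (⊤ : Submodule F V) = N := by
    rw [← cnt_mem]; simp [cnt, hN]
  have hcompl : ∀ A : Submodule F V, cnt (fun v => v ∉ A) = N - q ^ Module.finrank F A := by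
    intro A
    have := cnt_diff (le_top : A ≤ ⊤)
    rw [← hq, hNtop] at this
    simpa using this
  have hbig : ∀ k ≤ 2, N / 2 ≤ N - q ^ k := by
    intro k hk
    have h1 : q ^ k ≤ q ^ 2 := pow_le_pow_right₀ (by linarith) hk
    have h2 : 4 ≤ q ^ 2 := by nlinarith
    have h3 : q ^ 4 = q ^ 2 * q ^ 2 := by ring
    nlinarith
  have hN0 : 0 ≤ N := by positivity
  have hw : ∀ u v, (if u ≠ 0 ∧ v ∉ Submodule.span F {u} then (1 : ℝ) else 0) * (N / 2)
      ≤ ∑ w, ind S x u v w := by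
    intro u v
    split_ifs with h
    · rw [one_mul]
      refine (hbig 2 le_rfl).trans ?_
      have h2 := hcompl (Submodule.span F {u} ⊔ Submodule.span F {v})
      rw [finrank_sup_singleton, finrank_span_one, if_neg h.1, if_neg h.2, cnt_eq_sum'] at h2
      rw [← h2]
      refine Finset.sum_le_sum fun w _ => ?_
      by_cases h3 : w ∉ Submodule.span F {u} ⊔ Submodule.span F {v}
      · rw [if_pos h3, ind, if_pos]
        refine hS _ (AffineSubspace.self_mem_mk' _ _) ?_
        rw [flat, AffineSubspace.direction_mk', finrank_spn_eq_three_iff]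
        exact ⟨h.1, h.2, h3⟩
      · rw [if_neg h3]; exact ind_nonneg _ _ _ _ _
    · rw [zero_mul]; exact Finset.sum_nonneg fun w _ => ind_nonneg _ _ _ _ _
  have hv : ∀ u : V, (if u ≠ 0 then (1 : ℝ) else 0) * (N / 2) * (N / 2)
      ≤ ∑ v, ∑ w, ind S x u v w := by
    intro u
    refine le_trans ?_ (Finset.sum_le_sum fun v _ => hw u v)
    rw [← Finset.sum_mul]
    refine mul_le_mul_of_nonneg_right ?_ (by positivity)
    split_ifs with h
    · rw [one_mul]
      refine (hbig 1 (by norm_num)).trans ?_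
      have h2 := hcompl (Submodule.span F {u})
      rw [finrank_span_one, if_neg h, cnt_eq_sum'] at h2
      rw [← h2]
      refine le_of_eq (Finset.sum_congr rfl fun v _ => ?_)
      simp [h]
    · rw [zero_mul]; exact Finset.sum_nonneg fun v _ => by split_ifs <;> simp
  refine le_trans ?_ (Finset.sum_le_sum fun u _ => hv u)
  rw [← Finset.sum_mul, ← Finset.sum_mul]
  have h1 : N / 2 ≤ ∑ u : V, if u ≠ 0 then (1 : ℝ) else 0 := by
    refine (hbig 0 (by norm_num)).trans ?_
    have h2 := hcompl ⊥
    rw [finrank_bot, cnt_eq_sum'] at h2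
    rw [← h2]
    simp
  have := mul_le_mul_of_nonneg_right h1 (by positivity : 0 ≤ N / 2 * (N / 2))
  nlinarith

end incidence

/-! ### The plurality function -/

section plurality

variable {F : Type} [Field F] {V : Type} [AddCommGroup V] [Module F V]

/-- The line through `x` in direction `u`. -/
def lineOf (F : Type) [Field F] {V : Type} [AddCommGroup V] [Module F V] (x u : V) :
    AffineSubspace F V :=
  AffineSubspace.mk' x (Submodule.span F {u})

lemma lineOf_le_iff {x : V} {C : AffineSubspace F V} (hx : x ∈ C) (u : V) :
    lineOf F x u ≤ C ↔ u ∈ C.direction := by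
  constructor
  · intro h
    have := AffineSubspace.direction_le h
    rw [lineOf, AffineSubspace.direction_mk'] at this
    exact this (Submodule.mem_span_singleton_self u)
  · intro h
    rw [← AffineSubspace.mk'_eq hx]
    intro z hz
    rw [lineOf, AffineSubspace.mem_mk'] at hz
    rw [AffineSubspace.mem_mk']
    exact (Submodule.span_singleton_le_iff_mem _ _).mpr h hz

variable [Fintype F] [Fintype V]

/-- Each line through `x` is spanned by `q - 1` nonzero vectors. -/
lemma sum_lineOf {L : Finset (AffineSubspace F V)} {x : V}
    (hL : ∀ ℓ, ℓ ∈ L ↔ x ∈ ℓ ∧ Module.finrank F ℓ.direction = 1) (ψ : AffineSubspace F V → ℝ) :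
    ∑ u, (if u ≠ 0 then ψ (lineOf F x u) else 0)
      = ((Fintype.card F : ℝ) - 1) * ∑ ℓ ∈ L, ψ ℓ := by
  have hmaps : ∀ u ∈ (Finset.univ : Finset V).filter (· ≠ 0), lineOf F x u ∈ L := by
    intro u hu
    rw [hL]
    refine ⟨AffineSubspace.self_mem_mk' _ _, ?_⟩
    rw [lineOf, AffineSubspace.direction_mk', finrank_span_one, if_neg (by simpa using hu)]
  rw [← Finset.sum_filter, ← Finset.sum_fiberwise_of_maps_to hmaps, Finset.mul_sum]
  refine Finset.sum_congr rfl fun ℓ hℓ => ?_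
  obtain ⟨hxℓ, hℓ1⟩ := (hL ℓ).mp hℓ
  rw [Finset.sum_congr rfl (g := fun _ => ψ ℓ)
    (fun u hu => by rw [(Finset.mem_filter.mp hu).2]), Finset.sum_const, nsmul_eq_mul]
  congr 1
  have h := cnt_diff (bot_le : ⊥ ≤ ℓ.direction)
  rw [hℓ1, finrank_bot, pow_zero, pow_one, cnt] at h
  rw [← h, Finset.filter_filter]
  congr 2
  ext u
  simp only [Finset.mem_filter, Finset.mem_univ, true_and, Submodule.mem_bot]
  constructor
  · rintro ⟨hu, rfl⟩
    refine ⟨?_, hu⟩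
    rw [← lineOf_le_iff hxℓ]
  · rintro ⟨hu, hu0⟩
    refine ⟨hu0, ?_⟩
    rw [← AffineSubspace.mk'_eq hxℓ, lineOf]
    congr 1
    refine Submodule.eq_of_le_of_finrank_eq (by simpa using hu) ?_
    rw [hℓ1, finrank_span_one, if_neg hu0]

/-- On each line through `x` the function `f` copies a `T C₀` whose number of disagreements with
the cubes of `S` through that line is at most average; the resulting function disagrees with few of
the `T C`. -/
lemma exists_plurality {S L : Finset (AffineSubspace F V)} {x : V}
    (hS : ∀ C ∈ S, x ∈ C ∧ Module.finrank F C.direction = 3)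
    (hL : ∀ ℓ, ℓ ∈ L ↔ x ∈ ℓ ∧ Module.finrank F ℓ.direction = 1)
    (T : AffineSubspace F V → V → F) {γ : ℝ}
    (hγ : ∑ C₁ ∈ S, ∑ ℓ ∈ L.filter (· ≤ C₁),
        (((S.filter fun C₂ => ℓ ≤ C₂ ∧ ¬ ∀ z, z ∈ ℓ → T C₁ z = T C₂ z).card : ℝ)
          / ((S.filter fun C₂ => ℓ ≤ C₂).card : ℝ))
      ≤ γ * ∑ C ∈ S, ((L.filter (· ≤ C)).card : ℝ)) :
    ∃ f : V → F, ∑ C ∈ S, sumDir C.direction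
        (fun u => if T C (x + u) ≠ f (x + u) then (1 : ℝ) else 0)
      ≤ γ * (S.card * ((Fintype.card F : ℝ) ^ 3 - 1)) := by
  set bad : AffineSubspace F V → AffineSubspace F V → ℝ := fun C₁ ℓ =>
    ((S.filter fun C₂ => ℓ ≤ C₂ ∧ ¬ ∀ z, z ∈ ℓ → T C₁ z = T C₂ z).card : ℝ) with hbad
  set avg : AffineSubspace F V → ℝ := fun ℓ =>
    ∑ C ∈ S.filter (fun C => ℓ ≤ C), bad C ℓ / ((S.filter fun C₂ => ℓ ≤ C₂).card : ℝ) with havg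
  have hq1 : 0 ≤ (Fintype.card F : ℝ) - 1 := by
    have : (1 : ℝ) ≤ Fintype.card F := by exact_mod_cast Fintype.card_pos
    linarith
  have hswap : ∀ g : AffineSubspace F V → AffineSubspace F V → ℝ,
      ∑ C ∈ S, ∑ ℓ ∈ L.filter (· ≤ C), g C ℓ = ∑ ℓ ∈ L, ∑ C ∈ S.filter (fun C => ℓ ≤ C), g C ℓ := by
    intro g
    simp only [Finset.sum_filter]
    exact Finset.sum_comm
  have h1 : ∑ ℓ ∈ L, avg ℓ ≤ γ * ∑ ℓ ∈ L, ((S.filter fun C₂ => ℓ ≤ C₂).card : ℝ) := by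
    rw [hswap] at hγ
    refine hγ.trans (le_of_eq ?_)
    congr 1
    have := hswap fun _ _ => 1
    simpa using this
  have hex : ∀ ℓ, ∃ C₀, bad C₀ ℓ ≤ avg ℓ := by
    intro ℓ
    rcases (S.filter fun C₂ => ℓ ≤ C₂).eq_empty_or_nonempty with h | h
    · -- no cube of `S` contains `ℓ`, and any choice will do
      refine ⟨⊥, ?_⟩
      rw [havg, hbad]
      simp only [h, Finset.sum_empty, ← Finset.filter_filter, Finset.filter_empty,
        Finset.card_empty, Nat.cast_zero, le_refl]
    · obtain ⟨C₀, -, hC₀⟩ := Finset.exists_le_of_sum_le (s := S.filter fun C₂ => ℓ ≤ C₂)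
        (f := fun C => bad C ℓ) (g := fun _ => avg ℓ) h (by
          rw [Finset.sum_const, nsmul_eq_mul, havg]
          simp only [← Finset.sum_div]
          rw [mul_div_cancel₀]
          exact_mod_cast h.card_pos.ne')
      exact ⟨C₀, hC₀⟩
  choose c hc using hex
  refine ⟨fun z => T (c (lineOf F x (z - x))) z, ?_⟩
  simp only [sumDir]
  rw [Finset.sum_comm]
  have h2 : ∀ u, ∑ C ∈ S, (if u ∈ C.direction ∧ u ≠ 0 then
      (if T C (x + u) ≠ T (c (lineOf F x (x + u - x))) (x + u) then (1 : ℝ) else 0) else 0)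
      ≤ if u ≠ 0 then avg (lineOf F x u) else 0 := by
    intro u
    rw [add_sub_cancel_left]
    split_ifs with hu
    · refine le_trans ?_ (hc (lineOf F x u))
      rw [hbad]
      simp only
      rw [Finset.card_filter]
      push_cast
      refine Finset.sum_le_sum fun C hC => ?_
      rw [← ite_and]
      by_cases h : (u ∈ C.direction ∧ u ≠ 0) ∧ T C (x + u) ≠ T (c (lineOf F x u)) (x + u)
      · rw [if_pos h, if_pos]
        refine ⟨(lineOf_le_iff (hS C hC).1 u).mpr h.1.1, fun hall => h.2 ?_⟩
        refine (hall (x + u) ?_).symm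
        rw [lineOf, AffineSubspace.mem_mk']
        simp
      · rw [if_neg h]; split_ifs <;> simp
    · refine le_of_eq (Finset.sum_eq_zero fun C _ => if_neg fun h => hu h.2)
  refine (Finset.sum_le_sum fun u _ => h2 u).trans ?_
  rw [sum_lineOf hL]
  refine (mul_le_mul_of_nonneg_left h1 hq1).trans (le_of_eq ?_)
  rw [mul_left_comm]
  congr 1
  rw [← sum_lineOf hL fun ℓ => ((S.filter fun C₂ => ℓ ≤ C₂).card : ℝ)]
  have h3 : ∀ u : V, (if u ≠ 0 then ((S.filter fun C₂ => lineOf F x u ≤ C₂).card : ℝ) else 0)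
      = ∑ C ∈ S, if u ∈ C.direction ∧ u ≠ 0 then (1 : ℝ) else 0 := by
    intro u
    by_cases hu : u ≠ 0
    · rw [if_pos hu, Finset.card_filter]
      push_cast
      refine Finset.sum_congr rfl fun C hC => ?_
      have := lineOf_le_iff (hS C hC).1 u
      simp only [this, hu, ne_eq, not_false_eq_true, and_true]
    · rw [if_neg hu]
      exact (Finset.sum_eq_zero fun C _ => if_neg fun h => hu h.2).symm
  simp only [h3]
  rw [Finset.sum_comm]
  change ∑ C ∈ S, sumDir C.direction (fun _ => 1) = _
  rw [Finset.sum_congr rfl fun C hC => sum_nonzero_direction (hS C hC).2,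
    Finset.sum_const, nsmul_eq_mul]

end plurality

/-! ### Predictions from the plurality function -/

section test

variable {F : Type} [Field F] [Fintype F] {V : Type} [AddCommGroup V] [Module F V] [Fintype V]

omit [Fintype F] in
lemma sum_ind_eq (S : Finset (AffineSubspace F V)) (x : V) :
    ∑ ω : V × V × V, ind S x ω.1 ω.2.1 ω.2.2 = ∑ u, ∑ v, ∑ w, ind S x u v w := by
  simp only [Fintype.sum_prod_type]

/-- The number of triples that span a member of `S` and extend a pair in `P` is the expected one,
up to a constant factor and an additive error of a `1 / q` fraction of all triples. -/
lemma mixing {S : Finset (AffineSubspace F V)} {x : V} {M : ℝ}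
    (hM : M = ∑ u, ∑ v, ∑ w, ind S x u v w) (hM0 : 0 < M) (P : V → V → Prop)
    [∀ u v, Decidable (P u v)] :
    M / (Fintype.card V : ℝ) ^ 2 / 2 * (∑ u, ∑ v, if P u v then (1 : ℝ) else 0)
        ≤ (∑ u, ∑ v, ∑ w, if P u v then ind S x u v w else 0)
          + (Fintype.card V : ℝ) ^ 3 / Fintype.card F ∧
    (∑ u, ∑ v, ∑ w, if P u v then ind S x u v w else 0)
      ≤ 3 / 2 * (M / (Fintype.card V : ℝ) ^ 2) * (∑ u, ∑ v, if P u v then (1 : ℝ) else 0)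
          + (Fintype.card V : ℝ) ^ 3 / Fintype.card F := by
  set N : ℝ := (Fintype.card V : ℝ) with hN
  set q : ℝ := (Fintype.card F : ℝ) with hq
  have hN0 : 0 < N := by rw [hN]; exact_mod_cast Fintype.card_pos
  have hq0 : 0 < q := by rw [hq]; exact_mod_cast Fintype.card_pos
  set m : ℝ := M / N ^ 2 with hm
  have hm0 : 0 < m := by positivity
  set b : V → V → ℝ := fun u v => ∑ w, ind S x u v w - m with hb
  have hvar := (ind_spanInvariant S x).sum_plane_sq_le b (fun u v => by
    rw [sum_ind_eq, ← hM])
  rw [sum_ind_eq, ← hM, ← hN, ← hq] at hvar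
  have hvar' : ∑ u, ∑ v, b u v ^ 2 / (2 * m) ≤ N ^ 3 / q := by
    simp only [← Finset.sum_div]
    rw [div_le_div_iff₀ (by positivity) hq0, hm]
    have : N ^ 3 * (2 * (M / N ^ 2)) = 2 * N * M := by field_simp
    rw [this]; linarith
  have habs : ∀ u v, |b u v| ≤ m / 2 + b u v ^ 2 / (2 * m) := by
    intro u v
    have h : m / 2 + b u v ^ 2 / (2 * m) = (m ^ 2 + |b u v| ^ 2) / (2 * m) := by
      rw [sq_abs]; field_simp
    rw [h, le_div_iff₀ (by positivity)]
    nlinarith [sq_nonneg (m - |b u v|)]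
  have hpull : ∀ u v, (∑ w, if P u v then ind S x u v w else 0) = if P u v then m + b u v else 0 := by
    intro u v
    split_ifs with h
    · rw [hb]; ring
    · simp
  simp only [hpull]
  have hsq : ∀ u v, 0 ≤ b u v ^ 2 / (2 * m) := fun u v => by positivity
  constructor
  · refine le_trans ?_ (add_le_add_right hvar' _)
    simp only [Finset.mul_sum, ← Finset.sum_add_distrib]
    refine Finset.sum_le_sum fun u _ => Finset.sum_le_sum fun v _ => ?_
    have := abs_le.mp (habs u v)
    have := hsq u v
    split_ifs <;> linarith
  · refine le_trans ?_ (add_le_add_right hvar' _)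
    simp only [Finset.mul_sum, ← Finset.sum_add_distrib]
    refine Finset.sum_le_sum fun u _ => Finset.sum_le_sum fun v _ => ?_
    have := abs_le.mp (habs u v)
    have := hsq u v
    split_ifs <;> linarith

omit [Fintype F] [Fintype V] in
lemma flat_shear₁₂ (x : V) (s : F) (u v w : V) : flat F x (u + s • v) v w = flat F x u v w := by
  have h : ∀ a b c : V, spn F a b c = spn F a c b := fun a b c => by rw [spn, spn, sup_right_comm]
  rw [flat, flat, h, spn_shear, h]

end test

section test

variable {F : Type} [Field F] [Fintype F] {n d : ℕ}

/-- Prediction of `f` along a line from `d + 1` of its points fails only if `f` errs, within a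
given cube, at one of the `d + 2` points involved. -/
lemma sum_fail_le {S : Finset (AffineSubspace F (Fin n → F))} {x : Fin n → F}
    (T : AffineSubspace F (Fin n → F) → (Fin n → F) → F)
    (hT : ∀ C ∈ S, ∃ p : MvPolynomial (Fin n) F, p.totalDegree ≤ d ∧ ∀ z ∈ C, T C z = eval z p)
    (f : (Fin n → F) → F) {E : ℝ}
    (hf : ∑ u, ∑ v, ∑ w, ind S x u v w *
      (if T (flat F x u v w) (x + u) ≠ f (x + u) then (1 : ℝ) else 0) ≤ E)
    (s : Finset F) (hs : s.card = d + 1) (hs0 : 0 ∉ s) :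
    ∑ u, ∑ v, ∑ w, (if f (x + u) ≠ interp s f (x + u) v then ind S x u v w else 0)
      ≤ (d + 2) * E := by
  have hpt : ∀ u v w, (if f (x + u) ≠ interp s f (x + u) v then ind S x u v w else 0)
      ≤ ∑ t ∈ insert 0 s, ind S x u v w *
        (if T (flat F x u v w) (x + (u + t • v)) ≠ f (x + (u + t • v)) then (1 : ℝ) else 0) := by
    intro u v w
    have hnn : ∀ t ∈ insert 0 s, 0 ≤ ind S x u v w *
        (if T (flat F x u v w) (x + (u + t • v)) ≠ f (x + (u + t • v)) then (1 : ℝ) else 0) :=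
      fun t _ => mul_nonneg (ind_nonneg _ _ _ _ _) (by split_ifs <;> simp)
    split_ifs with hfail
    swap
    · exact Finset.sum_nonneg hnn
    by_cases hK : flat F x u v w ∈ S
    swap
    · refine le_trans (le_of_eq ?_) (Finset.sum_nonneg hnn)
      rw [ind, if_neg hK]
    obtain ⟨p, hp, hpT⟩ := hT _ hK
    have hmem : ∀ t : F, x + (u + t • v) ∈ flat F x u v w := by
      intro t
      rw [flat, AffineSubspace.mem_mk', vsub_eq_sub, add_sub_cancel_left]
      exact add_mem (mem_spn_left _ _ _) (Submodule.smul_mem _ _ (mem_spn_mid _ _ _))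
    have hex : ∃ t ∈ insert 0 s, T (flat F x u v w) (x + (u + t • v)) ≠ f (x + (u + t • v)) := by
      by_contra! hall
      apply hfail
      have h1 : ∀ t ∈ insert 0 s, f (x + (u + t • v)) = (lineRestr p (x + u) v).eval t := by
        intro t ht
        rw [← hall t ht, hpT _ (hmem t), eval_lineRestr, add_assoc]
      have h0 := h1 0 (Finset.mem_insert_self _ _)
      rw [zero_smul, add_zero] at h0
      rw [h0, eval_zero_eq_sum_lagWeight s _
        (by rw [hs]; exact Nat.lt_succ_of_le ((natDegree_lineRestr _ _ _).trans hp)), interp]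
      refine Finset.sum_congr rfl fun t ht => ?_
      rw [← h1 t (Finset.mem_insert_of_mem ht), add_assoc]
    obtain ⟨t, ht, hne⟩ := hex
    refine le_trans (le_of_eq ?_) (Finset.single_le_sum hnn ht)
    rw [if_pos hne, mul_one]
  have htrans : ∀ t : F, ∑ u, ∑ v, ∑ w, ind S x u v w *
        (if T (flat F x u v w) (x + (u + t • v)) ≠ f (x + (u + t • v)) then (1 : ℝ) else 0) ≤ E := by
    intro t
    refine le_trans (le_of_eq ?_) hf
    have h := sum_translate (fun u v w => ind S x u v w *
      (if T (flat F x u v w) (x + u) ≠ f (x + u) then (1 : ℝ) else 0)) (fun v _ => t • v)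
    simp only [Fintype.sum_prod_type, flat_shear₁₂, (ind_spanInvariant S x).shear₁₂] at h
    exact h
  calc _ ≤ ∑ u, ∑ v, ∑ w, ∑ t ∈ insert 0 s, ind S x u v w *
        (if T (flat F x u v w) (x + (u + t • v)) ≠ f (x + (u + t • v)) then (1 : ℝ) else 0) :=
        Finset.sum_le_sum fun u _ => Finset.sum_le_sum fun v _ => Finset.sum_le_sum fun w _ =>
          hpt u v w
    _ = ∑ t ∈ insert 0 s, ∑ u, ∑ v, ∑ w, ind S x u v w *
        (if T (flat F x u v w) (x + (u + t • v)) ≠ f (x + (u + t • v)) then (1 : ℝ) else 0) := by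
        simp only [Finset.sum_comm (t := insert 0 s)]
    _ ≤ ∑ t ∈ insert 0 s, E := Finset.sum_le_sum fun t _ => htrans t
    _ = (d + 2) * E := by
        rw [Finset.sum_const, Finset.card_insert_of_notMem hs0, hs, nsmul_eq_mul]
        push_cast; ring

/-- A polynomial of degree at most `d` that does not vanish identically on a cube through `x`
vanishes on few of its points: average over the lines through a point of non-vanishing. -/
lemma cnt_zero_le {C : AffineSubspace F (Fin n → F)} {x : Fin n → F} (hx : x ∈ C)
    (hC : Module.finrank F C.direction = 3) (p : MvPolynomial (Fin n) F) (hp : p.totalDegree ≤ d)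
    {z₀ : Fin n → F} (hz : z₀ ∈ C) (hz0 : eval z₀ p ≠ 0) :
    ((Fintype.card F : ℝ) - 1) * cnt (fun u => u ∈ C.direction ∧ eval (x + u) p = 0)
      ≤ d * ((Fintype.card F : ℝ) ^ 3 - 1) := by
  set Z := cnt (fun u => u ∈ C.direction ∧ eval (x + u) p = 0) with hZ
  have hxz : z₀ - x ∈ C.direction := by
    rw [← vsub_eq_sub]; exact AffineSubspace.vsub_mem_direction hz hx
  have h1 : ∀ t ∈ Finset.univ.erase (0 : F),
      Z ≤ cnt (fun w => (w ∈ C.direction ∧ w ≠ 0) ∧ eval (z₀ + t • w) p = 0) := by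
    intro t ht
    have ht0 : t ≠ 0 := Finset.ne_of_mem_erase ht
    have hinj : Function.Injective fun u : Fin n → F => t⁻¹ • (u - (z₀ - x)) := by
      intro a b h
      exact sub_left_injective (smul_right_injective _ (inv_ne_zero ht0) h)
    refine le_trans (cnt_mono fun u hu => ?_) (cnt_comp_le _ hinj)
    have he : z₀ + t • t⁻¹ • (u - (z₀ - x)) = x + u := by
      rw [smul_inv_smul₀ ht0]; abel
    rw [he]
    refine ⟨⟨Submodule.smul_mem _ _ (sub_mem hu.1 hxz), fun h0 => hz0 ?_⟩, hu.2⟩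
    rw [h0, smul_zero, add_zero] at he
    rw [he, hu.2]
  have h2 := Finset.card_nsmul_le_sum _ _ _ h1
  rw [Finset.card_erase_of_mem (Finset.mem_univ _), Finset.card_univ, nsmul_eq_mul,
    Nat.cast_sub Fintype.card_pos, Nat.cast_one] at h2
  refine h2.trans ?_
  rw [← sum_nonzero_direction hC, sumDir, Finset.mul_sum]
  simp only [cnt_eq_sum]
  rw [Finset.sum_comm]
  refine Finset.sum_le_sum fun w _ => ?_
  by_cases hw : w ∈ C.direction ∧ w ≠ 0
  · rw [if_pos hw, mul_one]
    simp only [hw, true_and, ne_eq, not_false_eq_true]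
    rw [Finset.sum_boole]
    have hne : lineRestr p z₀ w ≠ 0 := by
      intro h
      apply hz0
      have := eval_lineRestr p z₀ w 0
      rw [h, zero_smul, add_zero, Polynomial.eval_zero] at this
      exact this.symm
    have h3 : ((Finset.univ.erase (0 : F)).filter fun t => eval (z₀ + t • w) p = 0)
        ⊆ (lineRestr p z₀ w).roots.toFinset := by
      intro t ht
      rw [Multiset.mem_toFinset, Polynomial.mem_roots hne, Polynomial.IsRoot, eval_lineRestr]
      exact (Finset.mem_filter.mp ht).2
    have h4 := (Finset.card_le_card h3).trans ((Multiset.toFinset_card_le _).trans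
      ((Polynomial.card_roots' _).trans ((natDegree_lineRestr _ _ _).trans hp)))
    exact_mod_cast h4
  · rw [if_neg hw, mul_zero]
    exact le_of_eq (Finset.sum_eq_zero fun t _ => if_neg fun h => hw h.1)

end test

/-! ### The global polynomial -/

section global

variable {F : Type} [Field F] [Fintype F] {n d : ℕ}

set_option maxHeartbeats 1000000 in
/-- The degree-`d` polynomial obtained by self-correcting a function that agrees with most of the
`T C`, at most points, agrees with most of the `T C` everywhere. -/
lemma exists_global {S : Finset (AffineSubspace F (Fin n → F))} {x : Fin n → F} (hd : 1 ≤ d)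
    (hq : 1000 * d ≤ Fintype.card F)
    (hS : ∀ C ∈ S, x ∈ C ∧ Module.finrank F C.direction = 3)
    (T : AffineSubspace F (Fin n → F) → (Fin n → F) → F)
    (hT : ∀ C ∈ S, ∃ p : MvPolynomial (Fin n) F, p.totalDegree ≤ d ∧ ∀ z ∈ C, T C z = eval z p)
    (hS0 : S.Nonempty)
    (hM : (Fintype.card (Fin n → F) : ℝ) ^ 3 / Fintype.card F
      ≤ kap F * (S.card * ((Fintype.card F : ℝ) ^ 3 - 1)) / (250000 * (d : ℝ) ^ 6))
    (f : (Fin n → F) → F)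
    (hf : ∑ C ∈ S, sumDir C.direction
        (fun u => if T C (x + u) ≠ f (x + u) then (1 : ℝ) else 0)
      ≤ gam d * (S.card * ((Fintype.card F : ℝ) ^ 3 - 1))) :
    ∃ g : MvPolynomial (Fin n) F, g.totalDegree ≤ d ∧
      ((S.filter fun C => ¬ ∀ z, z ∈ C → T C z = eval z g).card : ℝ)
        ≤ 2 * Real.sqrt (gam d) * S.card := by
  set N : ℝ := (Fintype.card (Fin n → F) : ℝ) with hN
  set q : ℝ := (Fintype.card F : ℝ) with hqdef
  set D : ℝ := (d : ℝ) with hD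
  have hD1 : 1 ≤ D := by rw [hD]; exact_mod_cast hd
  have hqD : 1000 * D ≤ q := by rw [hqdef, hD]; exact_mod_cast hq
  have hq1000 : 1000 ≤ q := by linarith
  have hN0 : 0 < N := by rw [hN]; exact_mod_cast Fintype.card_pos
  have hq31 : 0 < q ^ 3 - 1 := by nlinarith [mul_pos (by linarith : 0 < q) (by linarith : 0 < q)]
  have hkap : 0 < kap F := by
    rw [kap, ← hqdef]
    have h1 : q ^ 3 - q = q * (q - 1) * (q + 1) := by ring
    have h2 : q ^ 3 - q ^ 2 = q ^ 2 * (q - 1) := by ring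
    have h3 : 0 < q - 1 := by linarith
    rw [h1, h2]; positivity
  have hScard : 0 < (S.card : ℝ) := by exact_mod_cast hS0.card_pos
  set M : ℝ := kap F * (S.card * (q ^ 3 - 1)) with hMdef
  have hM0 : 0 < M := by positivity
  have hMsum : M = ∑ u, ∑ v, ∑ w, ind S x u v w := (sum_ind hS).symm
  set γ := gam d with hγ
  have hγD : γ = 1 / (1000 * D ^ 3) := rfl
  have hferr : ∑ u, ∑ v, ∑ w, ind S x u v w *
      (if T (flat F x u v w) (x + u) ≠ f (x + u) then (1 : ℝ) else 0) ≤ γ * M := by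
    rw [sum_flat hS fun C u => if T C (x + u) ≠ f (x + u) then (1 : ℝ) else 0, hMdef,
      mul_left_comm]
    exact mul_le_mul_of_nonneg_left hf hkap.le
  set δ : ℝ := 2 * ((D + 2) * γ + 1 / (250000 * D ^ 6)) with hδ
  have hγ0 : 0 < γ := by rw [hγD]; positivity
  have hδ0 : 0 ≤ δ := by positivity
  have hδle : δ * D ^ 2 ≤ 7 / 1000 := by
    have h1 : δ * D ^ 2 = (D + 2) / D / 500 + 1 / (125000 * D ^ 4) := by
      rw [hδ, hγD]; field_simp; ring
    have h2 : (D + 2) / D ≤ 3 := by rw [div_le_iff₀ (by linarith)]; linarith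
    have h3 : 1 / (125000 * D ^ 4) ≤ 1 / 125000 := by
      apply one_div_le_one_div_of_le (by norm_num)
      nlinarith [one_le_pow₀ hD1 (n := 4)]
    rw [h1]; linarith
  set f' : (Fin n → F) → F := fun u => f (x + u) with hf'
  have hinterp : ∀ s u v, interp s f (x + u) v = interp s f' u v := by
    intro s u v
    simp only [interp, hf', add_assoc]
  -- predictions within the cubes mostly succeed, and by mixing so do predictions along all lines
  have htest : ∀ s : Finset F, s.card = d + 1 → 0 ∉ s →
      cnt (fun p : (Fin n → F) × (Fin n → F) => f' p.1 ≠ interp s f' p.1 p.2) ≤ δ * N ^ 2 := by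
    intro s hs hs0
    have h1 := sum_fail_le T hT f hferr s hs hs0
    have h2 := (mixing hMsum hM0 fun u v => f' u ≠ interp s f' u v).1
    simp only [hinterp] at h1
    rw [cnt_eq_sum', Fintype.sum_prod_type]
    rw [← hD] at h1
    rw [← hN, ← hqdef] at h2
    set Φ := ∑ u, ∑ v, (if f' u ≠ interp s f' u v then (1 : ℝ) else 0)
    have h3 : M / N ^ 2 / 2 * Φ ≤ (D + 2) * (γ * M) + M / (250000 * D ^ 6) := by
      refine h2.trans (add_le_add h1 hM)
    have h4 : M / (2 * N ^ 2) * Φ ≤ M / (2 * N ^ 2) * (δ * N ^ 2) := by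
      have e1 : M / (2 * N ^ 2) * Φ = M / N ^ 2 / 2 * Φ := by field_simp
      have e2 : M / (2 * N ^ 2) * (δ * N ^ 2) = (D + 2) * (γ * M) + M / (250000 * D ^ 6) := by
        rw [hδ]; field_simp
      rw [e1, e2]; exact h3
    exact le_of_mul_le_mul_left h4 (by positivity)
  have hδ1 : ((d : ℝ) + 1) * (4 * d + 9) * δ < 1 := by
    rw [← hD]
    have h1 : (D + 1) * (4 * D + 9) ≤ 26 * D ^ 2 := by nlinarith
    have := mul_le_mul_of_nonneg_right h1 hδ0
    nlinarith
  obtain ⟨G, hG, hGf⟩ := exists_selfCorrection (by omega) hδ0 hδ1 f' htest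
  rw [← hN] at hGf
  -- `G` is defined in coordinates centred at `x`
  obtain ⟨g, hgd, hg⟩ := exists_mvPoly_of_lines (d := d) (by omega) n (fun z => G (z - x)) (by
    intro y h
    refine exists_poly_of_lagWeight (by omega) _ fun τ s hs hs0 => ?_
    rw [hG s hs hs0 (y + τ • h - x) h, interp]
    refine Finset.sum_congr rfl fun t _ => ?_
    congr 2
    rw [add_smul]; abel)
  have hg' : ∀ u, eval (x + u) g = G u := fun u => by rw [hg, add_sub_cancel_left]
  refine ⟨g, hgd, ?_⟩
  set S' := S.filter fun C => ¬ ∀ z, z ∈ C → T C z = eval z g with hSbad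
  -- a cube on which `T C` is not `g` disagrees with `g` at half of its points
  have hhalf : ∀ C ∈ S', (q ^ 3 - 1) / 2 ≤ sumDir C.direction
      (fun u => if T C (x + u) ≠ eval (x + u) g then (1 : ℝ) else 0) := by
    intro C hC
    obtain ⟨hCS, hne⟩ := Finset.mem_filter.mp hC
    obtain ⟨hxC, hC3⟩ := hS C hCS
    obtain ⟨p, hp, hpT⟩ := hT C hCS
    push Not at hne
    obtain ⟨z₀, hz₀, hne⟩ := hne
    have h1 := cnt_zero_le hxC hC3 (p - g) ((totalDegree_sub _ _).trans (max_le hp hgd)) hz₀ (by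
      rw [map_sub, ← hpT z₀ hz₀]; exact sub_ne_zero.mpr hne)
    rw [← hqdef, ← hD] at h1
    have hq1 : 0 < q - 1 := by linarith
    have h2 : cnt (fun u => u ∈ C.direction ∧ eval (x + u) (p - g) = 0) ≤ (q ^ 3 - 1) / 2 := by
      refine le_of_mul_le_mul_left (h1.trans ?_) hq1
      have : D ≤ (q - 1) / 2 := by linarith
      have := mul_le_mul_of_nonneg_right this hq31.le
      linarith
    have h3 := sum_nonzero_direction (F := F) hC3
    rw [← hqdef] at h3
    have h4 : sumDir C.direction (fun _ => 1)
        ≤ sumDir C.direction (fun u => if T C (x + u) ≠ eval (x + u) g then (1 : ℝ) else 0)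
          + cnt (fun u => u ∈ C.direction ∧ eval (x + u) (p - g) = 0) := by
      rw [sumDir, sumDir, cnt_eq_sum', ← Finset.sum_add_distrib]
      refine Finset.sum_le_sum fun u _ => ?_
      by_cases hu : u ∈ C.direction
      · have hmem : x + u ∈ C := by
          have := AffineSubspace.vadd_mem_of_mem_direction hu hxC
          rwa [vadd_eq_add, add_comm] at this
        simp only [hu, true_and, map_sub, sub_eq_zero, ← hpT _ hmem]
        split_ifs <;> simp_all
      · simp [hu]
    linarith
  -- `f` differs from `g` at few points, hence, by mixing, at few points of most cubes
  have hZ := (mixing hMsum hM0 fun u _ => f' u ≠ G u).2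
  rw [← hN, ← hqdef] at hZ
  have hZcnt : ∑ u, ∑ _v : Fin n → F, (if f' u ≠ G u then (1 : ℝ) else 0) ≤ N * (2 * δ * N) := by
    simp only [Finset.sum_const, nsmul_eq_mul, Finset.card_univ, ← hN, ← Finset.mul_sum]
    rw [← cnt_eq_sum']
    exact mul_le_mul_of_nonneg_left hGf hN0.le
  have hZ' : (∑ u, ∑ v, ∑ w, if f' u ≠ G u then ind S x u v w else 0)
      ≤ 3 * δ * M + M / (250000 * D ^ 6) := by
    refine hZ.trans (add_le_add ?_ hM)
    have h1 : 0 ≤ 3 / 2 * (M / N ^ 2) := by positivity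
    refine (mul_le_mul_of_nonneg_left hZcnt h1).trans (le_of_eq ?_)
    field_simp
  have hgerr : ∑ u, ∑ v, ∑ w, ind S x u v w *
      (if T (flat F x u v w) (x + u) ≠ eval (x + u) g then (1 : ℝ) else 0)
      ≤ γ * M + (3 * δ * M + M / (250000 * D ^ 6)) := by
    refine le_trans ?_ (add_le_add hferr hZ')
    simp only [← Finset.sum_add_distrib]
    refine Finset.sum_le_sum fun u _ => Finset.sum_le_sum fun v _ => Finset.sum_le_sum fun w _ => ?_
    have h0 := ind_nonneg S x u v w
    have h1 : f' u = f (x + u) := rfl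
    rw [hg', h1]
    by_cases h2 : f (x + u) = G u
    · rw [h2]; simp
    · rw [if_pos h2]
      split_ifs <;> linarith
  rw [sum_flat hS fun C u => if T C (x + u) ≠ eval (x + u) g then (1 : ℝ) else 0] at hgerr
  have hlow : S'.card * ((q ^ 3 - 1) / 2) ≤ ∑ C ∈ S, sumDir C.direction
      (fun u => if T C (x + u) ≠ eval (x + u) g then (1 : ℝ) else 0) := by
    have h1 := Finset.card_nsmul_le_sum _ _ _ hhalf
    rw [nsmul_eq_mul] at h1
    refine h1.trans (Finset.sum_le_sum_of_subset_of_nonneg (Finset.filter_subset _ _) ?_)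
    intro C _ _
    refine Finset.sum_nonneg fun u _ => ?_
    dsimp only
    split_ifs <;> simp
  have hfin : (S'.card : ℝ) ≤ 2 * (γ + 3 * δ + 1 / (250000 * D ^ 6)) * S.card := by
    have h1 := (mul_le_mul_of_nonneg_left hlow hkap.le).trans hgerr
    have e1 : kap F * (S'.card * ((q ^ 3 - 1) / 2)) = kap F * (q ^ 3 - 1) / 2 * S'.card := by ring
    have e2 : γ * M + (3 * δ * M + M / (250000 * D ^ 6))
        = kap F * (q ^ 3 - 1) / 2 * (2 * (γ + 3 * δ + 1 / (250000 * D ^ 6)) * S.card) := by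
      rw [hMdef]; ring
    rw [e1, e2] at h1
    exact le_of_mul_le_mul_left h1 (by positivity)
  refine hfin.trans (mul_le_mul_of_nonneg_right ?_ hScard.le)
  refine mul_le_mul_of_nonneg_left (Real.le_sqrt_of_sq_le ?_) (by norm_num)
  have hD3 : 1 ≤ D ^ 3 := one_le_pow₀ hD1
  have hsum : (γ + 3 * δ + 1 / (250000 * D ^ 6)) * D ^ 2 ≤ 3 / 100 := by
    have h1 : γ * D ^ 2 ≤ 1 / 1000 := by
      rw [hγD, div_mul_eq_mul_div, div_le_div_iff₀ (by positivity) (by norm_num)]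
      nlinarith [pow_pos (by linarith : 0 < D) 2]
    have h2 : 1 / (250000 * D ^ 6) * D ^ 2 ≤ 1 / 250000 := by
      have e : 1 / (250000 * D ^ 6) * D ^ 2 = 1 / (250000 * D ^ 4) := by field_simp
      rw [e]
      apply one_div_le_one_div_of_le (by norm_num)
      nlinarith [one_le_pow₀ hD1 (n := 4)]
    nlinarith
  have hnn : 0 ≤ γ + 3 * δ + 1 / (250000 * D ^ 6) := by positivity
  have h4 : ((γ + 3 * δ + 1 / (250000 * D ^ 6)) * D ^ 2) ^ 2 ≤ (3 / 100) ^ 2 :=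
    pow_le_pow_left₀ (by positivity) hsum 2
  have h5 : D ^ 4 * γ = D / 1000 := by rw [hγD]; field_simp
  refine le_of_mul_le_mul_left ?_ (by positivity : 0 < D ^ 4)
  rw [h5]
  nlinarith

end global

/-! ### Excellent pairs -/

section excellent

variable {F : Type} [Field F] [Fintype F] {n d : ℕ}

instance finite_affineSubspace : Finite (AffineSubspace F (Fin n → F)) :=
  Finite.of_injective (fun C => (C : Set (Fin n → F))) SetLike.coe_injective

lemma card_ge (hd : 1 ≤ d) (hq : (11 * d : ℝ) < (Fintype.card F : ℝ) ^ ((1 : ℝ) / 9)) :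
    1000 * d ≤ Fintype.card F := by
  have hd1 : (1 : ℝ) ≤ d := by exact_mod_cast hd
  have h1 : ((11 * d : ℝ)) ^ 9 ≤ ((Fintype.card F : ℝ) ^ ((1 : ℝ) / 9)) ^ 9 :=
    pow_le_pow_left₀ (by positivity) hq.le 9
  rw [← Real.rpow_natCast, ← Real.rpow_natCast, ← Real.rpow_mul (by positivity)] at h1
  norm_num at h1
  have h2 : (1 : ℝ) ≤ d ^ 8 := one_le_pow₀ hd1
  have h3 : (1000 * d : ℝ) ≤ (11 * d) ^ 9 := by
    have : (11 * d : ℝ) ^ 9 = 11 ^ 9 * d * d ^ 8 := by ring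
    rw [this]
    nlinarith
  have h4 : ((1000 * d : ℕ) : ℝ) ≤ Fintype.card F := by
    push_cast; exact h3.trans h1
  exact_mod_cast h4

/-- The bound on the fraction of cubes gives a bound on the number of spanning triples. -/
lemma card_cubes_ge {x : Fin n → F} (hn : 4 ≤ n) {S A : Finset (AffineSubspace F (Fin n → F))}
    (hA : ∀ C, C ∈ A ↔ x ∈ C ∧ Module.finrank F C.direction = 3) {ε : ℝ} (hε : 0 ≤ ε)
    (h : ε ≤ (S.card : ℝ) / A.card) :
    ε * ((Fintype.card (Fin n → F) : ℝ) ^ 3 / 8)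
      ≤ kap F * (S.card * ((Fintype.card F : ℝ) ^ 3 - 1)) := by
  have h1 := le_sum_ind_all (F := F) (V := Fin n → F) (S := A) (x := x) (by simpa using hn)
    (fun C hx hC => (hA C).mpr ⟨hx, hC⟩)
  rw [sum_ind fun C hC => (hA C).mp hC] at h1
  have hq1 : (1 : ℝ) ≤ Fintype.card F := by exact_mod_cast Fintype.card_pos
  have hk : 0 ≤ kap F * ((Fintype.card F : ℝ) ^ 3 - 1) := by
    have h3 : (1 : ℝ) ≤ (Fintype.card F : ℝ) ^ 3 := one_le_pow₀ hq1
    have h4 : (Fintype.card F : ℝ) ^ 1 ≤ (Fintype.card F : ℝ) ^ 3 :=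
      pow_le_pow_right₀ hq1 (by norm_num)
    have h5 : (Fintype.card F : ℝ) ^ 2 ≤ (Fintype.card F : ℝ) ^ 3 :=
      pow_le_pow_right₀ hq1 (by norm_num)
    rw [pow_one] at h4
    exact mul_nonneg (mul_nonneg (by linarith) (by linarith)) (by linarith)
  have h2 : ε * A.card ≤ S.card := by
    rcases (Nat.cast_nonneg A.card : (0 : ℝ) ≤ A.card).eq_or_lt with h0 | h0
    · rw [← h0]; simp
    · rwa [le_div_iff₀ h0] at h
  calc _ ≤ ε * (kap F * (A.card * ((Fintype.card F : ℝ) ^ 3 - 1))) :=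
        mul_le_mul_of_nonneg_left h1 hε
    _ = kap F * ((Fintype.card F : ℝ) ^ 3 - 1) * (ε * A.card) := by ring
    _ ≤ kap F * ((Fintype.card F : ℝ) ^ 3 - 1) * S.card := mul_le_mul_of_nonneg_left h2 hk
    _ = _ := by ring

lemma exists_of_excellent (hn : 6 ≤ n) (hd : 1 ≤ d)
    (hq : (11 * d : ℝ) < (Fintype.card F : ℝ) ^ ((1 : ℝ) / 9))
    (T : AffineSubspace F (Fin n → F) → (Fin n → F) → F)
    (hT : DegTable F n d T)
    (hε : 10 ^ 7 * (d : ℝ) ^ 6 / (Fintype.card F : ℝ) ≤ epsT F n T)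
    (x : Fin n → F) (σ : F) (hexc : Excellent F n T d (epsT F n T) x σ) :
    ∃ g : MvPolynomial (Fin n) F, g.totalDegree ≤ d ∧
      (1 - 2 * Real.sqrt (gam d)) * ((cubesVal F n T x σ).ncard : ℝ) ≤
        ({C ∈ cubesVal F n T x σ | ∀ z : Fin n → F, z ∈ C → T C z = eval z g}.ncard : ℝ) := by
  obtain ⟨hmu, hline⟩ := hexc
  have hfin : ∀ A : Set (AffineSubspace F (Fin n → F)), A.Finite := fun A => A.toFinite
  obtain ⟨S, hS⟩ := (hfin (cubesVal F n T x σ)).exists_finset_coe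
  obtain ⟨A, hA⟩ := (hfin (cubesOn F n x)).exists_finset_coe
  obtain ⟨L, hL⟩ := (hfin {ℓ | IsLine F n ℓ ∧ x ∈ ℓ}).exists_finset_coe
  have hSmem : ∀ C, C ∈ S ↔ IsCube F n C ∧ x ∈ C ∧ T C x = σ := fun C => by
    rw [← Finset.mem_coe, hS]; rfl
  have hAmem : ∀ C, C ∈ A ↔ x ∈ C ∧ Module.finrank F C.direction = 3 := fun C => by
    rw [← Finset.mem_coe, hA]
    exact ⟨fun h => ⟨h.2, h.1.2⟩, fun h => ⟨⟨⟨x, h.1⟩, h.2⟩, h.1⟩⟩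
  have hLmem' : ∀ ℓ, ℓ ∈ L ↔ IsLine F n ℓ ∧ x ∈ ℓ := fun ℓ => by
    rw [← Finset.mem_coe, hL]; rfl
  have hLmem : ∀ ℓ, ℓ ∈ L ↔ x ∈ ℓ ∧ Module.finrank F ℓ.direction = 1 := fun ℓ => by
    rw [hLmem']
    exact ⟨fun h => ⟨h.2, h.1.2⟩, fun h => ⟨⟨⟨x, h.1⟩, h.2⟩, h.1⟩⟩
  have hS3 : ∀ C ∈ S, x ∈ C ∧ Module.finrank F C.direction = 3 := fun C hC =>
    ⟨((hSmem C).mp hC).2.1, ((hSmem C).mp hC).1.2⟩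
  have hsep : ∀ P : AffineSubspace F (Fin n → F) → Prop,
      ({C ∈ cubesVal F n T x σ | P C}.ncard : ℝ) = ((S.filter P).card : ℝ) := fun P => by
    rw [← Set.ncard_coe_finset, Finset.coe_filter]
    simp only [← hS, Finset.mem_coe]
  -- numerical consequences of the hypotheses
  have hq1000 := card_ge hd hq
  have hd1 : (1 : ℝ) ≤ d := by exact_mod_cast hd
  have hqpos : (0 : ℝ) < Fintype.card F := by exact_mod_cast Fintype.card_pos
  have hmu' : 2 * 10 ^ 6 * (d : ℝ) ^ 6 / (Fintype.card F : ℝ) ≤ (S.card : ℝ) / A.card := by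
    rw [muX, ← hS, ← hA, Set.ncard_coe_finset, Set.ncard_coe_finset] at hmu
    refine le_trans ?_ hmu
    refine le_trans (le_of_eq ?_) (div_le_div_of_nonneg_right hε (by norm_num))
    ring
  have hpos : 0 < 2 * 10 ^ 6 * (d : ℝ) ^ 6 / (Fintype.card F : ℝ) := by positivity
  have hS0 : S.Nonempty := by
    rw [Finset.nonempty_iff_ne_empty]
    rintro rfl
    rw [Finset.card_empty, Nat.cast_zero, zero_div] at hmu'
    linarith
  have hM : (Fintype.card (Fin n → F) : ℝ) ^ 3 / Fintype.card F
      ≤ kap F * (S.card * ((Fintype.card F : ℝ) ^ 3 - 1)) / (250000 * (d : ℝ) ^ 6) := by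
    rw [le_div_iff₀ (by positivity)]
    refine le_trans (le_of_eq ?_) (card_cubes_ge (by omega) hAmem hpos.le hmu')
    ring
  -- the line condition as a double sum over finite sets
  have hline' : ∑ C₁ ∈ S, ∑ ℓ ∈ L.filter (· ≤ C₁),
        (((S.filter fun C₂ => ℓ ≤ C₂ ∧ ¬ ∀ z, z ∈ ℓ → T C₁ z = T C₂ z).card : ℝ)
          / ((S.filter fun C₂ => ℓ ≤ C₂).card : ℝ))
      ≤ gam d * ∑ C ∈ S, ((L.filter (· ≤ C)).card : ℝ) := by
    have e1 : ∀ C₁, {ℓ : AffineSubspace F (Fin n → F) | IsLine F n ℓ ∧ x ∈ ℓ ∧ ℓ ≤ C₁}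
        = ↑(L.filter (· ≤ C₁)) := fun C₁ => by
      ext ℓ
      simp only [Set.mem_ofPred_eq, Finset.coe_filter, hLmem', and_assoc]
    have e2 : {p : AffineSubspace F (Fin n → F) × AffineSubspace F (Fin n → F) |
        p.1 ∈ cubesVal F n T x σ ∧ IsLine F n p.2 ∧ x ∈ p.2 ∧ p.2 ≤ p.1}
        = ↑((S ×ˢ L).filter fun p => p.2 ≤ p.1) := by
      ext p
      simp only [Set.mem_ofPred_eq, Finset.coe_filter, Finset.mem_product, hLmem', and_assoc,
        ← hS, Finset.mem_coe]
    simp only [hsep, e1, e2] at hline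
    rw [← hS] at hline
    simp only [finsum_mem_coe_finset, Set.ncard_coe_finset] at hline
    rw [Finset.card_filter, Finset.sum_product] at hline
    simp only [← Finset.card_filter] at hline
    push_cast at hline
    convert hline
    exact Iff.rfl
  obtain ⟨f, hf⟩ := exists_plurality hS3 hLmem T hline'
  obtain ⟨g, hgd, hg⟩ := exists_global hd hq1000 hS3 T
    (fun C hC => hT C ((hSmem C).mp hC).1) hS0 hM f hf
  refine ⟨g, hgd, ?_⟩
  obtain ⟨P, hP⟩ : ∃ P : AffineSubspace F (Fin n → F) → Prop,
      P = fun C => ∀ z, z ∈ C → T C z = eval z g := ⟨_, rfl⟩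
  have hg' : ((S.filter fun C => ¬ P C).card : ℝ) ≤ 2 * Real.sqrt (gam d) * S.card := by
    simp only [hP]
    convert hg
  have h : ((S.filter P).card : ℝ) + ((S.filter fun C => ¬ P C).card : ℝ) = S.card := by
    exact_mod_cast S.card_filter_add_card_filter_not P
  have hfinal : (1 - 2 * Real.sqrt (gam d)) * (S.card : ℝ) ≤ ((S.filter P).card : ℝ) :=
    calc _ = (S.card : ℝ) - 2 * Real.sqrt (gam d) * S.card := by ring
      _ ≤ (S.card : ℝ) - ((S.filter fun C => ¬ P C).card : ℝ) := sub_le_sub_left hg' _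
      _ = _ := sub_eq_of_eq_add h.symm
  rw [← hsep P, ← Set.ncard_coe_finset, hS, hP] at hfinal
  exact hfinal

end excellent

end
end CubeTest

/-- For an excellent pair `(x, σ)`, there is a polynomial `g` of total degree
at most `d` with `T(C) = g|_C` for at least a `1 − 2√γ` fraction of the cubes `C ∈ 𝒞_{x,σ}`. -/
theorem excellent_global_structure {F : Type} [Field F] [Fintype F] {n d : ℕ}
    (hn : 6 ≤ n) (hd : 1 ≤ d)
    (hq : (11 * d : ℝ) < (Fintype.card F : ℝ) ^ ((1 : ℝ) / 9))
    (T : AffineSubspace F (Fin n → F) → (Fin n → F) → F)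
    (hT : DegTable F n d T)
    (hε : 10 ^ 7 * (d : ℝ) ^ 6 / (Fintype.card F : ℝ) ≤ epsT F n T)
    (x : Fin n → F) (σ : F) (hexc : Excellent F n T d (epsT F n T) x σ) :
    ∃ g : MvPolynomial (Fin n) F, g.totalDegree ≤ d ∧
      (1 - 2 * Real.sqrt (gam d)) * ((cubesVal F n T x σ).ncard : ℝ) ≤
        ({C ∈ cubesVal F n T x σ | ∀ z : Fin n → F, z ∈ C → T C z = eval z g}.ncard : ℝ) := by
  exact CubeTest.exists_of_excellent hn hd hq T hT hε x σ hexc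
end

section
/- For (x, σ, C₁, y, τ, C₂) drawn from the distribution D, the probability that (C₁, C₂) ∈ S and (x, σ) is not excellent is at most ε/4. -/
/-!
Fix a point `x`. A cube through `x` is determined by its direction, a three-dimensional linear
subspace of `F^n`, so the cubes of `𝒞_{x,σ}` become a family `valDirs T x σ` of such subspaces,
of density `μ = μ_x(𝒞_{x,σ})`. If `C₁` and `C₂` agree on the plane `C₁ ∩ C₂ ∋ x`, then both lie
in the same `𝒞_{x,σ}`. The event is therefore controlled by the sum, over the values `σ` for which
`(x, σ)` is not excellent, of the probability that two cubes through a random plane containing `x`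
both lie in `𝒞_{x,σ}`.

The nonzero vectors and the three-dimensional subspaces form a two-design, and so do those through
a fixed line; the resulting variance bound (`design_variance`, `cnt_variance`), applied twice,
shows that this probability is at most `μ² + 2μ/q` (`plane_moment`). The densities `μ` sum to `1`
over `σ`, so the terms `2μ/q` contribute at most `2/q`, and the `σ` with `μ < ε/5` contribute at
most `ε/5` through `μ²`.

For the remaining `σ`, condition (ii) of excellence fails: two cubes of `𝒞_{x,σ}` through a common
line disagree on that line with probability more than `γ`. The same variance bound turns this into
the statement that, among all pairs of cubes through a common random line through `x`, at least a
`(γ/4) μ²` fraction belongs to `𝒞_{x,σ}` and disagrees on the line (`sum_pairs_lower`). Such pairs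
are rare: they take the same value at `x` but are different polynomials of degree at most `d` on
the line, and averaging over the points of the line shows that this has probability at most `d/q`
(`card_coincidence`). Hence the average over `x` of the sum of the `μ²` over these `σ` is at most
`4d/(γq) = 4000 d⁴/q`.

Altogether the probability is at most `ε/5 + 4000 d⁴/q + 2/q`, and `ε ≥ 10⁷ d⁶/q` makes this at most
`ε/4`.
-/

open MvPolynomial

/-- The sample space of the distribution `D`: tuples `((C₁, C₂), (x, y))` where `C₁, C₂` are
cubes meeting in a plane and `x ≠ y` are points of the plane `C₁ ∩ C₂`.  The distribution `D`
is uniform on this set, with `σ = T(C₁)(x)` and `τ = T(C₂)(y)` determined. -/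
def OmegaD (F : Type) [Field F] [Fintype F] (n : ℕ) :
    Set ((AffineSubspace F (Fin n → F) × AffineSubspace F (Fin n → F)) ×
      (Fin n → F) × (Fin n → F)) :=
  {ω | PlanePair F n ω.1.1 ω.1.2 ∧ ω.2.1 ∈ ω.1.1 ∧ ω.2.1 ∈ ω.1.2 ∧
    ω.2.2 ∈ ω.1.1 ∧ ω.2.2 ∈ ω.1.2 ∧ ω.2.1 ≠ ω.2.2}

/-! ### Variance in two-designs -/

open Finset in
open Classical in
/-- Sampling in a two-design. `I` is the incidence of points and blocks, and `R` relates points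
that lie in the same blocks. Two points lie in `r` common blocks if related and in `l` otherwise,
and each point has `s` related points. Then the number of blocks of a subfamily `A` through a
point has variance sum at most `#A * r * s`: with `h` the centered count and `g b` the sum of `h`
over the points of `b`, one has `∑ h² = ∑_{b ∈ A} g b`, while
`∑_b (g b)² = (r - l) s ∑ h²` over all blocks, and Cauchy–Schwarz concludes. -/
theorem design_variance {P B : Type*} (pts : Finset P) (blks A : Finset B) (hA : A ⊆ blks)
    (I : P → B → Prop) (R : P → P → Prop) (r l s m : ℝ) (hr : 0 ≤ r) (hl : 0 ≤ l) (hs0 : 0 ≤ s)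
    (hM1 : ∀ u ∈ pts, ∀ u' ∈ pts, R u u' → (#{b ∈ blks | I u b ∧ I u' b} : ℝ) = r)
    (hM2 : ∀ u ∈ pts, ∀ u' ∈ pts, ¬ R u u' → (#{b ∈ blks | I u b ∧ I u' b} : ℝ) = l)
    (hs : ∀ u ∈ pts, (#{u' ∈ pts | R u u'} : ℝ) = s)
    (hinv : ∀ u ∈ pts, ∀ u' ∈ pts, R u u' → ∀ b ∈ blks, I u b ↔ I u' b)
    (hm : ∑ u ∈ pts, ((#{b ∈ A | I u b} : ℝ) - m) = 0) :
    ∑ u ∈ pts, ((#{b ∈ A | I u b} : ℝ) - m) ^ 2 ≤ #A * (r * s) := by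
  obtain ⟨h, hd⟩ : ∃ h : P → ℝ, ∀ u, h u = (#{b ∈ A | I u b} : ℝ) - m := ⟨_, fun _ => rfl⟩
  simp only [← hd] at hm ⊢
  obtain ⟨g, hg⟩ : ∃ g : B → ℝ, ∀ b, g b = ∑ u ∈ pts, if I u b then h u else 0 :=
    ⟨_, fun _ => rfl⟩
  have hSnn : 0 ≤ ∑ u ∈ pts, h u ^ 2 := sum_nonneg fun _ _ => sq_nonneg _
  have hS : ∑ u ∈ pts, h u ^ 2 = ∑ b ∈ A, 1 * g b := by
    have e1 : ∑ u ∈ pts, h u ^ 2 = ∑ u ∈ pts, (h u * (#{b ∈ A | I u b} : ℝ)) -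
        m * ∑ u ∈ pts, h u := by
      rw [mul_sum, ← sum_sub_distrib]
      refine sum_congr rfl fun u _ => ?_
      rw [hd]; ring
    rw [e1, hm, mul_zero, sub_zero]
    simp only [hg, one_mul]
    rw [sum_comm]
    refine sum_congr rfl fun u _ => ?_
    rw [← sum_filter, sum_const, nsmul_eq_mul, mul_comm]
  have hCS : (∑ u ∈ pts, h u ^ 2) ^ 2 ≤ #A * ∑ b ∈ blks, g b ^ 2 := by
    rw [hS]
    refine (sum_mul_sq_le_sq_mul_sq A _ g).trans ?_
    simp only [one_pow, sum_const, nsmul_eq_mul, mul_one]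
    exact mul_le_mul_of_nonneg_left
      (sum_le_sum_of_subset_of_nonneg hA fun _ _ _ => sq_nonneg _) (Nat.cast_nonneg _)
  have hG : ∑ b ∈ blks, g b ^ 2 = (r - l) * s * ∑ u ∈ pts, h u ^ 2 := by
    have e1 : ∑ b ∈ blks, g b ^ 2 =
        ∑ u ∈ pts, ∑ u' ∈ pts, h u * h u' * (#{b ∈ blks | I u b ∧ I u' b} : ℝ) := by
      simp only [hg, sq, sum_mul_sum]
      rw [sum_comm]
      refine sum_congr rfl fun u _ => ?_
      rw [sum_comm]
      refine sum_congr rfl fun u' _ => ?_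
      rw [card_filter, Nat.cast_sum, mul_sum]
      refine sum_congr rfl fun b _ => ?_
      by_cases h1 : I u b <;> by_cases h2 : I u' b <;> simp [h1, h2]
    have e2 : ∀ u ∈ pts, ∑ u' ∈ pts, h u * h u' * (#{b ∈ blks | I u b ∧ I u' b} : ℝ) =
        l * h u * (∑ u' ∈ pts, h u') + (r - l) * s * h u ^ 2 := by
      intro u hu
      have e3 : ∑ u' ∈ pts, (if R u u' then (r - l) * h u * h u' else 0) =
          (r - l) * s * h u ^ 2 := by
        rw [← sum_filter]
        have : ∀ u' ∈ pts.filter (R u), (r - l) * h u * h u' = (r - l) * h u ^ 2 := by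
          intro u' hu'
          rw [mem_filter] at hu'
          have : h u' = h u := by
            rw [hd, hd]
            congr 3
            refine filter_congr fun b hb => ?_
            exact (hinv u hu u' hu'.1 hu'.2 b (hA hb)).symm
          rw [this]; ring
        rw [sum_congr rfl this, sum_const, nsmul_eq_mul, hs u hu]; ring
      rw [← e3, mul_sum, ← sum_add_distrib]
      refine sum_congr rfl fun u' hu' => ?_
      by_cases hR : R u u'
      · rw [hM1 u hu u' hu' hR, if_pos hR]; ring
      · rw [hM2 u hu u' hu' hR, if_neg hR]; ring
    rw [e1, sum_congr rfl e2, hm]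
    simp [mul_sum]
  rw [hG] at hCS
  rcases hSnn.eq_or_lt with h0 | h0
  · rw [← h0]
    exact mul_nonneg (Nat.cast_nonneg _) (mul_nonneg hr hs0)
  · have : (∑ u ∈ pts, h u ^ 2) ≤ #A * ((r - l) * s) := by
      by_contra! hc
      nlinarith
    refine this.trans ?_
    have : (r - l) * s ≤ r * s := by nlinarith
    exact mul_le_mul_of_nonneg_left this (Nat.cast_nonneg _)

/-! ### Three-dimensional subspaces through a given subspace -/

section Grassmann

open Finset Module
open scoped Classical

variable {F V : Type} [Field F] [Fintype F] [AddCommGroup V] [Module F V] [Fintype V]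

theorem card_mem (W : Submodule F V) :
    #{v : V | v ∈ W} = Fintype.card F ^ finrank F W := by
  rw [← Module.card_eq_pow_finrank (K := F) (V := W), Fintype.card_subtype]

theorem card_mem_diff {U W : Submodule F V} (h : U ≤ W) :
    (#{v : V | v ∈ W ∧ v ∉ U} : ℝ) =
      (Fintype.card F : ℝ) ^ finrank F W - (Fintype.card F : ℝ) ^ finrank F U := by
  have h1 := card_filter_add_card_filter_not (s := ({v : V | v ∈ W} : Finset V)) (fun v => v ∈ U)
  rw [filter_filter, filter_filter, card_mem] at h1
  have h2 : #{v : V | v ∈ W ∧ v ∈ U} = Fintype.card F ^ finrank F U := by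
    rw [← card_mem]
    congr 1
    ext v
    simpa using fun hv => h hv
  rw [h2] at h1
  have h3 : ((Fintype.card F ^ finrank F U + #{v : V | v ∈ W ∧ v ∉ U} : ℕ) : ℝ) =
    ((Fintype.card F ^ finrank F W : ℕ) : ℝ) := by exact_mod_cast h1
  push_cast at h3
  linarith

/-- The three-dimensional linear subspaces, i.e. the directions of cubes. -/
noncomputable def cubeDirs (F V : Type) [Field F] [Fintype F] [AddCommGroup V] [Module F V]
    [Fintype V] : Finset (Submodule F V) :=
  (Set.toFinite {W : Submodule F V | finrank F W = 3}).toFinset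

theorem mem_cubeDirs {W : Submodule F V} : W ∈ cubeDirs F V ↔ finrank F W = 3 := by
  simp [cubeDirs]

/-- The number of members of the family `A` that contain the subspace `U`. -/
noncomputable def cnt (A : Finset (Submodule F V)) (U : Submodule F V) : ℕ :=
  #{W ∈ A | U ≤ W}

/-- The number of three-dimensional subspaces through `U` depends on `dim U` only, because any
isomorphism between subspaces extends to an automorphism of the space. -/
theorem cnt_eq_of_finrank_eq {U U' : Submodule F V} (h : finrank F U = finrank F U') :
    cnt (cubeDirs F V) U = cnt (cubeDirs F V) U' := by
  obtain ⟨g, hg⟩ := Submodule.exists_linearEquiv_restrict_eq (LinearEquiv.ofFinrankEq U U' h)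
  have hmap : U.map (g : V →ₗ[F] V) = U' := by
    ext y
    simp only [Submodule.mem_map]
    constructor
    · rintro ⟨x, hx, rfl⟩
      have := hg ⟨x, hx⟩
      simp only at this
      change g x ∈ U'
      rw [← this]
      exact Subtype.prop _
    · intro hy
      refine ⟨(LinearEquiv.ofFinrankEq U U' h).symm ⟨y, hy⟩, Subtype.prop _, ?_⟩
      change g _ = y
      rw [← hg]; simp
  unfold cnt
  refine card_bij' (fun W _ => W.map (g : V →ₗ[F] V)) (fun W _ => W.map (g.symm : V →ₗ[F] V))
    ?_ ?_ ?_ ?_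
  · intro W hW
    rw [mem_filter, mem_cubeDirs] at hW ⊢
    refine ⟨by rw [← hW.1]; exact LinearEquiv.finrank_map_eq g W, ?_⟩
    rw [← hmap]; exact Submodule.map_mono hW.2
  · intro W hW
    rw [mem_filter, mem_cubeDirs] at hW ⊢
    refine ⟨by rw [← hW.1]; exact LinearEquiv.finrank_map_eq g.symm W, ?_⟩
    have : U'.map (g.symm : V →ₗ[F] V) = U := by
      rw [← hmap, ← Submodule.map_comp]; simp
    rw [← this]; exact Submodule.map_mono hW.2
  · intro W _
    rw [← Submodule.map_comp]; simp
  · intro W _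
    rw [← Submodule.map_comp]; simp

theorem cnt_le (A : Finset (Submodule F V)) (hA : A ⊆ cubeDirs F V) (U : Submodule F V) :
    cnt A U ≤ cnt (cubeDirs F V) U :=
  card_le_card (filter_subset_filter _ hA)

omit [Fintype F] [Fintype V] in
theorem sup_span_le_iff {U W : Submodule F V} (h : U ≤ W) (v : V) :
    U ⊔ F ∙ v ≤ W ↔ v ∈ W := by
  simp [h]

/-- Double counting of the pairs `(v, W)` with `W ∈ A`, `U ≤ W` and `v ∈ W \ U`. -/
theorem sum_cnt_sup (A : Finset (Submodule F V)) (hA : A ⊆ cubeDirs F V) (U : Submodule F V) :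
    ∑ v : V with v ∉ U, (cnt A (U ⊔ F ∙ v) : ℝ) =
      cnt A U * ((Fintype.card F : ℝ) ^ 3 - (Fintype.card F : ℝ) ^ finrank F U) := by
  have h := sum_card_bipartiteAbove_eq_sum_card_bipartiteBelow
    (s := ({v : V | v ∉ U} : Finset V)) (t := ({W ∈ A | U ≤ W} : Finset _)) (fun v W => v ∈ W)
  have h1 : ∀ v : V, #(bipartiteAbove (fun v W => v ∈ W) {W ∈ A | U ≤ W} v) =
      cnt A (U ⊔ F ∙ v) := by
    intro v
    unfold bipartiteAbove cnt
    rw [filter_filter]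
    congr 1
    refine filter_congr fun W _ => ?_
    simp
  simp only [h1] at h
  rw [← Nat.cast_sum, h, Nat.cast_sum]
  have h2 : ∀ W ∈ ({W ∈ A | U ≤ W} : Finset _),
      (#(bipartiteBelow (fun (v : V) W => v ∈ W) {v : V | v ∉ U} W) : ℝ) =
      (Fintype.card F : ℝ) ^ 3 - (Fintype.card F : ℝ) ^ finrank F U := by
    intro W hW
    rw [mem_filter] at hW
    have := card_mem_diff hW.2
    rw [mem_cubeDirs.1 (hA hW.1)] at this
    rw [← this]
    unfold bipartiteBelow
    rw [filter_filter]
    simp only [and_comm]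
  rw [sum_congr rfl h2, sum_const, nsmul_eq_mul]
  rfl

omit [Fintype F] in
theorem mem_sup_span_iff {U : Submodule F V} {u v : V} (hu : u ∉ U) (hv : v ∉ U)
    (h : v ∈ U ⊔ F ∙ u) : U ⊔ F ∙ u = U ⊔ F ∙ v := by
  symm
  apply Submodule.eq_of_le_of_finrank_le
  · simp [h]
  · rw [Submodule.finrank_sup_span_singleton hu, Submodule.finrank_sup_span_singleton hv]

/-- Variance bound: for a random vector `v` outside `U`, the number of members of `A`
containing `U` and `v` concentrates around its mean. -/
theorem cnt_variance (A : Finset (Submodule F V)) (hA : A ⊆ cubeDirs F V) (U X : Submodule F V)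
    (hX : finrank F X = finrank F U + 1) (m : ℝ)
    (hm : ∑ v : V with v ∉ U, ((cnt A (U ⊔ F ∙ v) : ℝ) - m) = 0) :
    ∑ v : V with v ∉ U, ((cnt A (U ⊔ F ∙ v) : ℝ) - m) ^ 2 ≤
      cnt A U * (cnt (cubeDirs F V) X *
        ((Fintype.card F : ℝ) ^ (finrank F U + 1) - (Fintype.card F : ℝ) ^ finrank F U)) := by
  have key : ∀ (A : Finset (Submodule F V)) (v : V),
      cnt A (U ⊔ F ∙ v) = #{W ∈ ({W ∈ A | U ≤ W} : Finset _) | v ∈ W} := by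
    intro A v
    unfold cnt
    rw [filter_filter]
    congr 1
    refine filter_congr fun W _ => ?_
    simp
  have hpair : ∀ v v' : V, #{W ∈ ({W ∈ cubeDirs F V | U ≤ W} : Finset _) | v ∈ W ∧ v' ∈ W} =
      cnt (cubeDirs F V) (U ⊔ F ∙ v ⊔ F ∙ v') := by
    intro v v'
    unfold cnt
    rw [filter_filter]
    congr 1
    refine filter_congr fun W _ => ?_
    simp [and_assoc]
  have hq1 : (1 : ℝ) ≤ Fintype.card F := by exact_mod_cast Fintype.card_pos
  obtain ⟨l, hl⟩ : ∃ l : ℕ, ∀ Y : Submodule F V, finrank F Y = finrank F U + 2 →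
      cnt (cubeDirs F V) Y = l := by
    by_cases h : ∃ Y : Submodule F V, finrank F Y = finrank F U + 2
    · obtain ⟨Y, hY⟩ := h
      exact ⟨_, fun Y' hY' => cnt_eq_of_finrank_eq (hY'.trans hY.symm)⟩
    · exact ⟨0, fun Y hY => absurd ⟨Y, hY⟩ h⟩
  simp only [key A] at hm ⊢
  refine design_variance _ ({W ∈ cubeDirs F V | U ≤ W} : Finset _) _
    (filter_subset_filter _ hA) (fun v W => v ∈ W) (fun v v' => v' ∈ U ⊔ F ∙ v)
    _ (l : ℝ) _ m (Nat.cast_nonneg _) (Nat.cast_nonneg _) ?_ ?_ ?_ ?_ ?_ hm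
  · have := pow_le_pow_right₀ hq1 (Nat.le_succ (finrank F U))
    simp only [Nat.succ_eq_add_one] at this
    linarith
  · intro v hv v' hv' h
    rw [hpair]
    congr 1
    apply cnt_eq_of_finrank_eq
    rw [sup_eq_left.2 (by simpa using h), hX]
    simp only [mem_filter, mem_univ, true_and] at hv
    exact Submodule.finrank_sup_span_singleton hv
  · intro v hv v' hv' h
    rw [hpair]
    congr 1
    apply hl
    simp only [mem_filter, mem_univ, true_and] at hv
    rw [Submodule.finrank_sup_span_singleton h, Submodule.finrank_sup_span_singleton hv]
  · intro v hv
    simp only [mem_filter, mem_univ, true_and] at hv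
    rw [← Submodule.finrank_sup_span_singleton hv, ← card_mem_diff le_sup_left, filter_filter]
    simp only [and_comm]
  · intro v hv v' hv' h W hW
    simp only [mem_filter, mem_univ, true_and] at hv hv' hW
    have := mem_sup_span_iff hv hv' h
    rw [← sup_span_le_iff hW.2, this, sup_span_le_iff hW.2]


theorem cnt_pos {U : Submodule F V} (hU : finrank F U ≤ 3) (hV : 3 ≤ finrank F V) :
    0 < cnt (cubeDirs F V) U := by
  obtain ⟨f, hf⟩ := exists_linearIndependent_of_le_finrank (R := F) (M := V) hV
  have hf' : LinearIndependent F (f ∘ Fin.castLE hU) := hf.comp _ (Fin.castLE_injective hU)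
  have h1 : finrank F (Submodule.span F (Set.range (f ∘ Fin.castLE hU))) = finrank F U := by
    rw [finrank_span_eq_card hf', Fintype.card_fin]
  rw [← cnt_eq_of_finrank_eq h1]
  refine card_pos.2 ⟨Submodule.span F (Set.range f), ?_⟩
  rw [mem_filter, mem_cubeDirs, finrank_span_eq_card hf, Fintype.card_fin]
  exact ⟨rfl, Submodule.span_mono (Set.range_comp_subset_range _ _)⟩

theorem card_notMem (U : Submodule F V) : (#{v : V | v ∉ U} : ℝ) =
    (Fintype.card F : ℝ) ^ finrank F V - (Fintype.card F : ℝ) ^ finrank F U := by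
  rw [← finrank_top F V, ← card_mem_diff (le_top : U ≤ ⊤)]
  simp

/-- The relation between the numbers of three-dimensional spaces through subspaces of
consecutive dimensions. -/
theorem cnt_step {U X : Submodule F V} (hX : finrank F X = finrank F U + 1) :
    (cnt (cubeDirs F V) X : ℝ) * #{v : V | v ∉ U} =
      cnt (cubeDirs F V) U * ((Fintype.card F : ℝ) ^ 3 - (Fintype.card F : ℝ) ^ finrank F U) := by
  rw [← sum_cnt_sup _ Subset.rfl, mul_comm, ← nsmul_eq_mul, ← sum_const]
  refine sum_congr rfl fun v hv => ?_
  simp only [mem_filter, mem_univ, true_and] at hv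
  congr 1
  apply cnt_eq_of_finrank_eq
  rw [hX, Submodule.finrank_sup_span_singleton hv]

theorem two_le_card : (2 : ℝ) ≤ Fintype.card F := by
  exact_mod_cast Fintype.one_lt_card (α := F)

/-- The density of `A` among the three-dimensional subspaces through `U`. -/
noncomputable def cubeDensity (A : Finset (Submodule F V)) (U : Submodule F V) : ℝ :=
  cnt A U / cnt (cubeDirs F V) U

theorem dens_nonneg (A : Finset (Submodule F V)) (U : Submodule F V) : 0 ≤ cubeDensity A U := by
  unfold cubeDensity; positivity

theorem cnt_eq_dens (A : Finset (Submodule F V)) (hA : A ⊆ cubeDirs F V) (U : Submodule F V) :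
    (cnt A U : ℝ) = cubeDensity A U * cnt (cubeDirs F V) U := by
  unfold cubeDensity
  rcases (cnt (cubeDirs F V) U).eq_zero_or_pos with h | h
  · have := cnt_le A hA U
    rw [h] at this
    have : cnt A U = 0 := by omega
    simp [this]
  · field_simp

theorem sum_cnt_sub_mean (A : Finset (Submodule F V)) (hA : A ⊆ cubeDirs F V)
    (U X : Submodule F V) (hX : finrank F X = finrank F U + 1) :
    ∑ v : V with v ∉ U, ((cnt A (U ⊔ F ∙ v) : ℝ) - cubeDensity A U * cnt (cubeDirs F V) X) = 0 := by
  rw [sum_sub_distrib, sum_cnt_sup A hA, sum_const, nsmul_eq_mul]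
  have := cnt_step hX
  rw [cnt_eq_dens A hA U]
  linear_combination (-cubeDensity A U) * this

theorem pow_gap (j : ℕ) (hj : j ≤ 1) :
    (Fintype.card F : ℝ) * ((Fintype.card F : ℝ) ^ (j + 1) - (Fintype.card F : ℝ) ^ j) ≤
      (Fintype.card F : ℝ) ^ 3 - (Fintype.card F : ℝ) ^ j := by
  have := two_le_card (F := F)
  interval_cases j
  · norm_num
    nlinarith [sq_nonneg (Fintype.card F : ℝ), pow_pos (by linarith : (0 : ℝ) < Fintype.card F) 3,
      mul_nonneg (sq_nonneg (Fintype.card F : ℝ)) (by linarith : (0 : ℝ) ≤ Fintype.card F - 2)]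
  · norm_num
    nlinarith

/-- Second moment bound for the densities through `U` and a random vector outside `U`. -/
theorem second_moment (A : Finset (Submodule F V)) (hA : A ⊆ cubeDirs F V)
    (U X : Submodule F V) (hX : finrank F X = finrank F U + 1) (hU : finrank F U ≤ 1) :
    ∑ v : V with v ∉ U, (cnt A (U ⊔ F ∙ v) : ℝ) ^ 2 ≤
      #{v : V | v ∉ U} * (cnt (cubeDirs F V) X : ℝ) ^ 2 *
        (cubeDensity A U ^ 2 + cubeDensity A U / Fintype.card F) := by
  have h0 := sum_cnt_sub_mean A hA U X hX
  have hvar := cnt_variance A hA U X hX _ h0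
  have hstep := cnt_step hX
  have hgap := pow_gap (F := F) _ hU
  have hq := two_le_card (F := F)
  have hd := dens_nonneg A U
  have hc := cnt_eq_dens A hA U
  set m := cubeDensity A U * cnt (cubeDirs F V) X with hm
  have e1 : ∑ v : V with v ∉ U, (cnt A (U ⊔ F ∙ v) : ℝ) ^ 2 =
      ∑ v : V with v ∉ U, ((cnt A (U ⊔ F ∙ v) : ℝ) - m) ^ 2 +
      2 * m * ∑ v : V with v ∉ U, ((cnt A (U ⊔ F ∙ v) : ℝ) - m) +
      #{v : V | v ∉ U} * m ^ 2 := by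
    rw [mul_sum, ← nsmul_eq_mul, ← sum_const, ← sum_add_distrib, ← sum_add_distrib]
    exact sum_congr rfl fun v _ => by ring
  rw [e1, h0]
  have e2 : (cnt A U : ℝ) * (cnt (cubeDirs F V) X *
        ((Fintype.card F : ℝ) ^ (finrank F U + 1) - (Fintype.card F : ℝ) ^ finrank F U)) ≤
      #{v : V | v ∉ U} * (cnt (cubeDirs F V) X : ℝ) ^ 2 * (cubeDensity A U / Fintype.card F) := by
    rw [← mul_div_assoc, le_div_iff₀ (by linarith)]
    rw [hc]
    calc _ = cubeDensity A U * cnt (cubeDirs F V) U * cnt (cubeDirs F V) X * (Fintype.card F *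
          ((Fintype.card F : ℝ) ^ (finrank F U + 1) - (Fintype.card F : ℝ) ^ finrank F U)) := by
          ring
      _ ≤ cubeDensity A U * cnt (cubeDirs F V) U * cnt (cubeDirs F V) X *
          ((Fintype.card F : ℝ) ^ 3 - (Fintype.card F : ℝ) ^ finrank F U) :=
          mul_le_mul_of_nonneg_left hgap (by positivity)
      _ = _ := by linear_combination (-cubeDensity A U * cnt (cubeDirs F V) X) * hstep
  have e3 : #{v : V | v ∉ U} * (cnt (cubeDirs F V) X : ℝ) ^ 2 *
        (cubeDensity A U ^ 2 + cubeDensity A U / Fintype.card F) =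
      #{v : V | v ∉ U} * (cnt (cubeDirs F V) X : ℝ) ^ 2 * (cubeDensity A U / Fintype.card F) +
        #{v : V | v ∉ U} * m ^ 2 := by
    rw [hm]; ring
  rw [e3]
  linarith

omit [Fintype F] [Fintype V] in
theorem finrank_bot_succ {X : Submodule F V} (h : finrank F X = 1) :
    finrank F X = finrank F (⊥ : Submodule F V) + 1 := by simp [h]

/-- The probability that two random cubes through a random plane both have their direction in
`A` is at most `μ² + 2μ/q`, where `μ` is the density of `A`. The bound for lines in cubes is
applied twice: to the lines in three-space and, modulo a fixed line, to the lines in a plane. -/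
theorem plane_moment (A : Finset (Submodule F V)) (hA : A ⊆ cubeDirs F V)
    (X Y : Submodule F V) (hX : finrank F X = 1) (hY : finrank F Y = 2) (hV : 3 ≤ finrank F V) :
    ∑ u : V with u ≠ 0, ∑ v : V with v ∉ F ∙ u, (cnt A (F ∙ u ⊔ F ∙ v) : ℝ) ^ 2 ≤
      #{u : V | u ≠ 0} * #{v : V | v ∉ X} * (cnt (cubeDirs F V) Y : ℝ) ^ 2 *
        (cubeDensity A ⊥ ^ 2 + 2 * cubeDensity A ⊥ / Fintype.card F) := by
  have hq := two_le_card (F := F)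
  have hr : ∀ u : V, u ≠ 0 → finrank F (F ∙ u) = 1 := fun u hu => finrank_span_singleton hu
  have hNX : (0 : ℝ) < cnt (cubeDirs F V) X := by exact_mod_cast cnt_pos (by omega) hV
  have hN : ∀ u : V, u ≠ 0 → cnt (cubeDirs F V) (F ∙ u) = cnt (cubeDirs F V) X := fun u hu =>
    cnt_eq_of_finrank_eq ((hr u hu).trans hX.symm)
  have h1 := second_moment A hA ⊥ X (finrank_bot_succ hX) (by simp)
  have h2 := sum_cnt_sub_mean A hA ⊥ X (finrank_bot_succ hX)
  simp only [Submodule.mem_bot, bot_sup_eq] at h1 h2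
  have hmean : ∑ u : V with u ≠ 0, cubeDensity A (F ∙ u) = #{u : V | u ≠ 0} * cubeDensity A ⊥ := by
    rw [sum_sub_distrib, sum_const, nsmul_eq_mul, sub_eq_zero] at h2
    have e : ∑ u : V with u ≠ 0, cubeDensity A (F ∙ u) =
        (∑ u : V with u ≠ 0, (cnt A (F ∙ u) : ℝ)) / cnt (cubeDirs F V) X := by
      rw [sum_div]
      refine sum_congr rfl fun u hu => ?_
      simp only [mem_filter, mem_univ, true_and] at hu
      unfold cubeDensity
      rw [hN u hu]
    rw [e, h2]; field_simp
  have hsq : ∑ u : V with u ≠ 0, cubeDensity A (F ∙ u) ^ 2 ≤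
      #{u : V | u ≠ 0} * (cubeDensity A ⊥ ^ 2 + cubeDensity A ⊥ / Fintype.card F) := by
    have e : ∑ u : V with u ≠ 0, cubeDensity A (F ∙ u) ^ 2 =
        (∑ u : V with u ≠ 0, (cnt A (F ∙ u) : ℝ) ^ 2) / (cnt (cubeDirs F V) X : ℝ) ^ 2 := by
      rw [sum_div]
      refine sum_congr rfl fun u hu => ?_
      simp only [mem_filter, mem_univ, true_and] at hu
      unfold cubeDensity
      rw [hN u hu, div_pow]
    rw [e, div_le_iff₀ (by positivity)]
    linarith
  calc _ ≤ ∑ u : V with u ≠ 0, #{v : V | v ∉ X} * (cnt (cubeDirs F V) Y : ℝ) ^ 2 *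
        (cubeDensity A (F ∙ u) ^ 2 + cubeDensity A (F ∙ u) / Fintype.card F) := by
        refine sum_le_sum fun u hu => ?_
        simp only [mem_filter, mem_univ, true_and] at hu
        have := second_moment A hA (F ∙ u) Y (by rw [hY, hr u hu]) (hr u hu).le
        rwa [card_notMem, hr u hu, ← hX, ← card_notMem] at this
    _ = #{v : V | v ∉ X} * (cnt (cubeDirs F V) Y : ℝ) ^ 2 *
        (∑ u : V with u ≠ 0, cubeDensity A (F ∙ u) ^ 2 +
          (∑ u : V with u ≠ 0, cubeDensity A (F ∙ u)) / Fintype.card F) := by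
        rw [← mul_sum, sum_add_distrib, sum_div]
    _ ≤ #{v : V | v ∉ X} * (cnt (cubeDirs F V) Y : ℝ) ^ 2 *
        (#{u : V | u ≠ 0} * (cubeDensity A ⊥ ^ 2 + cubeDensity A ⊥ / Fintype.card F) +
          (#{u : V | u ≠ 0} * cubeDensity A ⊥) / Fintype.card F) := by
        rw [hmean]
        gcongr
    _ = _ := by ring

/-- Let `E u` be at most the number of pairs in `A` through the line spanned by `u`. If the
average of `E u / (cnt A u)²` over pairs (member of `A`, nonzero vector `u` of it) exceeds `γ`,
and `A` is dense enough for lines to sample it well, then `E` has a large sum. Lines through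
which `A` has less than half its expected density are charged to the variance. -/
theorem sum_pairs_lower (A : Finset (Submodule F V)) (hA : A ⊆ cubeDirs F V)
    (X : Submodule F V) (hX : finrank F X = 1) (hV : 3 ≤ finrank F V)
    (E : V → ℝ) (hE0 : ∀ u, 0 ≤ E u) (hE : ∀ u, E u ≤ (cnt A (F ∙ u) : ℝ) ^ 2) (γ : ℝ)
    (hbig : γ * #A * ((Fintype.card F : ℝ) ^ 3 - 1) <
      ∑ u : V with u ≠ 0, E u / cnt A (F ∙ u))
    (hμ0 : 0 < cubeDensity A ⊥)
    (hμ : 2 * ((Fintype.card F : ℝ) - 1) ≤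
      cubeDensity A ⊥ * (γ / 2) * ((Fintype.card F : ℝ) ^ 3 - 1)) :
    γ / 4 * cubeDensity A ⊥ ^ 2 * (cnt (cubeDirs F V) X : ℝ) ^ 2 * #{u : V | u ≠ 0} ≤
      ∑ u : V with u ≠ 0, E u := by
  have hNX : (0 : ℝ) < cnt (cubeDirs F V) X := by exact_mod_cast cnt_pos (by omega) hV
  have h2 := sum_cnt_sub_mean A hA ⊥ X (finrank_bot_succ hX)
  have h1 := cnt_variance A hA ⊥ X (finrank_bot_succ hX) _ h2
  have h3 := cnt_step (finrank_bot_succ hX)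
  have h4 := cnt_eq_dens A hA ⊥
  have h5 : cnt A ⊥ = #A := by unfold cnt; simp
  simp only [Submodule.mem_bot, bot_sup_eq, finrank_bot, pow_zero, zero_add, pow_one, h5]
    at h1 h2 h3 h4
  set m := cubeDensity A ⊥ * cnt (cubeDirs F V) X with hm
  have hmpos : 0 < m := by positivity
  have hpt : ∀ u : V, E u / cnt A (F ∙ u) ≤
      2 / m * (E u + ((cnt A (F ∙ u) : ℝ) - m) ^ 2) := by
    intro u
    have hEu := hE u
    have hEu0 := hE0 u
    have hc0 : (0 : ℝ) ≤ cnt A (F ∙ u) := Nat.cast_nonneg _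
    generalize (cnt A (F ∙ u) : ℝ) = c at hEu hc0 ⊢
    rcases hc0.eq_or_lt with h | h
    · rw [← h]; simp only [div_zero]; positivity
    rw [div_mul_eq_mul_div, le_div_iff₀ hmpos, div_mul_eq_mul_div, div_le_iff₀ h]
    by_cases hcm : m / 2 ≤ c
    · nlinarith [mul_nonneg h.le (sq_nonneg (c - m))]
    · push Not at hcm
      have : (m / 2) ^ 2 ≤ (c - m) ^ 2 := by nlinarith
      nlinarith [mul_le_mul_of_nonneg_left this h.le, mul_nonneg hEu0 h.le,
        mul_le_mul_of_nonneg_right hEu hmpos.le, mul_pos h hmpos, mul_pos (mul_pos h hmpos) h]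
  have hsum : γ * #A * ((Fintype.card F : ℝ) ^ 3 - 1) <
      2 / m * (∑ u : V with u ≠ 0, E u + #A * (cnt (cubeDirs F V) X * (Fintype.card F - 1))) := by
    refine hbig.trans_le ((sum_le_sum fun u _ => hpt u).trans ?_)
    rw [← mul_sum, sum_add_distrib]
    gcongr
  rw [div_mul_eq_mul_div, lt_div_iff₀ hmpos] at hsum
  have h6 : (#A : ℝ) * cnt (cubeDirs F V) X * (2 * ((Fintype.card F : ℝ) - 1)) ≤
      #A * cnt (cubeDirs F V) X *
        (cubeDensity A ⊥ * (γ / 2) * ((Fintype.card F : ℝ) ^ 3 - 1)) :=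
    mul_le_mul_of_nonneg_left hμ (by positivity)
  have h7 : cubeDensity A ⊥ ^ 2 * (cnt (cubeDirs F V) X : ℝ) ^ 2 * #{u : V | u ≠ 0} =
      #A * m * ((Fintype.card F : ℝ) ^ 3 - 1) := by
    rw [h4, hm]
    linear_combination (cubeDensity A ⊥ ^ 2 * cnt (cubeDirs F V) X) * h3
  have h8 : γ / 4 * cubeDensity A ⊥ ^ 2 * (cnt (cubeDirs F V) X : ℝ) ^ 2 * #{u : V | u ≠ 0} =
      γ / 4 * (#A * m * ((Fintype.card F : ℝ) ^ 3 - 1)) := by rw [← h7]; ring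
  rw [h8]
  rw [hm] at hsum ⊢
  nlinarith

end Grassmann

/-! ### Cubes through a point -/

section Cubes

open Finset Module
open scoped Classical

variable {F : Type} [Field F] [Fintype F] {n : ℕ}

/-- The directions of the cubes in `𝒞_{x,σ}`; a cube through `x` is determined by its direction. -/
noncomputable def valDirs (T : AffineSubspace F (Fin n → F) → (Fin n → F) → F) (x : Fin n → F)
    (σ : F) : Finset (Submodule F (Fin n → F)) :=
  {W ∈ cubeDirs F (Fin n → F) | T (AffineSubspace.mk' x W) x = σ}

theorem valDirs_subset (T : AffineSubspace F (Fin n → F) → (Fin n → F) → F) (x : Fin n → F)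
    (σ : F) : valDirs T x σ ⊆ cubeDirs F (Fin n → F) := filter_subset _ _

omit [Fintype F] in
theorem mk'_inj (x : Fin n → F) :
    Function.Injective (fun W : Submodule F (Fin n → F) => AffineSubspace.mk' x W) := by
  intro W W' h
  have := congrArg AffineSubspace.direction h
  simpa using this

theorem isCube_mk' (x : Fin n → F) (W : Submodule F (Fin n → F)) :
    IsCube F n (AffineSubspace.mk' x W) ↔ finrank F W = 3 := by
  unfold IsCube
  rw [AffineSubspace.direction_mk']
  exact and_iff_right (AffineSubspace.mk'_nonempty _ _)

theorem cubesVal_eq (T : AffineSubspace F (Fin n → F) → (Fin n → F) → F) (x : Fin n → F)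
    (σ : F) : cubesVal F n T x σ =
      ↑((valDirs T x σ).image (fun W => AffineSubspace.mk' x W)) := by
  ext C
  simp only [cubesVal, Set.mem_ofPred_eq, coe_image, Set.mem_image, mem_coe, valDirs, mem_filter,
    mem_cubeDirs]
  constructor
  · rintro ⟨hC, hx, hT⟩
    refine ⟨C.direction, ⟨hC.2, ?_⟩, AffineSubspace.mk'_eq hx⟩
    rwa [AffineSubspace.mk'_eq hx]
  · rintro ⟨W, ⟨hW, hT⟩, rfl⟩
    exact ⟨(isCube_mk' x W).2 hW, AffineSubspace.self_mem_mk' _ _, hT⟩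

theorem cubesOn_eq (x : Fin n → F) : cubesOn F n x =
      ↑((cubeDirs F (Fin n → F)).image (fun W => AffineSubspace.mk' x W)) := by
  ext C
  simp only [cubesOn, Set.mem_ofPred_eq, coe_image, Set.mem_image, mem_coe, mem_cubeDirs]
  constructor
  · rintro ⟨hC, hx⟩
    exact ⟨C.direction, hC.2, AffineSubspace.mk'_eq hx⟩
  · rintro ⟨W, hW, rfl⟩
    exact ⟨(isCube_mk' x W).2 hW, AffineSubspace.self_mem_mk' _ _⟩

omit [Fintype F] in
theorem cnt_bot (A : Finset (Submodule F (Fin n → F))) : cnt A ⊥ = #A := by unfold cnt; simp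

theorem muX_cubesVal (T : AffineSubspace F (Fin n → F) → (Fin n → F) → F) (x : Fin n → F)
    (σ : F) : muX F n x (cubesVal F n T x σ) = cubeDensity (valDirs T x σ) ⊥ := by
  unfold muX cubeDensity
  rw [cubesVal_eq, cubesOn_eq, Set.ncard_coe_finset, Set.ncard_coe_finset,
    card_image_of_injective _ (mk'_inj x), card_image_of_injective _ (mk'_inj x), cnt_bot, cnt_bot]

/-- The lines through `x` with direction inside `W`, parametrized by their direction vectors. -/
noncomputable def linesIn (x : Fin n → F) (W : Submodule F (Fin n → F)) :
    Finset (AffineSubspace F (Fin n → F)) :=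
  ({u : Fin n → F | u ∈ W ∧ u ≠ 0} : Finset _).image (fun u => AffineSubspace.mk' x (F ∙ u))

theorem mem_linesIn (x : Fin n → F) (W : Submodule F (Fin n → F))
    (ℓ : AffineSubspace F (Fin n → F)) :
    ℓ ∈ linesIn x W ↔ IsLine F n ℓ ∧ x ∈ ℓ ∧ ℓ ≤ AffineSubspace.mk' x W := by
  simp only [linesIn, mem_image, mem_filter, mem_univ, true_and]
  constructor
  · rintro ⟨u, ⟨hu, hu0⟩, rfl⟩
    refine ⟨⟨AffineSubspace.mk'_nonempty _ _, ?_⟩, AffineSubspace.self_mem_mk' _ _, ?_⟩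
    · rw [AffineSubspace.direction_mk', finrank_span_singleton hu0]
    · rw [AffineSubspace.mk'_le_mk'_iff]; simpa using hu
  · rintro ⟨hl, hx, hle⟩
    have hd : 0 < finrank F ℓ.direction := by rw [hl.2]; norm_num
    obtain ⟨⟨u, hu⟩, hu0⟩ := (Module.finrank_pos_iff_exists_ne_zero).1 hd
    have hu0' : u ≠ 0 := fun h => hu0 (by ext1; exact h)
    have hs : F ∙ u = ℓ.direction := by
      apply Submodule.eq_of_le_of_finrank_le
      · simpa using hu
      · rw [hl.2, finrank_span_singleton hu0']
    refine ⟨u, ⟨?_, hu0'⟩, ?_⟩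
    · have := AffineSubspace.direction_le hle
      rw [AffineSubspace.direction_mk'] at this
      exact this hu
    · rw [hs, AffineSubspace.mk'_eq hx]

/-- Every line through `x` has `q - 1` direction vectors. -/
theorem sum_linesIn (x : Fin n → F) (W : Submodule F (Fin n → F))
    (G : AffineSubspace F (Fin n → F) → ℝ) :
    ∑ u : Fin n → F with u ∈ W ∧ u ≠ 0, G (AffineSubspace.mk' x (F ∙ u)) =
      ((Fintype.card F : ℝ) - 1) * ∑ ℓ ∈ linesIn x W, G ℓ := by
  rw [← sum_fiberwise_of_maps_to (t := linesIn x W)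
    (g := fun u => AffineSubspace.mk' x (F ∙ u)) (fun u hu => mem_image_of_mem _ hu), mul_sum]
  refine sum_congr rfl fun ℓ hℓ => ?_
  rw [sum_congr rfl (g := fun _ => G ℓ) (fun u hu => by rw [(mem_filter.1 hu).2]), sum_const,
    nsmul_eq_mul]
  congr 1
  obtain ⟨u₀, hu₀, rfl⟩ := mem_image.1 hℓ
  simp only [mem_filter, mem_univ, true_and] at hu₀
  have h := card_mem_diff (bot_le : (⊥ : Submodule F (Fin n → F)) ≤ F ∙ u₀)
  rw [finrank_span_singleton hu₀.2, finrank_bot, pow_one, pow_zero] at h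
  rw [← h, filter_filter]
  congr 2
  refine filter_congr fun u _ => ?_
  rw [(mk'_inj x).eq_iff, Submodule.mem_bot]
  constructor
  · rintro ⟨⟨_, h0⟩, h1⟩
    exact ⟨h1 ▸ Submodule.mem_span_singleton_self u, h0⟩
  · rintro ⟨h1, h0⟩
    have hle : F ∙ u ≤ F ∙ u₀ := by simpa using h1
    refine ⟨⟨?_, h0⟩, ?_⟩
    · have : F ∙ u₀ ≤ W := by simpa using hu₀.1
      exact this h1
    · apply Submodule.eq_of_le_of_finrank_le hle
      rw [finrank_span_singleton h0, finrank_span_singleton hu₀.2]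

/-- The number of pairs in `𝒞_{x,σ}` containing the line through `x` in direction `u` on which
the two table entries differ. -/
noncomputable def disagreeCount (T : AffineSubspace F (Fin n → F) → (Fin n → F) → F)
    (x : Fin n → F) (σ : F) (u : Fin n → F) : ℝ :=
  ∑ W₁ ∈ valDirs T x σ with u ∈ W₁, (#{W₂ ∈ valDirs T x σ | u ∈ W₂ ∧
    ¬ LineAgree F n T (AffineSubspace.mk' x W₁) (AffineSubspace.mk' x W₂)
      (AffineSubspace.mk' x (F ∙ u))} : ℝ)

theorem disagreeCount_nonneg (T : AffineSubspace F (Fin n → F) → (Fin n → F) → F)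
    (x : Fin n → F) (σ : F) (u : Fin n → F) : 0 ≤ disagreeCount T x σ u :=
  sum_nonneg fun _ _ => Nat.cast_nonneg _

theorem disagreeCount_le (T : AffineSubspace F (Fin n → F) → (Fin n → F) → F)
    (x : Fin n → F) (σ : F) (u : Fin n → F) :
    disagreeCount T x σ u ≤ (cnt (valDirs T x σ) (F ∙ u) : ℝ) ^ 2 := by
  have hc : cnt (valDirs T x σ) (F ∙ u) = #{W ∈ valDirs T x σ | u ∈ W} := by
    unfold cnt; simp
  unfold disagreeCount
  rw [hc, sq, ← nsmul_eq_mul, ← sum_const]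
  refine sum_le_sum fun W₁ _ => ?_
  exact_mod_cast card_le_card fun W hW => by
    rw [mem_filter] at hW ⊢
    exact ⟨hW.1, hW.2.1⟩

theorem ncard_flags (T : AffineSubspace F (Fin n → F) → (Fin n → F) → F) (x : Fin n → F) (σ : F) :
    ((Fintype.card F : ℝ) - 1) *
      ({p : AffineSubspace F (Fin n → F) × AffineSubspace F (Fin n → F) |
        p.1 ∈ cubesVal F n T x σ ∧ IsLine F n p.2 ∧ x ∈ p.2 ∧ p.2 ≤ p.1}.ncard : ℝ) =
      #(valDirs T x σ) * ((Fintype.card F : ℝ) ^ 3 - 1) := by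
  have hset : {p : AffineSubspace F (Fin n → F) × AffineSubspace F (Fin n → F) |
        p.1 ∈ cubesVal F n T x σ ∧ IsLine F n p.2 ∧ x ∈ p.2 ∧ p.2 ≤ p.1} =
      ↑(((valDirs T x σ).sigma (linesIn x)).image
        (fun p => (AffineSubspace.mk' x p.1, p.2))) := by
    ext ⟨C, ℓ⟩
    simp only [Set.mem_ofPred_eq, cubesVal_eq, coe_image, Set.mem_image, mem_coe, mem_sigma]
    constructor
    · rintro ⟨⟨W, hW, rfl⟩, h⟩
      exact ⟨⟨W, ℓ⟩, ⟨hW, (mem_linesIn x W ℓ).2 h⟩, rfl⟩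
    · rintro ⟨⟨W, ℓ'⟩, ⟨hW, hl⟩, h⟩
      simp only [Prod.mk.injEq] at h hl hW
      obtain ⟨rfl, rfl⟩ := h
      exact ⟨⟨W, hW, rfl⟩, (mem_linesIn x W ℓ').1 hl⟩
  rw [hset, Set.ncard_coe_finset, card_image_of_injective, card_sigma, Nat.cast_sum, mul_sum,
    ← nsmul_eq_mul, ← sum_const]
  · refine sum_congr rfl fun W hW => ?_
    have h := sum_linesIn x W (fun _ => 1)
    rw [sum_const, sum_const, nsmul_eq_mul, nsmul_eq_mul, mul_one, mul_one] at h
    rw [← h]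
    have h' := card_mem_diff (bot_le : (⊥ : Submodule F (Fin n → F)) ≤ W)
    rw [mem_cubeDirs.1 (valDirs_subset T x σ hW), finrank_bot, pow_zero] at h'
    rw [← h']
    simp only [Submodule.mem_bot, ne_eq]
  · rintro ⟨W, ℓ⟩ ⟨W', ℓ'⟩ h
    simp only [Prod.mk.injEq] at h
    obtain ⟨h1, rfl⟩ := h
    rw [mk'_inj x h1]

/-- Failure of the second excellence condition, written with direction vectors. -/
theorem sum_disagree_of_not_excellent (T : AffineSubspace F (Fin n → F) → (Fin n → F) → F)
    (d : ℕ) (ε : ℝ) (x : Fin n → F) (σ : F) (hx : ¬ Excellent F n T d ε x σ)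
    (hε : ε / 5 ≤ cubeDensity (valDirs T x σ) ⊥) :
    gam d * #(valDirs T x σ) * ((Fintype.card F : ℝ) ^ 3 - 1) <
      ∑ u : Fin n → F with u ≠ 0, disagreeCount T x σ u / cnt (valDirs T x σ) (F ∙ u) := by
  have hq := two_le_card (F := F)
  unfold Excellent at hx
  rw [muX_cubesVal, not_and, not_le] at hx
  have h := hx hε
  have h' := mul_lt_mul_of_pos_left h (by linarith : 0 < (Fintype.card F : ℝ) - 1)
  rw [mul_left_comm, ncard_flags, ← mul_assoc] at h'
  refine h'.trans_eq ?_
  rw [cubesVal_eq, finsum_mem_coe_finset, sum_image (fun _ _ _ _ h => mk'_inj x h), mul_sum]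
  have e1 : ∀ W₁ ∈ valDirs T x σ, ((Fintype.card F : ℝ) - 1) *
      (∑ᶠ ℓ ∈ {ℓ : AffineSubspace F (Fin n → F) |
          IsLine F n ℓ ∧ x ∈ ℓ ∧ ℓ ≤ AffineSubspace.mk' x W₁},
        (({C₂ ∈ (↑((valDirs T x σ).image (fun W => AffineSubspace.mk' x W)) :
            Set (AffineSubspace F (Fin n → F))) |
            ℓ ≤ C₂ ∧ ¬ LineAgree F n T (AffineSubspace.mk' x W₁) C₂ ℓ}.ncard : ℝ) /
          ({C₂ ∈ (↑((valDirs T x σ).image (fun W => AffineSubspace.mk' x W)) :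
            Set (AffineSubspace F (Fin n → F))) | ℓ ≤ C₂}.ncard : ℝ))) =
      ∑ u : Fin n → F with u ≠ 0, if u ∈ W₁ then (#{W₂ ∈ valDirs T x σ | u ∈ W₂ ∧
        ¬ LineAgree F n T (AffineSubspace.mk' x W₁) (AffineSubspace.mk' x W₂)
          (AffineSubspace.mk' x (F ∙ u))} : ℝ) / cnt (valDirs T x σ) (F ∙ u) else 0 := by
    intro W₁ _
    have hl : {ℓ : AffineSubspace F (Fin n → F) |
          IsLine F n ℓ ∧ x ∈ ℓ ∧ ℓ ≤ AffineSubspace.mk' x W₁} = ↑(linesIn x W₁) := by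
      ext ℓ
      exact (mem_linesIn x W₁ ℓ).symm
    have key : ∀ (Q : AffineSubspace F (Fin n → F) → Prop),
        {C₂ ∈ (↑((valDirs T x σ).image (fun W => AffineSubspace.mk' x W)) :
            Set (AffineSubspace F (Fin n → F))) | Q C₂}.ncard =
          #{W₂ ∈ valDirs T x σ | Q (AffineSubspace.mk' x W₂)} := by
      intro Q
      rw [← card_image_of_injective _ (mk'_inj x), ← Set.ncard_coe_finset]
      congr 1
      ext C
      simp only [coe_image, Set.mem_image, mem_coe, Set.mem_ofPred_eq, mem_filter]
      constructor
      · rintro ⟨⟨W, hW, rfl⟩, h⟩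
        exact ⟨W, ⟨hW, h⟩, rfl⟩
      · rintro ⟨W, ⟨hW, h⟩, rfl⟩
        exact ⟨⟨W, hW, rfl⟩, h⟩
    rw [hl, finsum_mem_coe_finset, ← sum_linesIn, ← sum_filter, filter_filter]
    simp only [and_comm (a := _ ∈ W₁)]
    refine sum_congr rfl fun u _ => ?_
    rw [key, key]
    simp only [AffineSubspace.mk'_le_mk'_iff, Submodule.span_singleton_le_iff_mem]
    unfold cnt
    simp only [Submodule.span_singleton_le_iff_mem]
  rw [sum_congr rfl e1, sum_comm]
  refine sum_congr rfl fun u _ => ?_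
  unfold disagreeCount
  rw [sum_div, ← sum_filter]

end Cubes

/-! ### Coincidences on lines -/

section Counting

open Finset Module
open scoped Classical

variable {F : Type} [Field F] [Fintype F] {n : ℕ}

/-- The two cubes through `x` with directions `W₁` and `W₂` have the same value at `x` but differ
somewhere on the line through `x` in direction `u`. -/
def Coincidence (T : AffineSubspace F (Fin n → F) → (Fin n → F) → F) (u : Fin n → F)
    (W₁ W₂ : Submodule F (Fin n → F)) (x : Fin n → F) : Prop :=
  T (AffineSubspace.mk' x W₁) x = T (AffineSubspace.mk' x W₂) x ∧
    ¬ LineAgree F n T (AffineSubspace.mk' x W₁) (AffineSubspace.mk' x W₂)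
      (AffineSubspace.mk' x (F ∙ u))

omit [Fintype F] in
theorem mk'_translate (x u : Fin n → F) (t : F) {W : Submodule F (Fin n → F)} (hu : u ∈ W) :
    AffineSubspace.mk' (x + t • u) W = AffineSubspace.mk' x W := by
  have h : x + t • u ∈ AffineSubspace.mk' x W := by
    rw [AffineSubspace.mem_mk']
    simpa using W.smul_mem t hu
  simpa using AffineSubspace.mk'_eq h

/-- On a single line, two distinct restrictions of degree at most `d` coincide in at most `d`
points. -/
theorem card_coincidence_line {d : ℕ} {T : AffineSubspace F (Fin n → F) → (Fin n → F) → F}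
    (hT : DegTable F n d T) {u : Fin n → F} {W₁ W₂ : Submodule F (Fin n → F)}
    (h₁ : W₁ ∈ cubeDirs F (Fin n → F)) (h₂ : W₂ ∈ cubeDirs F (Fin n → F))
    (hu₁ : u ∈ W₁) (hu₂ : u ∈ W₂) (x : Fin n → F) :
    #{t : F | Coincidence T u W₁ W₂ (x + t • u)} ≤ d := by
  have hu : u ∈ F ∙ u := Submodule.mem_span_singleton_self u
  unfold Coincidence
  simp only [mk'_translate x u _ hu₁, mk'_translate x u _ hu₂, mk'_translate x u _ hu]
  by_cases hl : LineAgree F n T (AffineSubspace.mk' x W₁) (AffineSubspace.mk' x W₂)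
      (AffineSubspace.mk' x (F ∙ u))
  · simp [hl]
  obtain ⟨p₁, hd₁, hp₁⟩ := hT _ ((isCube_mk' x W₁).2 (mem_cubeDirs.1 h₁))
  obtain ⟨p₂, hd₂, hp₂⟩ := hT _ ((isCube_mk' x W₂).2 (mem_cubeDirs.1 h₂))
  have hmem : ∀ (W : Submodule F (Fin n → F)), u ∈ W → ∀ t : F,
      x + t • u ∈ AffineSubspace.mk' x W := by
    intro W hW t
    rw [AffineSubspace.mem_mk']
    simpa using W.smul_mem t hW
  set g : Polynomial F :=
    aeval (fun i => Polynomial.C (x i) + Polynomial.C (u i) * Polynomial.X) (p₁ - p₂) with hg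
  have hgeval : ∀ t : F, g.eval t =
      T (AffineSubspace.mk' x W₁) (x + t • u) - T (AffineSubspace.mk' x W₂) (x + t • u) := by
    intro t
    rw [hp₁ _ (hmem _ hu₁ t), hp₂ _ (hmem _ hu₂ t), ← map_sub, hg]
    generalize p₁ - p₂ = p
    induction p using MvPolynomial.induction_on with
    | C a => simp
    | add p q hp hq => simp [hp, hq]
    | mul_X p i hp =>
      rw [map_mul, Polynomial.eval_mul, hp]
      simp [mul_comm (u i)]
  have hg0 : g ≠ 0 := by
    intro h0
    apply hl
    intro z hz
    rw [AffineSubspace.mem_mk', Submodule.mem_span_singleton] at hz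
    obtain ⟨s, hs⟩ := hz
    have hz' : z = x + s • u := by rw [hs]; simp
    have := hgeval s
    rw [h0, Polynomial.eval_zero, ← hz'] at this
    exact (sub_eq_zero.1 this.symm)
  have hdeg : g.natDegree ≤ d := by
    have := MvPolynomial.aeval_natDegree_le (p₁ - p₂) (m := d) ((totalDegree_sub _ _).trans (max_le hd₁ hd₂))
      (fun i => Polynomial.C (x i) + Polynomial.C (u i) * Polynomial.X) (n := 1) (fun i => by
        compute_degree)
    rwa [mul_one] at this
  calc _ ≤ #g.roots.toFinset := by
        refine card_le_card fun t ht => ?_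
        rw [mem_filter] at ht
        rw [Multiset.mem_toFinset, Polynomial.mem_roots hg0, Polynomial.IsRoot, hgeval, ht.2.1,
          sub_self]
    _ ≤ g.roots.card := Multiset.toFinset_card_le _
    _ ≤ d := (Polynomial.card_roots' g).trans hdeg

/-- The one-dimensional Schwartz–Zippel bound, averaged over all translates of a line. -/
theorem card_coincidence {d : ℕ} {T : AffineSubspace F (Fin n → F) → (Fin n → F) → F}
    (hT : DegTable F n d T) {u : Fin n → F} {W₁ W₂ : Submodule F (Fin n → F)}
    (h₁ : W₁ ∈ cubeDirs F (Fin n → F)) (h₂ : W₂ ∈ cubeDirs F (Fin n → F))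
    (hu₁ : u ∈ W₁) (hu₂ : u ∈ W₂) :
    #{x : Fin n → F | Coincidence T u W₁ W₂ x} * Fintype.card F ≤ d * Fintype.card F ^ n := by
  have h := sum_card_bipartiteAbove_eq_sum_card_bipartiteBelow
    (s := (univ : Finset F)) (t := (univ : Finset (Fin n → F)))
    (fun t x => Coincidence T u W₁ W₂ (x + t • u))
  have hs : ∀ t : F, #(bipartiteAbove (fun t x => Coincidence T u W₁ W₂ (x + t • u)) univ t) =
      #{x : Fin n → F | Coincidence T u W₁ W₂ x} := by
    intro t
    refine card_bij (fun x _ => x + t • u) ?_ ?_ ?_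
    · intro x hx
      simpa [bipartiteAbove] using hx
    · intro x _ y _ hxy
      exact add_right_cancel hxy
    · intro y hy
      exact ⟨y - t • u, by simpa [bipartiteAbove] using hy, by simp⟩
  simp only [hs, sum_const, card_univ, smul_eq_mul] at h
  rw [mul_comm, h]
  calc _ ≤ ∑ _x : Fin n → F, d := sum_le_sum fun x _ => card_coincidence_line hT h₁ h₂ hu₁ hu₂ x
    _ = d * Fintype.card F ^ n := by simp [mul_comm]

/-- Summed over all points and values, the number of disagreeing pairs of cubes through a common
line is at most a `d/q` fraction of all such pairs. -/
theorem sum_disagreeCount_le {d : ℕ} {T : AffineSubspace F (Fin n → F) → (Fin n → F) → F}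
    (hT : DegTable F n d T) (X : Submodule F (Fin n → F)) (hX : finrank F X = 1) :
    (∑ x : Fin n → F, ∑ σ : F, ∑ u : Fin n → F with u ≠ 0, disagreeCount T x σ u) *
        Fintype.card F ≤
      d * (Fintype.card F : ℝ) ^ n * #{u : Fin n → F | u ≠ 0} *
        (cnt (cubeDirs F (Fin n → F)) X : ℝ) ^ 2 := by
  have h1 : ∀ x u : Fin n → F, ∑ σ : F, disagreeCount T x σ u =
      ∑ W₁ ∈ cubeDirs F (Fin n → F) with u ∈ W₁, ∑ W₂ ∈ cubeDirs F (Fin n → F) with u ∈ W₂,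
        if Coincidence T u W₁ W₂ x then (1 : ℝ) else 0 := by
    intro x u
    unfold disagreeCount valDirs
    simp only [filter_filter, sum_filter, card_filter, Nat.cast_sum]
    rw [sum_comm]
    refine sum_congr rfl fun W₁ _ => ?_
    by_cases hu : u ∈ W₁
    · simp only [hu, and_true, if_true]
      rw [sum_ite_eq univ (T (AffineSubspace.mk' x W₁) x) , if_pos (mem_univ _)]
      refine sum_congr rfl fun W₂ _ => ?_
      unfold Coincidence
      by_cases hu2 : u ∈ W₂ <;> simp [hu2, eq_comm]
    · simp [hu]
  have h2 : ∀ u : Fin n → F, u ≠ 0 →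
      (∑ x : Fin n → F, ∑ σ : F, disagreeCount T x σ u) * Fintype.card F ≤
        d * (Fintype.card F : ℝ) ^ n * (cnt (cubeDirs F (Fin n → F)) X : ℝ) ^ 2 := by
    intro u hu
    have hc : cnt (cubeDirs F (Fin n → F)) X = #{W ∈ cubeDirs F (Fin n → F) | u ∈ W} := by
      rw [cnt_eq_of_finrank_eq (U' := F ∙ u) (by rw [hX, finrank_span_singleton hu])]
      unfold cnt; simp
    simp only [h1]
    rw [sum_comm, sum_mul]
    calc _ ≤ ∑ W₁ ∈ cubeDirs F (Fin n → F) with u ∈ W₁,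
          ∑ W₂ ∈ cubeDirs F (Fin n → F) with u ∈ W₂, d * (Fintype.card F : ℝ) ^ n := by
          refine sum_le_sum fun W₁ hW₁ => ?_
          rw [sum_comm, sum_mul]
          refine sum_le_sum fun W₂ hW₂ => ?_
          rw [mem_filter] at hW₁ hW₂
          rw [sum_boole]
          exact_mod_cast card_coincidence hT hW₁.1 hW₂.1 hW₁.2 hW₂.2
      _ = _ := by
          rw [sum_const, sum_const, ← hc, nsmul_eq_mul, nsmul_eq_mul]; ring
  have h3 : (∑ x : Fin n → F, ∑ σ : F, ∑ u : Fin n → F with u ≠ 0, disagreeCount T x σ u) =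
      ∑ u : Fin n → F with u ≠ 0, ∑ x : Fin n → F, ∑ σ : F, disagreeCount T x σ u := by
    rw [sum_congr rfl fun x _ => sum_comm, sum_comm]
  rw [h3, sum_mul]
  calc _ ≤ ∑ u : Fin n → F with u ≠ 0,
        d * (Fintype.card F : ℝ) ^ n * (cnt (cubeDirs F (Fin n → F)) X : ℝ) ^ 2 :=
        sum_le_sum fun u hu => h2 u (mem_filter.1 hu).2
    _ = _ := by rw [sum_const, nsmul_eq_mul]; ring

/-! ### Counting the sample space -/

omit [Fintype F] in
theorem finrank_inf_eq_two_iff {u v : Fin n → F} (hu : u ≠ 0) (hv : v ∉ F ∙ u)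
    {W₁ W₂ : Submodule F (Fin n → F)} (h₁ : finrank F W₁ = 3) (h₂ : finrank F W₂ = 3)
    (hle₁ : F ∙ u ⊔ F ∙ v ≤ W₁) (hle₂ : F ∙ u ⊔ F ∙ v ≤ W₂) :
    finrank F (W₁ ⊓ W₂ : Submodule F (Fin n → F)) = 2 ↔ W₁ ≠ W₂ := by
  constructor
  · rintro h rfl
    rw [inf_idem] at h
    omega
  · intro hne
    have h2 := Submodule.finrank_mono (le_inf hle₁ hle₂)
    rw [Submodule.finrank_sup_span_singleton hv, finrank_span_singleton hu] at h2
    by_contra h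
    apply hne
    have e1 : W₁ ⊓ W₂ = W₁ := Submodule.eq_of_le_of_finrank_le inf_le_left (by omega)
    have e2 : W₁ ⊓ W₂ = W₂ := Submodule.eq_of_le_of_finrank_le inf_le_right (by omega)
    rw [← e1, e2]

theorem planePair_mk' (x : Fin n → F) (W₁ W₂ : Submodule F (Fin n → F)) :
    PlanePair F n (AffineSubspace.mk' x W₁) (AffineSubspace.mk' x W₂) ↔
      finrank F W₁ = 3 ∧ finrank F W₂ = 3 ∧
        finrank F (W₁ ⊓ W₂ : Submodule F (Fin n → F)) = 2 := by
  have hx₁ := AffineSubspace.self_mem_mk' x W₁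
  have hx₂ := AffineSubspace.self_mem_mk' x W₂
  unfold PlanePair
  rw [isCube_mk', isCube_mk', AffineSubspace.direction_inf_of_mem hx₁ hx₂,
    AffineSubspace.direction_mk', AffineSubspace.direction_mk']
  have : ((AffineSubspace.mk' x W₁ ⊓ AffineSubspace.mk' x W₂ :
    AffineSubspace F (Fin n → F)) : Set (Fin n → F)).Nonempty := ⟨x, hx₁, hx₂⟩
  simp [this]

/-- Events in the sample space of `D` that depend on `x, C₁, C₂` only are counted by choosing
the point `x`, then two vectors spanning the plane, then two distinct cubes through the plane;
each choice of `y` corresponds to `q² - q` choices of the second vector. -/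
theorem ncard_omega (Q : (Fin n → F) → AffineSubspace F (Fin n → F) →
    AffineSubspace F (Fin n → F) → Prop) :
    ({ω ∈ OmegaD F n | Q ω.2.1 ω.1.1 ω.1.2}.ncard : ℝ) *
        ((Fintype.card F : ℝ) ^ 2 - Fintype.card F) =
      ∑ x : Fin n → F, ∑ u : Fin n → F with u ≠ 0, ∑ v : Fin n → F with v ∉ F ∙ u,
        (#{p ∈ ({W ∈ cubeDirs F (Fin n → F) | F ∙ u ⊔ F ∙ v ≤ W} : Finset _).offDiag |
          Q x (AffineSubspace.mk' x p.1) (AffineSubspace.mk' x p.2)} : ℝ) := by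
  set P : (Fin n → F) → (Fin n → F) → Finset (Submodule F (Fin n → F) × Submodule F (Fin n → F)) :=
    fun x u => {p ∈ cubeDirs F (Fin n → F) ×ˢ cubeDirs F (Fin n → F) |
      u ∈ p.1 ∧ u ∈ p.2 ∧ finrank F (p.1 ⊓ p.2 : Submodule F (Fin n → F)) = 2 ∧
        Q x (AffineSubspace.mk' x p.1) (AffineSubspace.mk' x p.2)} with hP
  have hset : {ω ∈ OmegaD F n | Q ω.2.1 ω.1.1 ω.1.2} =
      ↑(((univ : Finset (Fin n → F)).sigma fun x =>
        ({u : Fin n → F | u ≠ 0} : Finset _).sigma fun u => P x u).image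
          fun s => ((AffineSubspace.mk' s.1 s.2.2.1, AffineSubspace.mk' s.1 s.2.2.2),
            (s.1, s.1 + s.2.1))) := by
    ext ⟨⟨C₁, C₂⟩, x, y⟩
    simp only [OmegaD, Set.mem_ofPred_eq, coe_image, Set.mem_image, mem_coe, mem_sigma, mem_univ,
      true_and, mem_filter, hP, mem_product, mem_cubeDirs, Prod.mk.injEq]
    constructor
    · rintro ⟨⟨hpp, hx₁, hx₂, hy₁, hy₂, hne⟩, hQ⟩
      have e₁ := AffineSubspace.mk'_eq hx₁
      have e₂ := AffineSubspace.mk'_eq hx₂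
      refine ⟨⟨x, ⟨y - x, (C₁.direction, C₂.direction)⟩⟩, ⟨sub_ne_zero.2 hne.symm,
        ⟨hpp.1.2, hpp.2.1.2⟩, AffineSubspace.vsub_mem_direction hy₁ hx₁,
        AffineSubspace.vsub_mem_direction hy₂ hx₂, ?_, ?_⟩, ⟨e₁, e₂⟩, rfl, by simp⟩
      · rw [← AffineSubspace.direction_inf_of_mem hx₁ hx₂]
        exact hpp.2.2.2
      · simp only [e₁, e₂]
        exact hQ
    · rintro ⟨⟨x', ⟨u, ⟨W₁, W₂⟩⟩⟩, ⟨hu, ⟨h₁, h₂⟩, hu₁, hu₂, h3, hQ⟩, ⟨rfl, rfl⟩, rfl, rfl⟩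
      simp only at hu h₁ h₂ hu₁ hu₂ h3 hQ
      refine ⟨⟨(planePair_mk' _ _ _).2 ⟨h₁, h₂, h3⟩, AffineSubspace.self_mem_mk' _ _,
        AffineSubspace.self_mem_mk' _ _, ?_, ?_, ?_⟩, hQ⟩
      · rw [AffineSubspace.mem_mk']; simpa using hu₁
      · rw [AffineSubspace.mem_mk']; simpa using hu₂
      · simpa using hu
  rw [hset, Set.ncard_coe_finset, card_image_of_injective, card_sigma, Nat.cast_sum, sum_mul]
  · refine sum_congr rfl fun x _ => ?_
    rw [card_sigma, Nat.cast_sum, sum_mul]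
    refine sum_congr rfl fun u hu => ?_
    simp only [mem_filter, mem_univ, true_and] at hu
    have hdc := sum_card_bipartiteAbove_eq_sum_card_bipartiteBelow
      (s := P x u) (t := ({v : Fin n → F | v ∉ F ∙ u} : Finset _))
      (fun p v => v ∈ p.1 ⊓ p.2)
    have hA : ∀ p ∈ P x u, (#(bipartiteAbove (fun (p : Submodule F (Fin n → F) ×
        Submodule F (Fin n → F)) v => v ∈ p.1 ⊓ p.2)
        ({v : Fin n → F | v ∉ F ∙ u} : Finset _) p) : ℝ) =
        (Fintype.card F : ℝ) ^ 2 - Fintype.card F := by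
      intro p hp
      simp only [hP, mem_filter] at hp
      have h := card_mem_diff (U := F ∙ u) (W := p.1 ⊓ p.2)
        (by simpa using ⟨hp.2.1, hp.2.2.1⟩)
      rw [hp.2.2.2.1, finrank_span_singleton hu, pow_one] at h
      rw [← h]
      unfold bipartiteAbove
      rw [filter_filter]
      simp only [and_comm]
    have hB : ∀ v ∈ ({v : Fin n → F | v ∉ F ∙ u} : Finset _),
        #(bipartiteBelow (fun (p : Submodule F (Fin n → F) ×
        Submodule F (Fin n → F)) v => v ∈ p.1 ⊓ p.2) (P x u) v) =
        #{p ∈ ({W ∈ cubeDirs F (Fin n → F) | F ∙ u ⊔ F ∙ v ≤ W} : Finset _).offDiag |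
          Q x (AffineSubspace.mk' x p.1) (AffineSubspace.mk' x p.2)} := by
      intro v hv
      simp only [mem_filter, mem_univ, true_and] at hv
      congr 1
      ext ⟨W₁, W₂⟩
      simp only [bipartiteBelow, hP, mem_filter, mem_product, mem_offDiag, mem_cubeDirs,
        Submodule.mem_inf]
      have hs : ∀ W : Submodule F (Fin n → F), F ∙ u ⊔ F ∙ v ≤ W ↔ u ∈ W ∧ v ∈ W := by
        intro W; simp
      constructor
      · rintro ⟨⟨⟨h₁, h₂⟩, hu₁, hu₂, h3, hQ⟩, hv₁, hv₂⟩
        have l₁ := (hs W₁).2 ⟨hu₁, hv₁⟩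
        have l₂ := (hs W₂).2 ⟨hu₂, hv₂⟩
        exact ⟨⟨⟨h₁, l₁⟩, ⟨h₂, l₂⟩, (finrank_inf_eq_two_iff hu hv h₁ h₂ l₁ l₂).1 h3⟩, hQ⟩
      · rintro ⟨⟨⟨h₁, l₁⟩, ⟨h₂, l₂⟩, hne⟩, hQ⟩
        have m₁ := (hs W₁).1 l₁
        have m₂ := (hs W₂).1 l₂
        exact ⟨⟨⟨h₁, h₂⟩, m₁.1, m₂.1, (finrank_inf_eq_two_iff hu hv h₁ h₂ l₁ l₂).2 hne, hQ⟩,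
          m₁.2, m₂.2⟩
    rw [sum_congr rfl hB] at hdc
    rw [← Nat.cast_sum, ← hdc, Nat.cast_sum, sum_congr rfl hA, sum_const, nsmul_eq_mul]
  · rintro ⟨x, u, W₁, W₂⟩ ⟨x', u', W₁', W₂'⟩ h
    simp only [Prod.mk.injEq] at h
    obtain ⟨⟨h1, h2⟩, rfl, h3⟩ := h
    obtain rfl := mk'_inj x h1
    obtain rfl := mk'_inj x h2
    obtain rfl := add_left_cancel h3
    rfl

theorem ncard_omegaD (X Y : Submodule F (Fin n → F)) (hX : finrank F X = 1)
    (hY : finrank F Y = 2) :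
    ((OmegaD F n).ncard : ℝ) * ((Fintype.card F : ℝ) ^ 2 - Fintype.card F) =
      (Fintype.card F : ℝ) ^ n * (#{u : Fin n → F | u ≠ 0} * #{v : Fin n → F | v ∉ X} *
        (cnt (cubeDirs F (Fin n → F)) Y * (cnt (cubeDirs F (Fin n → F)) Y - 1))) := by
  have h := ncard_omega (F := F) (n := n) (fun _ _ _ => True)
  simp only [and_true, Set.ofPred_mem_eq, filter_true] at h
  rw [h]
  have hin : ∀ u ∈ ({u : Fin n → F | u ≠ 0} : Finset _), ∀ v ∈ ({v : Fin n → F | v ∉ F ∙ u} : Finset _),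
      (#({W ∈ cubeDirs F (Fin n → F) | F ∙ u ⊔ F ∙ v ≤ W} : Finset _).offDiag : ℝ) =
        cnt (cubeDirs F (Fin n → F)) Y * (cnt (cubeDirs F (Fin n → F)) Y - 1) := by
    intro u hu v hv
    simp only [mem_filter, mem_univ, true_and] at hu hv
    have hc : cnt (cubeDirs F (Fin n → F)) Y =
        #{W ∈ cubeDirs F (Fin n → F) | F ∙ u ⊔ F ∙ v ≤ W} :=
      cnt_eq_of_finrank_eq (by
        rw [hY, Submodule.finrank_sup_span_singleton hv, finrank_span_singleton hu])
    rw [offDiag_card, ← hc, Nat.cast_sub (Nat.le_mul_self _)]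
    push_cast
    ring
  have hV1 : ∀ u ∈ ({u : Fin n → F | u ≠ 0} : Finset _),
      (#{v : Fin n → F | v ∉ F ∙ u} : ℝ) = #{v : Fin n → F | v ∉ X} := by
    intro u hu
    simp only [mem_filter, mem_univ, true_and] at hu
    rw [card_notMem, card_notMem, hX, finrank_span_singleton hu]
  have hx : ∀ x : Fin n → F, ∑ u : Fin n → F with u ≠ 0, ∑ v : Fin n → F with v ∉ F ∙ u,
      (#({W ∈ cubeDirs F (Fin n → F) | F ∙ u ⊔ F ∙ v ≤ W} : Finset _).offDiag : ℝ) =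
      #{u : Fin n → F | u ≠ 0} * #{v : Fin n → F | v ∉ X} *
        (cnt (cubeDirs F (Fin n → F)) Y * (cnt (cubeDirs F (Fin n → F)) Y - 1)) := by
    intro x
    rw [sum_congr rfl fun u hu => (sum_congr rfl (hin u hu)).trans
      (by rw [sum_const, nsmul_eq_mul, hV1 u hu]), sum_const, nsmul_eq_mul]
    ring
  rw [sum_congr rfl fun x _ => hx x, sum_const, nsmul_eq_mul]
  simp

/-- Two agreeing cubes through `x` have directions in the same `valDirs T x σ`. Among
the ordered pairs of such directions through `U`, the pairs of distinct ones form at most the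
fraction `(N - 1)/N`, where `N` is the number of cubes through `x` whose direction contains `U`. -/
theorem card_bad_pairs_le (T : AffineSubspace F (Fin n → F) → (Fin n → F) → F)
    (x : Fin n → F) (R : F → Prop) (U : Submodule F (Fin n → F)) :
    (#{p ∈ ({W ∈ cubeDirs F (Fin n → F) | U ≤ W} : Finset _).offDiag |
      Agrees F n T (AffineSubspace.mk' x p.1) (AffineSubspace.mk' x p.2) ∧
        R (T (AffineSubspace.mk' x p.1) x)} : ℝ) * cnt (cubeDirs F (Fin n → F)) U ≤
      (cnt (cubeDirs F (Fin n → F)) U - 1) *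
        ∑ σ : F with R σ, (cnt (valDirs T x σ) U : ℝ) ^ 2 := by
  have h1 : #{p ∈ ({W ∈ cubeDirs F (Fin n → F) | U ≤ W} : Finset _).offDiag |
      Agrees F n T (AffineSubspace.mk' x p.1) (AffineSubspace.mk' x p.2) ∧
        R (T (AffineSubspace.mk' x p.1) x)} ≤
      ∑ σ : F with R σ, #({W ∈ valDirs T x σ | U ≤ W} : Finset _).offDiag := by
    refine le_trans (card_le_card fun p hp => ?_) card_biUnion_le
    simp only [mem_filter, mem_offDiag] at hp
    obtain ⟨⟨⟨h1, l1⟩, ⟨h2, l2⟩, hne⟩, hag, hR⟩ := hp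
    simp only [mem_biUnion, mem_filter, mem_univ, true_and, mem_offDiag, valDirs]
    exact ⟨_, hR, ⟨⟨h1, rfl⟩, l1⟩, ⟨⟨h2, (hag x (AffineSubspace.self_mem_mk' _ _)
      (AffineSubspace.self_mem_mk' _ _)).symm⟩, l2⟩, hne⟩
  have h2 : ∀ σ : F, (#({W ∈ valDirs T x σ | U ≤ W} : Finset _).offDiag : ℝ) *
      cnt (cubeDirs F (Fin n → F)) U ≤
        (cnt (cubeDirs F (Fin n → F)) U - 1) * (cnt (valDirs T x σ) U : ℝ) ^ 2 := by
    intro σ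
    have hle : (cnt (valDirs T x σ) U : ℝ) ≤ cnt (cubeDirs F (Fin n → F)) U := by
      exact_mod_cast cnt_le _ (valDirs_subset T x σ) U
    rw [offDiag_card, Nat.cast_sub (Nat.le_mul_self _)]
    change (((cnt (valDirs T x σ) U * cnt (valDirs T x σ) U : ℕ) : ℝ) -
      (cnt (valDirs T x σ) U : ℕ)) * _ ≤ _
    push_cast
    nlinarith [mul_nonneg (Nat.cast_nonneg (α := ℝ) (cnt (valDirs T x σ) U)) (sub_nonneg.2 hle)]
  calc _ ≤ (∑ σ : F with R σ, (#({W ∈ valDirs T x σ | U ≤ W} : Finset _).offDiag : ℝ)) *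
        cnt (cubeDirs F (Fin n → F)) U := by
        gcongr
        exact_mod_cast h1
    _ ≤ _ := by
        rw [sum_mul, mul_sum]
        exact sum_le_sum fun σ _ => h2 σ

theorem sum_cubeDensity (T : AffineSubspace F (Fin n → F) → (Fin n → F) → F) (hn : 3 ≤ n)
    (x : Fin n → F) : ∑ σ : F, cubeDensity (valDirs T x σ) ⊥ = 1 := by
  have hpos : (0 : ℝ) < cnt (cubeDirs F (Fin n → F)) ⊥ := by
    exact_mod_cast cnt_pos (by simp) (by simpa using hn)
  unfold cubeDensity
  rw [← sum_div, div_eq_one_iff_eq hpos.ne', ← Nat.cast_sum]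
  simp only [cnt_bot, valDirs]
  congr 1
  exact (card_eq_sum_card_fiberwise fun _ _ => by simp).symm

/-- The light pairs `(x, σ)` contribute `ε/5`; the heavy non-excellent ones are charged to
coincidences on lines. -/
theorem sum_sq_density_le {d : ℕ} (hd : 1 ≤ d) (hn : 3 ≤ n)
    {T : AffineSubspace F (Fin n → F) → (Fin n → F) → F} (hT : DegTable F n d T) {ε : ℝ}
    (hε : 10 ^ 7 * (d : ℝ) ^ 6 / (Fintype.card F : ℝ) ≤ ε)
    (X : Submodule F (Fin n → F)) (hX : finrank F X = 1) :
    ∑ x : Fin n → F, ∑ σ : F with ¬ Excellent F n T d ε x σ, cubeDensity (valDirs T x σ) ⊥ ^ 2 ≤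
      (ε / 5 + 4000 * (d : ℝ) ^ 4 / Fintype.card F) * (Fintype.card F : ℝ) ^ n := by
  have hq := two_le_card (F := F)
  set q : ℝ := (Fintype.card F : ℝ) with hqdef
  have hq0 : 0 < q := by linarith
  have hd1 : (1 : ℝ) ≤ d := by exact_mod_cast hd
  have hV : 3 ≤ finrank F (Fin n → F) := by simpa using hn
  have hε0 : 0 < ε := lt_of_lt_of_le (by positivity) hε
  have hg : gam d = 1 / (1000 * (d : ℝ) ^ 3) := rfl
  set K : ℝ := (cnt (cubeDirs F (Fin n → F)) X : ℝ) ^ 2 * #{u : Fin n → F | u ≠ 0} with hK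
  have hK0 : 0 < K := by
    have h1 : 0 < cnt (cubeDirs F (Fin n → F)) X := cnt_pos (by omega) hV
    have h2 : 0 < #{u : Fin n → F | u ≠ 0} := by
      obtain ⟨u, hu⟩ := (Module.finrank_pos_iff_exists_ne_zero (R := F) (M := Fin n → F)).1
        (by omega)
      exact card_pos.2 ⟨u, by simpa using hu⟩
    positivity
  have hpt : ∀ (x : Fin n → F) (σ : F), ¬ Excellent F n T d ε x σ →
      gam d / 4 * K * cubeDensity (valDirs T x σ) ⊥ ^ 2 ≤
        gam d / 4 * K * (ε / 5) * cubeDensity (valDirs T x σ) ⊥ +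
          ∑ u : Fin n → F with u ≠ 0, disagreeCount T x σ u := by
    intro x σ hne
    have hD : 0 ≤ ∑ u : Fin n → F with u ≠ 0, disagreeCount T x σ u :=
      sum_nonneg fun u _ => disagreeCount_nonneg T x σ u
    have hμn := dens_nonneg (valDirs T x σ) ⊥
    have hγ : 0 < gam d := by rw [hg]; positivity
    rcases lt_or_ge (cubeDensity (valDirs T x σ) ⊥) (ε / 5) with hlt | hge
    · have : gam d / 4 * K * (cubeDensity (valDirs T x σ) ⊥ * cubeDensity (valDirs T x σ) ⊥) ≤
        gam d / 4 * K * (ε / 5 * cubeDensity (valDirs T x σ) ⊥) := by gcongr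
      nlinarith
    · have h := sum_pairs_lower (valDirs T x σ) (valDirs_subset T x σ) X hX hV
        (disagreeCount T x σ) (disagreeCount_nonneg T x σ) (disagreeCount_le T x σ) (gam d)
        (by convert sum_disagree_of_not_excellent T d ε x σ hne hge) (by linarith) (by
          -- `μ γ / 2 ≥ 1000 d³ / q`, which beats `2 / (q² + q + 1)`
          have h1 : 1000 * (d : ℝ) ^ 3 / q ≤ cubeDensity (valDirs T x σ) ⊥ * (gam d / 2) := by
            calc 1000 * (d : ℝ) ^ 3 / q = (10 ^ 7 * (d : ℝ) ^ 6 / q) / 5 * (gam d / 2) := by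
                  rw [hg]; field_simp; norm_num
              _ ≤ ε / 5 * (gam d / 2) := by gcongr
              _ ≤ _ := by gcongr
          have h2 : (2 : ℝ) / q ≤ 1000 * (d : ℝ) ^ 3 / q := by
            have : (1 : ℝ) ≤ (d : ℝ) ^ 3 := one_le_pow₀ hd1
            gcongr
            linarith
          have h3 : 2 * (q - 1) ≤ 2 / q * (q ^ 3 - 1) := by
            rw [div_mul_eq_mul_div, le_div_iff₀ hq0]
            nlinarith [mul_pos hq0 hq0, mul_nonneg (by linarith : 0 ≤ q - 1) (sq_nonneg q)]
          have h4 : 0 ≤ q ^ 3 - 1 := by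
            have := one_le_pow₀ (n := 3) (by linarith : 1 ≤ q)
            linarith
          exact h3.trans (mul_le_mul_of_nonneg_right (h2.trans h1) h4))
      have : 0 ≤ gam d / 4 * K * (ε / 5) * cubeDensity (valDirs T x σ) ⊥ := by positivity
      have e : gam d / 4 * K * cubeDensity (valDirs T x σ) ⊥ ^ 2 = gam d / 4 *
          cubeDensity (valDirs T x σ) ⊥ ^ 2 * (cnt (cubeDirs F (Fin n → F)) X : ℝ) ^ 2 *
            #{u : Fin n → F | u ≠ 0} := by rw [hK]; ring
      rw [e]
      have h' : gam d / 4 * cubeDensity (valDirs T x σ) ⊥ ^ 2 *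
          (cnt (cubeDirs F (Fin n → F)) X : ℝ) ^ 2 * #{u : Fin n → F | u ≠ 0} ≤
            ∑ u : Fin n → F with u ≠ 0, disagreeCount T x σ u := by convert h
      exact h'.trans (le_add_of_nonneg_left this)
  have hsum : gam d / 4 * K * (∑ x : Fin n → F, ∑ σ : F with ¬ Excellent F n T d ε x σ,
      cubeDensity (valDirs T x σ) ⊥ ^ 2) ≤
      gam d / 4 * K * (ε / 5) * q ^ n +
        ∑ x : Fin n → F, ∑ σ : F, ∑ u : Fin n → F with u ≠ 0, disagreeCount T x σ u := by
    have hone : ∑ x : Fin n → F, gam d / 4 * K * (ε / 5) * (1 : ℝ) =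
        gam d / 4 * K * (ε / 5) * q ^ n := by
      rw [sum_const, nsmul_eq_mul]; simp [hqdef]; ring
    have hγ : 0 < gam d := by rw [hg]; positivity
    rw [← hone, ← sum_add_distrib, mul_sum]
    refine sum_le_sum fun x _ => ?_
    rw [← sum_cubeDensity T hn x, mul_sum, mul_sum, ← sum_add_distrib]
    refine (sum_le_sum fun σ hσ => hpt x σ (mem_filter.1 hσ).2).trans
      (sum_le_sum_of_subset_of_nonneg (filter_subset _ _) fun σ _ _ => ?_)
    have := dens_nonneg (valDirs T x σ) ⊥
    have hD : 0 ≤ ∑ u : Fin n → F with u ≠ 0, disagreeCount T x σ u :=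
      sum_nonneg fun u _ => disagreeCount_nonneg T x σ u
    positivity
  have hSZ := sum_disagreeCount_le hT X hX
  have hγ : 0 < gam d := by rw [hg]; positivity
  have hD : ∑ x : Fin n → F, ∑ σ : F, ∑ u : Fin n → F with u ≠ 0, disagreeCount T x σ u ≤
      gam d / 4 * K * (4000 * (d : ℝ) ^ 4 / q * q ^ n) := by
    have e : gam d / 4 * K * (4000 * (d : ℝ) ^ 4 / q * q ^ n) = d * q ^ n * K / q := by
      rw [hg]; field_simp; norm_num
    rw [e, le_div_iff₀ hq0, hK]
    refine hSZ.trans_eq (by ring)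
  refine le_of_mul_le_mul_left (a := gam d / 4 * K) ?_ (by positivity)
  calc _ ≤ _ := hsum
    _ ≤ gam d / 4 * K * (ε / 5) * q ^ n + gam d / 4 * K * (4000 * (d : ℝ) ^ 4 / q * q ^ n) := by
        gcongr
    _ = _ := by ring

/-- The bad part of the sample space has relative size at most the mean over `x` of the sums of
`μ² + 2μ/q` over the values `σ` for which `(x, σ)` is not excellent. -/
theorem ncard_bad_le (T : AffineSubspace F (Fin n → F) → (Fin n → F) → F) (hn : 3 ≤ n)
    (R : (Fin n → F) → F → Prop) (X Y : Submodule F (Fin n → F)) (hX : finrank F X = 1)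
    (hY : finrank F Y = 2) :
    ({ω ∈ OmegaD F n | Agrees F n T ω.1.1 ω.1.2 ∧ R ω.2.1 (T ω.1.1 ω.2.1)}.ncard : ℝ) *
        ((Fintype.card F : ℝ) ^ 2 - Fintype.card F) ≤
      #{u : Fin n → F | u ≠ 0} * #{v : Fin n → F | v ∉ X} *
        (cnt (cubeDirs F (Fin n → F)) Y * (cnt (cubeDirs F (Fin n → F)) Y - 1)) *
        ∑ x : Fin n → F, ∑ σ : F with R x σ, (cubeDensity (valDirs T x σ) ⊥ ^ 2 +
          2 * cubeDensity (valDirs T x σ) ⊥ / Fintype.card F) := by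
  have hV : 3 ≤ finrank F (Fin n → F) := by simpa using hn
  set N : ℝ := (cnt (cubeDirs F (Fin n → F)) Y : ℝ) with hN
  have hN1 : (1 : ℝ) ≤ N := by
    rw [hN]
    exact_mod_cast cnt_pos (by omega : finrank F Y ≤ 3) hV
  have hN0 : 0 < N := by linarith
  rw [ncard_omega (fun x C₁ C₂ => Agrees F n T C₁ C₂ ∧ R x (T C₁ x))]
  refine le_of_mul_le_mul_right ?_ hN0
  rw [sum_mul, mul_sum, sum_mul]
  refine sum_le_sum fun x _ => ?_
  have hpm : ∀ σ : F,
      ∑ u : Fin n → F with u ≠ 0, ∑ v : Fin n → F with v ∉ F ∙ u,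
        (cnt (valDirs T x σ) (F ∙ u ⊔ F ∙ v) : ℝ) ^ 2 ≤
      #{u : Fin n → F | u ≠ 0} * #{v : Fin n → F | v ∉ X} * N ^ 2 *
        (cubeDensity (valDirs T x σ) ⊥ ^ 2 +
          2 * cubeDensity (valDirs T x σ) ⊥ / Fintype.card F) := by
    intro σ
    convert plane_moment (valDirs T x σ) (valDirs_subset T x σ) X Y hX hY hV
  calc _ ≤ ∑ u : Fin n → F with u ≠ 0, ∑ v : Fin n → F with v ∉ F ∙ u,
        (N - 1) * ∑ σ : F with R x σ, (cnt (valDirs T x σ) (F ∙ u ⊔ F ∙ v) : ℝ) ^ 2 := by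
        rw [sum_mul]
        refine sum_le_sum fun u hu => ?_
        rw [sum_mul]
        refine sum_le_sum fun v hv => ?_
        simp only [mem_filter, mem_univ, true_and] at hu hv
        have hc : N = cnt (cubeDirs F (Fin n → F)) (F ∙ u ⊔ F ∙ v) := by
          rw [hN, cnt_eq_of_finrank_eq (U := Y) (U' := F ∙ u ⊔ F ∙ v) (by
            rw [hY, Submodule.finrank_sup_span_singleton hv, finrank_span_singleton hu])]
        rw [hc]
        refine le_of_eq_of_le ?_ (card_bad_pairs_le T x (R x) (F ∙ u ⊔ F ∙ v))
        congr!
    _ = (N - 1) * ∑ σ : F with R x σ, ∑ u : Fin n → F with u ≠ 0,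
        ∑ v : Fin n → F with v ∉ F ∙ u, (cnt (valDirs T x σ) (F ∙ u ⊔ F ∙ v) : ℝ) ^ 2 := by
        simp only [← mul_sum]
        congr 1
        rw [sum_comm]
        refine sum_congr rfl fun u _ => ?_
        rw [sum_comm]
    _ ≤ (N - 1) * ∑ σ : F with R x σ,
        #{u : Fin n → F | u ≠ 0} * #{v : Fin n → F | v ∉ X} * N ^ 2 *
          (cubeDensity (valDirs T x σ) ⊥ ^ 2 +
            2 * cubeDensity (valDirs T x σ) ⊥ / Fintype.card F) :=
        mul_le_mul_of_nonneg_left (sum_le_sum fun σ _ => hpm σ) (by linarith)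
    _ = _ := by rw [← mul_sum]; ring

end Counting


/-! ### The probability bound -/

/-- Under the distribution `D` (uniform on `OmegaD`, with
`σ = T(C₁)(x)`, `τ = T(C₂)(y)` determined), the probability that `(C₁, C₂) ∈ S` and `(x, σ)`
is not excellent is at most `ε/4`. -/
theorem pass_nonexcellent {F : Type} [Field F] [Fintype F] {n d : ℕ}
    (hn : 6 ≤ n) (hd : 1 ≤ d)
    (hq : (11 * d : ℝ) < (Fintype.card F : ℝ) ^ ((1 : ℝ) / 9))
    (T : AffineSubspace F (Fin n → F) → (Fin n → F) → F)
    (hT : DegTable F n d T)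
    (hε : 10 ^ 7 * (d : ℝ) ^ 6 / (Fintype.card F : ℝ) ≤ epsT F n T) :
    ({ω ∈ OmegaD F n | Agrees F n T ω.1.1 ω.1.2 ∧
        ¬ Excellent F n T d (epsT F n T) ω.2.1 (T ω.1.1 ω.2.1)}.ncard : ℝ) ≤
      (epsT F n T / 4) * ((OmegaD F n).ncard : ℝ) := by
  classical
  have hn3 : 3 ≤ n := by omega
  have hq2 := two_le_card (F := F)
  have hd1 : (1 : ℝ) ≤ d := by exact_mod_cast hd
  have hdim : ∀ k ≤ 3, ∃ X : Submodule F (Fin n → F), Module.finrank F X = k := by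
    intro k hk
    obtain ⟨f, hf⟩ := exists_linearIndependent_of_le_finrank (R := F) (M := Fin n → F) (n := k)
      (by simpa using hk.trans hn3)
    exact ⟨Submodule.span F (Set.range f), by rw [finrank_span_eq_card hf, Fintype.card_fin]⟩
  obtain ⟨X, hX⟩ := hdim 1 (by norm_num)
  obtain ⟨Y, hY⟩ := hdim 2 (by norm_num)
  have hbad := ncard_bad_le T hn3 (fun x σ => ¬ Excellent F n T d (epsT F n T) x σ) X Y hX hY
  have htot := ncard_omegaD X Y hX hY
  have hsq := sum_sq_density_le hd hn3 hT hε X hX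
  set ε := epsT F n T
  set q : ℝ := (Fintype.card F : ℝ) with hqdef
  have hq0 : 0 < q := by linarith
  -- the terms `2μ/q` sum to at most `2/q` for every point `x`
  have hlin : ∑ x : Fin n → F, ∑ σ : F with ¬ Excellent F n T d ε x σ,
      2 * cubeDensity (valDirs T x σ) ⊥ / q ≤ 2 / q * q ^ n := by
    have hone : ∑ _x : Fin n → F, 2 / q * 1 = 2 / q * q ^ n := by
      rw [Finset.sum_const, nsmul_eq_mul]; simp [hqdef]; ring
    rw [← hone]
    refine Finset.sum_le_sum fun x _ => ?_
    rw [← sum_cubeDensity T hn3 x, Finset.mul_sum]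
    refine (Finset.sum_le_sum_of_subset_of_nonneg (Finset.filter_subset _ _)
      fun σ _ _ => ?_).trans_eq (Finset.sum_congr rfl fun σ _ => by ring)
    have := dens_nonneg (valDirs T x σ) ⊥
    positivity
  -- `4000 d⁴/q + 2/q ≤ 10⁷ d⁶/(20 q) ≤ ε/20`
  have hsmall : 4000 * (d : ℝ) ^ 4 / q + 2 / q ≤ ε / 20 := by
    have h6 : (d : ℝ) ^ 4 ≤ (d : ℝ) ^ 6 := pow_le_pow_right₀ hd1 (by norm_num)
    have h1 : (1 : ℝ) ≤ (d : ℝ) ^ 6 := one_le_pow₀ hd1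
    calc 4000 * (d : ℝ) ^ 4 / q + 2 / q = (4000 * (d : ℝ) ^ 4 + 2) / q := by ring
      _ ≤ (10 ^ 7 * (d : ℝ) ^ 6 / 20) / q := by gcongr; linarith
      _ = (10 ^ 7 * (d : ℝ) ^ 6 / q) / 20 := by ring
      _ ≤ ε / 20 := by gcongr
  have hS : ∑ x : Fin n → F, ∑ σ : F with ¬ Excellent F n T d ε x σ,
      (cubeDensity (valDirs T x σ) ⊥ ^ 2 + 2 * cubeDensity (valDirs T x σ) ⊥ / q) ≤
        ε / 4 * q ^ n := by
    simp only [Finset.sum_add_distrib]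
    have hsq' : ∑ x : Fin n → F, ∑ σ : F with ¬ Excellent F n T d ε x σ,
        cubeDensity (valDirs T x σ) ⊥ ^ 2 ≤ (ε / 5 + 4000 * (d : ℝ) ^ 4 / q) * q ^ n := by
      convert hsq
    have := mul_le_mul_of_nonneg_right hsmall (pow_nonneg hq0.le n)
    linarith
  have hN1 : (1 : ℝ) ≤ cnt (cubeDirs F (Fin n → F)) Y := by
    exact_mod_cast cnt_pos (by omega : Module.finrank F Y ≤ 3) (by simpa using hn3)
  have hqq : 0 < q ^ 2 - q := by nlinarith
  refine le_of_mul_le_mul_right (hbad.trans ?_) hqq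
  rw [mul_assoc (ε / 4), htot]
  refine (mul_le_mul_of_nonneg_left (le_trans (le_of_eq ?_) hS)
    (mul_nonneg (by positivity) (mul_nonneg (by linarith) (by linarith)))).trans_eq (by ring)
  congr!
end
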